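/- There exists an absolute constant B₀ such that the following holds whenever B ≥ B₀, r is a positive rational, and s is an odd positive integer with s ≥ 10(2r+1)B²: if g(x₀) < e^{−(s+1)}, then the number of odd integers i with 3 ≤ i ≤ s and ζ(i) irrational is at least |Ψ_B|. -/

import Mathlib

/-!
Put `S = s + 1`, `r = num / den` and `n = den * N` with `N` even. The auxiliary rational function is
`R(t) = C * (t - r n) * ∏_{θ ∈ zeroSet Psi} ∏_{j < (2r+1)n} (t - r n + j + θ) / ∏_{j ≤ n} (t + j) ^ S`.
It vanishes at every point of `[-n, r n]` whose class modulo `1` is that of some `a / b`, `b ∈ Psi`,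
except at its poles `0, -1, …, -n`.

*Arithmetic.* Let `d = lcm(1, …, n)`. The constant `C` makes the Taylor expansions of `(t + k) ^ S R(t)`
at the poles integral after `X ↦ d X`: the numerator splits into blocks
`x (x + 1) ⋯ (x + N - 1) / N!` at points of `(1/b)ℤ`, whose denominators are cleared by `clearFactor`,
and the denominator contributes geometric series. So the partial fraction coefficients of `R`, multiplied
by suitable powers of `d`, are integers. The symmetry `t ↦ -n - t` kills the even zeta values, and the
zeros of `R` between its poles make the rational part integral, by a `p`-adic argument in which at most
one term of a vanishing sum can have a denominator. Altogether (`arithmetic_forms`), for all `b ∈ Psi`,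
`2 d ^ S ∑_{K ≥ 1} R(K / b) = ∑_{3 ≤ i ≤ s, i odd} ρ i * b ^ i * ζ(i) + integer`,
with integers `ρ i` that do not depend on `b`.

*Elimination.* If fewer than `Psi.card` of the odd zeta values were irrational, there would be integer
weights `w b` with `∑ w b * b ^ i = 0` for each exponent `i` of an irrational value, but
`∑ w b * b ≠ 0` (`exists_weights`, a consequence of Descartes' rule of signs). The weighted combination
of the forms then involves only rational zeta values, so that a fixed multiple of it is an integer.

*Analysis.* The series may be started after the last zero, at `t = r n + τ` with `τ > 0`, where all terms
are positive. At `τ = n x`, the logarithmic derivative of `R` tends to `log f(x)`, which is positive before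
`x₀` and negative after it. So `R` increases up to a window around `x₀ n`, hardly varies between neighbours
inside it and decreases afterwards; consequently the sums of `R` over the translates of `ℕ` are
asymptotically equal (`window_compare`), and the sum over `ℕ / b` is `b` times the sum over `ℕ`, up to
a factor `1 + o(1)`. The weighted combination is therefore nonzero, because `∑ w b * b` is. Its size
is governed by the value at `x₀ n`, which Stirling's formula bounds by `g(x₀) ^ (n (1 + o(1)))`
(`eventually_const_mul_le`). As `d ≤ exp ((1 + ε) n)` for infinitely many admissible `n`
(`exists_lcmUpto_le`), the assumption `g(x₀) < exp (-S)` makes the integer obtained above smaller than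
`1` in absolute value while it is nonzero, a contradiction.
-/

open Finset Filter Real

noncomputable section

/-- The zero set `𝓕_B`: rationals `a/b` with `b ∈ Ψ`, `1 ≤ a ≤ b`, `gcd(a,b)=1`. -/
def zeroSet (Psi : Finset ℕ) : Finset ℚ :=
  Psi.biUnion fun b =>
    ((Finset.Icc 1 b).filter fun a => Nat.Coprime a b).image fun a : ℕ => (a : ℚ) / b

/-- `P_{B,den(r)} = 2·den(r)·LCM{p−1 : p prime, p ∣ b for some b ∈ Ψ}`. -/
def Pconst (Psi : Finset ℕ) (r : ℚ) : ℕ :=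
  2 * r.den * (Psi.biUnion Nat.primeFactors).lcm (fun p => p - 1)

/-- The major arithmetic factor `A₁(B) = ∏_{b ∈ Ψ} b^{(2r+1)φ(b)}`. -/
def A1 (Psi : Finset ℕ) (r : ℚ) : ℝ :=
  ∏ b ∈ Psi, (b : ℝ) ^ ((2 * (r : ℝ) + 1) * (Nat.totient b : ℝ))

/-- The minor arithmetic factor `A₂(B) = ∏_{b ∈ Ψ} ∏_{p ∣ b} p^{(2r+1)φ(b)/(p−1)}`. -/
def A2 (Psi : Finset ℕ) (r : ℚ) : ℝ :=
  ∏ b ∈ Psi, ∏ p ∈ b.primeFactors,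
    (p : ℝ) ^ ((2 * (r : ℝ) + 1) * (Nat.totient b : ℝ) / ((p : ℝ) - 1))

/-- The auxiliary rational function
`R_n(t) = A₁ⁿA₂ⁿ · (n!^{s+1}/((n/den(r))!)^{den(r)(2r+1)|𝓕_B|}) · (t−rn)·
∏_{θ∈𝓕_B}∏_{j=0}^{(2r+1)n−1}(t−rn+j+θ) / ∏_{j=0}^{n}(t+j)^{s+1}`.  Here, assuming
`P_{B,den(r)} ∣ n`, `(2r+1)n = 2·num(r)·(n/den(r)) + n` and `den(r)(2r+1) = 2·num(r)+den(r)`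
are the indicated natural numbers (the divisions are exact). -/
def Rfun (Psi : Finset ℕ) (r : ℚ) (s n : ℕ) (t : ℝ) : ℝ :=
  A1 Psi r ^ n * A2 Psi r ^ n *
    ((n.factorial : ℝ) ^ (s + 1) /
      (((n / r.den).factorial : ℝ)) ^ ((2 * r.num.toNat + r.den) * (zeroSet Psi).card)) *
    ((t - (r : ℝ) * n) *
      ∏ θ ∈ zeroSet Psi, ∏ j ∈ Finset.range (2 * (r.num.toNat * (n / r.den)) + n),
        (t - (r : ℝ) * n + (j : ℝ) + (θ : ℝ))) /
    ∏ j ∈ Finset.range (n + 1), (t + (j : ℝ)) ^ (s + 1)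


/-- `f(X) = ((X+2r+1)/X)^{|𝓕_B|}·((X+r)/(X+r+1))^{s+1}`. -/
def ff (Psi : Finset ℕ) (r : ℚ) (s : ℕ) (X : ℝ) : ℝ :=
  ((X + 2 * (r : ℝ) + 1) / X) ^ ((zeroSet Psi).card) *
    ((X + (r : ℝ)) / (X + (r : ℝ) + 1)) ^ (s + 1)

/-- `g(X) = A₁(B)A₂(B)·den(r)^{(2r+1)|𝓕_B|}·(X+2r+1)^{(2r+1)|𝓕_B|}·
((X+r)^r/(X+r+1)^{r+1})^{s+1}`. -/
def gg (Psi : Finset ℕ) (r : ℚ) (s : ℕ) (X : ℝ) : ℝ :=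
  A1 Psi r * A2 Psi r *
    (r.den : ℝ) ^ ((2 * (r : ℝ) + 1) * ((zeroSet Psi).card : ℝ)) *
    (X + 2 * (r : ℝ) + 1) ^ ((2 * (r : ℝ) + 1) * ((zeroSet Psi).card : ℝ)) *
    ((X + (r : ℝ)) ^ (r : ℝ) / (X + (r : ℝ) + 1) ^ ((r : ℝ) + 1)) ^ (s + 1)

/-- The real value of the Riemann zeta function at a natural number argument. -/
def zetaR (k : ℕ) : ℝ := (riemannZeta k).re

/-! ### Chebyshev: a lower estimate for the growth of the least common multiple -/

lemma sum_log_eq_sum_psi (n : ℕ) :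
    ∑ m ∈ Ioc 0 n, Real.log m = ∑ k ∈ Ioc 0 n, Chebyshev.psi ((n / k : ℕ) : ℝ) := by
  have h := ArithmeticFunction.sum_Ioc_mul_eq_sum_sum
    (ArithmeticFunction.zeta : ArithmeticFunction ℝ) ArithmeticFunction.vonMangoldt n
  rw [ArithmeticFunction.zeta_mul_vonMangoldt] at h
  simp only [ArithmeticFunction.log_apply] at h
  rw [h]
  refine sum_congr rfl fun k hk => ?_
  have : k ≠ 0 := by simp at hk; omega
  simp [Chebyshev.psi, ArithmeticFunction.natCoe_apply, ArithmeticFunction.zeta_apply, this]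

/-- Any lower bound `ψ(k) ≥ (1+ε)k - D` is incompatible with
`∑ ψ(n/k) = log n! ≤ n log n`: as `∑ 1/k ≥ log n`, the left side would be at least
`(1+ε) n log n - O(n)`. -/
lemma not_psi_lower (ε D : ℝ) (hε : 0 < ε)
    (h : ∀ k : ℕ, (1 + ε) * k - D ≤ Chebyshev.psi (k : ℝ)) : False := by
  have key : ∀ n : ℕ, 1 ≤ n → ε * Real.log n ≤ 1 + ε + D := by
    intro n hn
    have hn0 : (0 : ℝ) < n := by exact_mod_cast hn
    have h1 : ∑ m ∈ Ioc 0 n, Real.log m ≤ n * Real.log n := by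
      calc ∑ m ∈ Ioc 0 n, Real.log m ≤ ∑ m ∈ Ioc 0 n, Real.log n := by
            refine sum_le_sum fun m hm => ?_
            simp only [mem_Ioc] at hm
            exact Real.log_le_log (by exact_mod_cast hm.1) (by exact_mod_cast hm.2)
        _ = n * Real.log n := by simp
    have h2 : ∑ k ∈ Ioc 0 n, ((1 + ε) * (n * (k : ℝ)⁻¹) - (1 + ε + D)) ≤
        ∑ k ∈ Ioc 0 n, Chebyshev.psi ((n / k : ℕ) : ℝ) := by
      refine sum_le_sum fun k hk => ?_
      simp only [mem_Ioc] at hk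
      have h3 : (n : ℝ) * (k : ℝ)⁻¹ - 1 ≤ ((n / k : ℕ) : ℝ) := by
        have := Nat.lt_div_mul_add (a := n) (b := k) hk.1
        have hk0 : (0 : ℝ) < k := by exact_mod_cast hk.1
        have h4 : (n : ℝ) ≤ ((n / k : ℕ) : ℝ) * k + k := by exact_mod_cast this.le
        rw [← div_eq_mul_inv, sub_le_iff_le_add, div_le_iff₀ hk0]
        linarith
      have := h (n / k)
      nlinarith
    rw [sum_sub_distrib, ← mul_sum, ← mul_sum, ← sum_log_eq_sum_psi] at h2
    have h5 : Real.log n ≤ ∑ k ∈ Ioc 0 n, (k : ℝ)⁻¹ := by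
      have := log_add_one_le_harmonic n
      have h6 : ((harmonic n : ℚ) : ℝ) = ∑ k ∈ Ioc 0 n, (k : ℝ)⁻¹ := by
        rw [harmonic_eq_sum_Icc]; push_cast; rfl
      rw [← h6]
      refine le_trans (Real.log_le_log hn0 ?_) this
      push_cast; linarith
    have h7 : (1 + ε) * (n * Real.log n) - n * (1 + ε + D) ≤ n * Real.log n := by
      have : (1 + ε) * (n * Real.log n) ≤ (1 + ε) * (n * ∑ k ∈ Ioc 0 n, (k : ℝ)⁻¹) := by gcongr
      simp at h2
      linarith
    have : n * (ε * Real.log n) ≤ n * (1 + ε + D) := by linarith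
    exact le_of_mul_le_mul_left this hn0
  have := (tendsto_natCast_atTop_atTop (R := ℝ))
  have h2 := (Real.tendsto_log_atTop.comp this).const_mul_atTop hε
  obtain ⟨n, hn1, hn2⟩ := ((eventually_ge_atTop 1).and (h2.eventually_gt_atTop (1 + ε + D))).exists
  exact absurd (key n hn1) (not_le.mpr hn2)

/-- Along the multiples of `P` one has `liminf ψ(n)/n ≤ 1`, where `ψ(n) = log lcm(1, …, n)`. Since only
infinitely many `n` are needed in the end, this replaces the prime number theorem. -/
theorem exists_lcmUpto_le (ε : ℝ) (hε : 0 < ε) (P : ℕ) (hP : 0 < P) (m₀ : ℕ) :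
    ∃ m ≥ m₀, (Nat.lcmUpto (P * m) : ℝ) ≤ Real.exp ((1 + ε) * (P * m : ℕ)) := by
  by_contra! hcon
  have h1 : ∀ m ≥ m₀, (1 + ε) * (P * m : ℕ) ≤ Chebyshev.psi ((P * m : ℕ) : ℝ) := by
    intro m hm
    rw [Chebyshev.psi_eq_log_lcmUpto, Real.le_log_iff_exp_le]
    · exact (hcon m hm).le
    · exact_mod_cast Nat.lcmUpto_pos _
  refine not_psi_lower ε ((1 + ε) * (P + P * m₀ : ℕ)) hε fun k => ?_
  by_cases hk : P * m₀ ≤ k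
  · -- compare `k` with the largest multiple of `P` below it
    have h2 : m₀ ≤ k / P := by rw [Nat.le_div_iff_mul_le hP]; linarith
    have h3 := h1 _ h2
    have h4 : Chebyshev.psi ((P * (k / P) : ℕ) : ℝ) ≤ Chebyshev.psi (k : ℝ) :=
      Chebyshev.psi_mono (by exact_mod_cast Nat.mul_div_le k P)
    have h5 : (k : ℝ) ≤ (P * (k / P) : ℕ) + (P + P * m₀ : ℕ) := by
      have := Nat.lt_div_mul_add (a := k) (b := P) hP
      rw [mul_comm] at this
      exact_mod_cast (by omega)
    nlinarith
  · push Not at hk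
    have := Chebyshev.psi_nonneg (k : ℝ)
    have h5 : (k : ℝ) ≤ (P + P * m₀ : ℕ) := by exact_mod_cast (by omega)
    nlinarith

/-! ### Elimination weights -/

lemma signVariations_lt_card_support (P : Polynomial ℚ) (hP : P ≠ 0) :
    P.signVariations + 1 ≤ P.support.card := by
  induction h : P.support.card using Nat.strong_induction_on generalizing P with
  | _ k ih =>
    subst h
    by_cases h0 : P.eraseLead = 0
    · have h1 := P.eraseLead_add_monomial_natDegree_leadingCoeff
      rw [h0, zero_add] at h1
      have h2 : P.signVariations = 0 := by
        rw [← h1]; exact Polynomial.signVariations_monomial _ _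
      have := Polynomial.card_support_eq_zero (p := P).not.mpr hP
      omega
    · have h2 := Polynomial.eraseLead_support_card_lt hP
      have h3 := ih _ h2 _ h0 rfl
      have h4 := P.signVariations_le_eraseLead_succ
      omega

/-- Nonvanishing of generalized Vandermonde determinants, in dual form: on a set `Psi` of positive
integers, `b ↦ b` is not a combination of fewer than `|Psi|` other power functions. The weights `w`
are the values of a linear form separating it from the span of the others. -/
lemma exists_weights (Psi : Finset ℕ) (hpos : ∀ b ∈ Psi, 0 < b) (I : Finset ℕ) (h1 : 1 ∉ I)
    (hcard : I.card < Psi.card) :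
    ∃ w : ℕ → ℤ, (∀ i ∈ I, ∑ b ∈ Psi, w b * (b : ℤ) ^ i = 0) ∧ ∑ b ∈ Psi, w b * (b : ℤ) ≠ 0 := by
  classical
  set v : ℕ → (Psi → ℚ) := fun i b => (b : ℚ) ^ i with hv
  -- otherwise `X - ∑ cᵢ Xⁱ` has at most `|I| + 1` terms, hence at most `|I|` positive roots by
  -- Descartes' rule of signs, whereas it vanishes on `Psi`
  have hnot : v 1 ∉ Submodule.span ℚ (v '' (I : Set ℕ)) := by
    intro hmem
    rw [Submodule.mem_span_image_finset_iff_exists_fun'] at hmem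
    obtain ⟨c, hc⟩ := hmem
    set p : Polynomial ℚ := Polynomial.X - ∑ i ∈ I, Polynomial.C (c i) * Polynomial.X ^ i with hp
    have hp1 : p.coeff 1 = 1 := by
      simp only [hp, Polynomial.coeff_sub, Polynomial.coeff_X_one, Polynomial.finsetSum_coeff,
        Polynomial.coeff_C_mul, Polynomial.coeff_X_pow]
      rw [sum_eq_zero]
      · simp
      · intro i hi
        rw [if_neg, mul_zero]
        rintro rfl; exact h1 hi
    have hp0 : p ≠ 0 := by
      intro h; rw [h] at hp1; simp at hp1
    have hsupp : p.support ⊆ insert 1 I := by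
      intro j hj
      rw [Polynomial.mem_support_iff] at hj
      by_contra hcon
      simp only [mem_insert, not_or] at hcon
      apply hj
      simp only [hp, Polynomial.coeff_sub, Polynomial.finsetSum_coeff,
        Polynomial.coeff_C_mul, Polynomial.coeff_X_pow]
      rw [sum_eq_zero, Polynomial.coeff_X, if_neg (Ne.symm hcon.1), sub_zero]
      intro i hi
      rw [if_neg, mul_zero]
      rintro rfl; exact hcon.2 hi
    have hs1 : p.support.card ≤ I.card + 1 := (card_le_card hsupp).trans (card_insert_le _ _)
    have hs2 := signVariations_lt_card_support p hp0
    have hs3 := p.roots_countP_pos_le_signVariations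
    have hroots : (Psi.image (fun b : ℕ => (b : ℚ))) ⊆
        (p.roots.filter (0 < ·)).toFinset := by
      intro x hx
      simp only [mem_image] at hx
      obtain ⟨b, hb, rfl⟩ := hx
      simp only [Multiset.mem_toFinset, Multiset.mem_filter, Polynomial.mem_roots hp0,
        Polynomial.IsRoot.def]
      refine ⟨?_, by exact_mod_cast hpos b hb⟩
      have := congrFun hc ⟨b, hb⟩
      simp only [hv, Finset.sum_apply, Pi.smul_apply, smul_eq_mul] at this
      simp [hp, Polynomial.eval_finsetSum, this]
    have hc1 := card_le_card hroots
    rw [card_image_of_injective _ Nat.cast_injective] at hc1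
    have hc2 := Multiset.toFinset_card_le (p.roots.filter (0 < ·))
    rw [← Multiset.countP_eq_card_filter] at hc2
    omega
  obtain ⟨f, hf1, hf2⟩ := Submodule.exists_le_ker_of_notMem hnot
  have hfe : ∀ i, f (v i) = ∑ b : Psi, f (Pi.single b 1) * (b : ℚ) ^ i := by
    intro i
    conv_lhs => rw [← Finset.univ_sum_single (v i), map_sum]
    refine sum_congr rfl fun b _ => ?_
    have : (Pi.single b (v i b) : Psi → ℚ) = (v i b) • Pi.single b 1 := by
      rw [← Pi.single_smul]; simp
    rw [this, map_smul, smul_eq_mul, mul_comm]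
  set q : ℕ → ℚ := fun b => if h : b ∈ Psi then f (Pi.single ⟨b, h⟩ 1) else 0 with hq
  have hfq : ∀ i, f (v i) = ∑ b ∈ Psi, q b * (b : ℚ) ^ i := by
    intro i
    rw [hfe, ← sum_coe_sort Psi]
    refine sum_congr rfl fun b _ => ?_
    simp [hq]
  obtain ⟨⟨D, hD0⟩, hD⟩ := IsLocalization.exist_integer_multiples_of_finset (nonZeroDivisors ℤ)
    (Psi.image q)
  have hD' : ∀ b ∈ Psi, ∃ z : ℤ, (z : ℚ) = D * q b := by
    intro b hb
    obtain ⟨z, hz⟩ := hD (q b) (mem_image_of_mem _ hb)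
    exact ⟨z, by simpa using hz⟩
  have hDne : (D : ℚ) ≠ 0 := by
    have := nonZeroDivisors.ne_zero hD0
    exact_mod_cast this
  choose! w hw using hD'
  have hsum : ∀ i, ((∑ b ∈ Psi, w b * (b : ℤ) ^ i : ℤ) : ℚ) = D * f (v i) := by
    intro i
    rw [hfq, mul_sum]; push_cast
    refine sum_congr rfl fun b hb => ?_
    rw [hw b hb, mul_assoc]
  refine ⟨w, fun i hi => ?_, fun h => ?_⟩
  · have : f (v i) = 0 := hf2 (Submodule.subset_span ⟨i, hi, rfl⟩)
    have h2 := hsum i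
    rw [this, mul_zero] at h2
    exact_mod_cast h2
  · have h2 := hsum 1
    simp only [pow_one, h, Int.cast_zero] at h2
    exact (mul_ne_zero hDne hf1) h2.symm

/-! ### Taylor expansions with controlled denominators -/

/-- The subring of power series over `ℚ` whose `m`-th coefficient becomes an integer after
multiplication by `d ^ m`, i.e. the series that become integral under `X ↦ d X`. -/
def taylorInt (d : ℕ) : Subring (PowerSeries ℚ) :=
  ((PowerSeries.map (Int.castRingHom ℚ)).range).comap (PowerSeries.rescale (d : ℚ))

lemma mem_taylorInt {d : ℕ} {f : PowerSeries ℚ} :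
    f ∈ taylorInt d ↔ ∀ m, ∃ z : ℤ, (d : ℚ) ^ m * PowerSeries.coeff m f = z := by
  simp only [taylorInt, Subring.mem_comap, RingHom.mem_range]
  constructor
  · rintro ⟨g, hg⟩ m
    refine ⟨PowerSeries.coeff m g, ?_⟩
    rw [← PowerSeries.coeff_rescale, ← hg]; simp
  · intro h
    choose z hz using h
    refine ⟨PowerSeries.mk z, ?_⟩
    ext m
    rw [PowerSeries.coeff_rescale, hz]; simp

lemma taylorInt_C (d : ℕ) (z : ℤ) : PowerSeries.C (z : ℚ) ∈ taylorInt d := by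
  have : (PowerSeries.C (z : ℚ)) = (z : PowerSeries ℚ) := by simp
  rw [this]; exact intCast_mem _ z

lemma taylorInt_C' (d : ℕ) {q : ℚ} (h : ∃ z : ℤ, q = z) : PowerSeries.C q ∈ taylorInt d := by
  obtain ⟨z, rfl⟩ := h; exact taylorInt_C d z

lemma taylorInt_X (d : ℕ) : (PowerSeries.X : PowerSeries ℚ) ∈ taylorInt d := by
  rw [mem_taylorInt]
  intro m
  rw [PowerSeries.coeff_X]
  split_ifs with h
  · exact ⟨d, by simp [h]⟩
  · exact ⟨0, by simp⟩

lemma taylorInt_X_div (d : ℕ) (c : ℤ) (hc : c ∣ d) :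
    PowerSeries.C ((c : ℚ)⁻¹) * PowerSeries.X ∈ taylorInt d := by
  rw [mem_taylorInt]
  intro m
  rw [PowerSeries.coeff_C_mul, PowerSeries.coeff_X]
  split_ifs with h
  · obtain ⟨e, he⟩ := hc
    by_cases hc0 : c = 0
    · exact ⟨0, by simp [hc0]⟩
    · refine ⟨e, ?_⟩
      have : (d : ℚ) = c * e := by exact_mod_cast he
      have hc0' : (c : ℚ) ≠ 0 := by exact_mod_cast hc0
      rw [h, this]; field_simp
  · exact ⟨0, by simp⟩

/-- The geometric series for `c / (X + c)`. -/
def geomInv (c : ℤ) : PowerSeries ℚ := PowerSeries.mk fun m => (-(c : ℚ)⁻¹) ^ m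

lemma geomInv_mul (c : ℤ) (hc : c ≠ 0) :
    geomInv c * (PowerSeries.X + PowerSeries.C (c : ℚ)) = PowerSeries.C (c : ℚ) := by
  have hc0' : (c : ℚ) ≠ 0 := by exact_mod_cast hc
  ext m
  rw [mul_add, map_add, PowerSeries.coeff_mul_C]
  cases m with
  | zero => simp [geomInv]
  | succ m =>
    rw [PowerSeries.coeff_succ_mul_X, PowerSeries.coeff_C]
    simp [geomInv, pow_succ, hc0']

lemma taylorInt_geomInv (d : ℕ) (c : ℤ) (hc : c ≠ 0) (h : c ∣ d) : geomInv c ∈ taylorInt d := by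
  rw [mem_taylorInt]
  intro m
  obtain ⟨e, he⟩ := h
  refine ⟨(-e) ^ m, ?_⟩
  have : (d : ℚ) = c * e := by exact_mod_cast he
  have hc0' : (c : ℚ) ≠ 0 := by exact_mod_cast hc
  rw [geomInv, PowerSeries.coeff_mk, ← mul_pow, this]
  push_cast; congr 1; field_simp

lemma prod_erase_sub (n k : ℕ) (hk : k ≤ n) :
    ∏ j ∈ (range (n + 1)).erase k, ((j : ℤ) - k) = (-1) ^ k * k.factorial * (n - k).factorial := by
  have h1 : (range (n + 1)).erase k = range k ∪ (range (n - k)).image (fun l => k + 1 + l) := by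
    ext j
    simp only [mem_erase, mem_range, mem_union, mem_image]
    constructor
    · rintro ⟨h1, h2⟩
      rcases lt_or_gt_of_ne h1 with h | h
      · exact Or.inl h
      · exact Or.inr ⟨j - (k + 1), by omega, by omega⟩
    · rintro (h | ⟨l, hl, rfl⟩) <;> omega
  have h2 : Disjoint (range k) ((range (n - k)).image (fun l => k + 1 + l)) := by
    rw [Finset.disjoint_left]
    intro j hj hj2
    simp only [mem_range, mem_image] at hj hj2
    obtain ⟨l, hl, rfl⟩ := hj2
    omega
  rw [h1, prod_union h2, prod_image (by intro a _ b _ h; simpa using h)]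
  congr 1
  · rw [← prod_range_reflect]
    have : ∀ j ∈ range k, (((k - 1 - j : ℕ) : ℤ) - k) = -1 * ((j + 1 : ℕ) : ℤ) := by
      intro j hj
      simp only [mem_range] at hj
      omega
    rw [prod_congr rfl this, prod_mul_distrib, prod_const, card_range, ← Nat.cast_prod,
      prod_range_add_one_eq_factorial]
  · rw [← prod_range_add_one_eq_factorial, Nat.cast_prod]
    refine prod_congr rfl fun l _ => ?_
    push_cast; ring

/-- The function `n! / ((t+0)(t+1)⋯(t+n))`, multiplied by `t + k` and expanded at its pole `-k`, lies in
`taylorInt d` for `d` a common multiple of `1, …, n`: it is a signed binomial coefficient times a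
product of geometric series. -/
lemma exists_taylorInt_inv (n k d : ℕ) (hk : k ≤ n) (hd : ∀ j, 1 ≤ j → j ≤ n → j ∣ d) :
    ∃ f ∈ taylorInt d, f * ∏ j ∈ (range (n + 1)).erase k,
      (PowerSeries.X + PowerSeries.C ((j : ℚ) - k)) = PowerSeries.C (n.factorial : ℚ) := by
  refine ⟨PowerSeries.C (((-1) ^ k * n.choose k : ℤ) : ℚ) *
    ∏ j ∈ (range (n + 1)).erase k, geomInv ((j : ℤ) - k), ?_, ?_⟩
  · refine mul_mem (taylorInt_C _ _) (prod_mem fun j hj => ?_)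
    simp only [mem_erase, mem_range] at hj
    refine taylorInt_geomInv _ _ (by omega) ?_
    rw [← Int.natAbs_dvd, Int.natCast_dvd_natCast]
    exact hd _ (by omega) (by omega)
  · rw [mul_assoc, ← prod_mul_distrib]
    have : ∀ j ∈ (range (n + 1)).erase k, geomInv ((j : ℤ) - k) *
        (PowerSeries.X + PowerSeries.C ((j : ℚ) - k)) = PowerSeries.C ((((j : ℤ) - k : ℤ)) : ℚ) := by
      intro j hj
      simp only [mem_erase, mem_range] at hj
      rw [← geomInv_mul _ (by omega)]; push_cast; rfl
    rw [prod_congr rfl this, ← map_prod, ← map_mul, ← Int.cast_prod, prod_erase_sub n k hk]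
    congr 1
    have := Nat.choose_mul_factorial_mul_factorial hk
    rw [← this]
    push_cast
    have h : ((-1 : ℚ) ^ k) * (-1) ^ k = 1 := by rw [← mul_pow]; simp
    linear_combination ((n.choose k : ℚ) * k.factorial * (n - k).factorial) * h

/-- The divided rising factorial `x (x+1) ⋯ (x+N-1) / N!` of a power series. -/
def risingDiv (N : ℕ) (x : PowerSeries ℚ) : PowerSeries ℚ :=
  PowerSeries.C ((N.factorial : ℚ)⁻¹) * ∏ j ∈ range N, (x + PowerSeries.C (j : ℚ))

lemma risingDiv_succ (N : ℕ) (x : PowerSeries ℚ) :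
    PowerSeries.C ((N : ℚ) + 1) * risingDiv (N + 1) x =
      (x + PowerSeries.C (N : ℚ)) * risingDiv N x := by
  have : PowerSeries.C ((N : ℚ) + 1) * PowerSeries.C (((N + 1).factorial : ℚ)⁻¹) =
      PowerSeries.C ((N.factorial : ℚ)⁻¹) := by
    rw [← map_mul, Nat.factorial_succ]
    congr 1
    have : (N.factorial : ℚ) ≠ 0 := by positivity
    push_cast; field_simp
  simp only [risingDiv]
  rw [prod_range_succ, ← mul_assoc, this]; ring

lemma risingDiv_zero (x : PowerSeries ℚ) : risingDiv 0 x = 1 := by simp [risingDiv]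

/-- The Chu–Vandermonde identity for rising factorials. -/
lemma risingDiv_add (N : ℕ) (x y : PowerSeries ℚ) :
    risingDiv N (x + y) = ∑ p ∈ antidiagonal N, risingDiv p.1 x * risingDiv p.2 y := by
  induction N with
  | zero => simp [risingDiv_zero]
  | succ N ih =>
    have hne : PowerSeries.C ((N : ℚ) + 1) ≠ 0 := by
      rw [Ne, map_eq_zero_iff _ PowerSeries.C_injective]
      positivity
    apply mul_left_cancel₀ hne
    rw [risingDiv_succ, ih, mul_sum, mul_sum]
    have h1 : ∀ p ∈ antidiagonal (N + 1), PowerSeries.C ((N : ℚ) + 1) *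
        (risingDiv p.1 x * risingDiv p.2 y) =
        (PowerSeries.C (p.1 : ℚ) * risingDiv p.1 x) * risingDiv p.2 y +
        risingDiv p.1 x * (PowerSeries.C (p.2 : ℚ) * risingDiv p.2 y) := by
      intro p hp
      rw [HasAntidiagonal.mem_antidiagonal] at hp
      have : (N : ℚ) + 1 = p.1 + p.2 := by exact_mod_cast hp.symm
      rw [this, map_add]; ring
    rw [sum_congr rfl h1, sum_add_distrib, Finset.Nat.sum_antidiagonal_succ,
      Finset.Nat.sum_antidiagonal_succ' (n := N) (f := fun p => risingDiv p.1 x *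
        (PowerSeries.C (p.2 : ℚ) * risingDiv p.2 y))]
    simp only [Nat.cast_zero, map_zero, zero_mul, mul_zero, zero_add, Nat.cast_add,
      Nat.cast_one, risingDiv_succ]
    rw [← sum_add_distrib]
    refine sum_congr rfl fun p hp => ?_
    rw [HasAntidiagonal.mem_antidiagonal] at hp
    have : (N : ℚ) = p.1 + p.2 := by exact_mod_cast hp.symm
    rw [this, map_add]; ring

/-- For `i > 0` this is `X (X+1) ⋯ (X+i-1) / i! = (X / i) ∏_{0 < j < i} (1 + X / j)`. -/
lemma taylorInt_risingDiv_X (i d : ℕ) (hd : ∀ j, 1 ≤ j → j ≤ i → j ∣ d) :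
    risingDiv i PowerSeries.X ∈ taylorInt d := by
  induction i with
  | zero => rw [risingDiv_zero]; exact one_mem _
  | succ i ih =>
    have hprod : ∀ m, m ≤ i → PowerSeries.C ((m.factorial : ℚ)⁻¹) * ∏ j ∈ range m,
        ((PowerSeries.X : PowerSeries ℚ) + PowerSeries.C ((j + 1 : ℕ) : ℚ)) ∈ taylorInt d := by
      intro m hm
      induction m with
      | zero => simp
      | succ m ihm =>
        have h2 : PowerSeries.C (((m + 1).factorial : ℚ)⁻¹) * ∏ j ∈ range (m + 1),
          ((PowerSeries.X : PowerSeries ℚ) + PowerSeries.C ((j + 1 : ℕ) : ℚ)) =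
          (PowerSeries.C ((m.factorial : ℚ)⁻¹) * ∏ j ∈ range m,
          ((PowerSeries.X : PowerSeries ℚ) + PowerSeries.C ((j + 1 : ℕ) : ℚ))) *
          (PowerSeries.C (((m + 1 : ℕ) : ℤ) : ℚ)⁻¹ * PowerSeries.X + 1) := by
          have h3 : PowerSeries.C (((m + 1).factorial : ℚ)⁻¹) =
              PowerSeries.C ((m.factorial : ℚ)⁻¹) * PowerSeries.C (((m + 1 : ℕ) : ℤ) : ℚ)⁻¹ := by
            rw [← map_mul, Nat.factorial_succ]; push_cast; rw [mul_inv, mul_comm]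
          have h4 : PowerSeries.C (((m + 1 : ℕ) : ℤ) : ℚ)⁻¹ * PowerSeries.C ((m + 1 : ℕ) : ℚ) =
              1 := by
            rw [← map_mul, Int.cast_natCast, inv_mul_cancel₀ (by positivity), map_one]
          rw [prod_range_succ, h3, ← h4]; ring
        rw [h2]
        refine mul_mem (ihm (by omega)) (add_mem (taylorInt_X_div _ _ ?_) (one_mem _))
        exact_mod_cast hd (m + 1) (by omega) (by omega)
    have h5 : risingDiv (i + 1) PowerSeries.X =
        (PowerSeries.C ((i.factorial : ℚ)⁻¹) * ∏ j ∈ range i,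
        ((PowerSeries.X : PowerSeries ℚ) + PowerSeries.C ((j + 1 : ℕ) : ℚ))) *
        (PowerSeries.C (((i + 1 : ℕ) : ℤ) : ℚ)⁻¹ * PowerSeries.X) := by
      have h3 : PowerSeries.C (((i + 1).factorial : ℚ)⁻¹) =
          PowerSeries.C ((i.factorial : ℚ)⁻¹) * PowerSeries.C (((i + 1 : ℕ) : ℤ) : ℚ)⁻¹ := by
        rw [← map_mul, Nat.factorial_succ]; push_cast; rw [mul_inv, mul_comm]
      rw [risingDiv, prod_range_succ', h3]
      simp only [Nat.cast_zero, map_zero, add_zero]; ring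
    rw [h5]
    refine mul_mem (hprod i le_rfl) (taylorInt_X_div _ _ ?_)
    exact_mod_cast hd (i + 1) (by omega) (by omega)

/-- The arithmetic factor `b^N ∏_{p ∣ b} p^{N/(p-1)}` clearing the denominators of
`x (x+1) ⋯ (x+j-1) / j!` for `j ≤ N` and `x ∈ (1/b)ℤ`. -/
def clearFactor (b N : ℕ) : ℕ := b ^ N * ∏ p ∈ b.primeFactors, p ^ (N / (p - 1))

/-- Primes dividing `b` are handled by Legendre's formula; modulo the part of `j!` prime to `b`, the
product is, up to a unit, a product of `j` consecutive integers. -/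
lemma factorial_dvd_clear (b N j : ℕ) (hb0 : b ≠ 0) (hj : j ≤ N) (x : ℤ) :
    (j.factorial : ℤ) ∣ (∏ p ∈ b.primeFactors, p ^ (N / (p - 1)) : ℕ) *
      ∏ l ∈ range j, (x + b * l) := by
  -- `j! = u v` with `u` composed of the primes dividing `b` and `v` prime to `b`
  set u : ℕ := ∏ p ∈ b.primeFactors, p ^ (j.factorial.factorization p) with hu
  have hprime : ∀ p ∈ b.primeFactors, p.Prime := fun p hp => Nat.prime_of_mem_primeFactors hp
  have hudvd : u ∣ j.factorial := by
    refine Finset.prod_dvd_of_isRelPrime (fun p hp q hq hpq => ?_) fun p _ => Nat.ordProj_dvd _ _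
    rw [Function.onFun, ← Nat.coprime_iff_isRelPrime]
    exact Nat.Coprime.pow _ _ ((Nat.coprime_primes (hprime p hp) (hprime q hq)).mpr hpq)
  obtain ⟨v, hv⟩ := hudvd
  have hcop : Nat.Coprime b v := by
    rw [Nat.coprime_iff_isRelPrime]
    by_contra hcon
    rw [← Nat.coprime_iff_isRelPrime, Nat.Prime.not_coprime_iff_dvd] at hcon
    obtain ⟨p, hp, hpb, hpv⟩ := hcon
    have hpm : p ∈ b.primeFactors := Nat.mem_primeFactors.mpr ⟨hp, hpb, hb0⟩
    have h1 : p ^ (j.factorial.factorization p) ∣ u := dvd_prod_of_mem _ hpm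
    have h2 := mul_dvd_mul h1 hpv
    rw [← hv, ← pow_succ] at h2
    exact Nat.pow_succ_factorization_not_dvd (Nat.factorial_ne_zero j) hp h2
  have hu1 : u ∣ ∏ p ∈ b.primeFactors, p ^ (N / (p - 1)) := by
    refine prod_dvd_prod_of_dvd _ _ fun p hp => pow_dvd_pow _ ?_
    have hpp := hprime p hp
    rw [Nat.factorization_def _ hpp, Nat.le_div_iff_mul_le (by have := hpp.two_le; omega)]
    have := Fact.mk hpp
    have := sub_one_mul_padicValNat_factorial (p := p) j
    rw [mul_comm, this]; omega
  have hv1 : (v : ℤ) ∣ ∏ l ∈ range j, (x + b * l) := by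
    have hv0 : v ≠ 0 := by
      rintro rfl; exact Nat.factorial_ne_zero j (by simpa using hv)
    obtain ⟨y, hy⟩ := Int.mod_coprime hcop
    obtain ⟨y', hy'⟩ : ∃ y' : ℕ, (y' : ℤ) ≡ y * x [ZMOD v] := by
      refine ⟨((y * x) % v).toNat, ?_⟩
      rw [Int.toNat_of_nonneg (Int.emod_nonneg _ (by exact_mod_cast hv0))]
      exact Int.mod_modEq _ _
    have hbx : (b : ℤ) * y' ≡ x [ZMOD v] := by
      calc (b : ℤ) * y' ≡ b * (y * x) [ZMOD v] := hy'.mul_left _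
        _ = (b * y) * x := by ring
        _ ≡ 1 * x [ZMOD v] := hy.mul_right _
        _ = x := one_mul x
    have h1 : ∏ l ∈ range j, ((b : ℤ) * y' + b * l) ≡ ∏ l ∈ range j, (x + b * l) [ZMOD v] :=
      Int.ModEq.prod fun l _ => hbx.add_right _
    rw [← h1.dvd_iff]
    have h2 : ∏ l ∈ range j, ((b : ℤ) * y' + b * l) = b ^ j * (y'.ascFactorial j : ℤ) := by
      rw [Nat.ascFactorial_eq_prod_range, Nat.cast_prod]
      simp_rw [← mul_add]
      rw [prod_mul_distrib, prod_const, card_range]; push_cast; rfl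
    rw [h2]
    refine Dvd.dvd.mul_left ?_ _
    have h3 : v ∣ j.factorial := ⟨u, by rw [hv, mul_comm]⟩
    exact_mod_cast h3.trans (Nat.factorial_dvd_ascFactorial _ _)
  rw [hv, Nat.cast_mul]
  exact mul_dvd_mul (by exact_mod_cast hu1) hv1

lemma clearFactor_mul (b N j : ℕ) (hb0 : b ≠ 0) (hj : j ≤ N) (x : ℤ) :
    ∃ z : ℤ, (clearFactor b N : ℚ) * ((j.factorial : ℚ)⁻¹ *
      ∏ l ∈ range j, ((x : ℚ) / b + l)) = z := by
  obtain ⟨z, hz⟩ := factorial_dvd_clear b N j hb0 hj x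
  refine ⟨b ^ (N - j) * z, ?_⟩
  have hb : (b : ℚ) ≠ 0 := by exact_mod_cast hb0
  have hf : (j.factorial : ℚ) ≠ 0 := by positivity
  have h1 : ∏ l ∈ range j, ((x : ℚ) + b * l) = b ^ j * ∏ l ∈ range j, ((x : ℚ) / b + l) := by
    rw [← card_range j, ← prod_const, card_range, ← prod_mul_distrib]
    refine prod_congr rfl fun l _ => ?_
    field_simp
  have h2 : ((∏ p ∈ b.primeFactors, p ^ (N / (p - 1)) : ℕ) : ℚ) *
      ∏ l ∈ range j, ((x : ℚ) + b * l) = j.factorial * z := by exact_mod_cast hz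
  rw [h1] at h2
  have h3 : (b : ℚ) ^ N = b ^ (N - j) * b ^ j := by rw [← pow_add]; congr 1; omega
  rw [clearFactor, Nat.cast_mul, Nat.cast_pow, h3]
  push_cast at h2 ⊢
  generalize ∏ l ∈ range j, ((x : ℚ) / b + l) = A at h2 ⊢
  generalize ∏ p ∈ b.primeFactors, ((p : ℚ) ^ (N / (p - 1))) = B at h2 ⊢
  rw [show (b : ℚ) ^ (N - j) * b ^ j * B * ((j.factorial : ℚ)⁻¹ * A) =
    b ^ (N - j) * (B * (b ^ j * A)) * (j.factorial : ℚ)⁻¹ by ring, h2]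
  field_simp

/-- The building blocks of the numerator, expanded at a point of `(1/b)ℤ`. The Chu–Vandermonde identity
separates the variable `X` from the point `x / b`. -/
lemma taylorInt_block (b N d : ℕ) (hb0 : b ≠ 0) (hd : ∀ j, 1 ≤ j → j ≤ N → j ∣ d) (x : ℤ) :
    PowerSeries.C (clearFactor b N : ℚ) *
      risingDiv N (PowerSeries.X + PowerSeries.C ((x : ℚ) / b)) ∈ taylorInt d := by
  rw [risingDiv_add, mul_sum]
  refine sum_mem fun p hp => ?_
  rw [HasAntidiagonal.mem_antidiagonal] at hp
  rw [mul_left_comm]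
  refine mul_mem (taylorInt_risingDiv_X _ _ fun j h1 h2 => hd j h1 (by omega)) ?_
  have : risingDiv p.2 (PowerSeries.C ((x : ℚ) / b)) = PowerSeries.C ((p.2.factorial : ℚ)⁻¹ *
      ∏ l ∈ range p.2, ((x : ℚ) / b + l)) := by
    simp [risingDiv, map_prod]
  rw [this, ← map_mul]
  exact taylorInt_C' _ (clearFactor_mul b N p.2 hb0 (by omega) x)

/-! ### Partial fractions with integral coefficients -/

/-- Partial fractions with integrality: if at each pole `-k` the function
`Q(t) / ∏ (t+j)^S`, stripped of its pole, has an expansion in `taylorInt d`, then the coefficients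
of its partial fraction decomposition have denominators dividing powers of `d`. The coefficients are
read off from these expansions: the difference of the two sides is then divisible by every
`(X + k) ^ S`, and its degree is too small for that unless it vanishes. -/
theorem exists_partialFractions (n S d : ℕ) (Q : Polynomial ℚ) (hdeg : Q.natDegree < (n + 1) * S)
    (hint : ∀ k ≤ n, ∃ f ∈ taylorInt d,
      f * (∏ j ∈ (range (n + 1)).erase k, (PowerSeries.X + PowerSeries.C ((j : ℚ) - k))) ^ S =
      ((Q.comp (Polynomial.X - Polynomial.C (k : ℚ)) : Polynomial ℚ) : PowerSeries ℚ)) :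
    ∃ a : ℕ → ℕ → ℚ, (∀ i k, i ≤ S → k ≤ n → ∃ z : ℤ, (d : ℚ) ^ (S - i) * a i k = z) ∧
      Q = ∑ k ∈ range (n + 1), (∑ i ∈ Icc 1 S, Polynomial.C (a i k) *
        (Polynomial.X + Polynomial.C (k : ℚ)) ^ (S - i)) *
        (∏ j ∈ (range (n + 1)).erase k, (Polynomial.X + Polynomial.C (j : ℚ))) ^ S := by
  have hS : 0 < S := by
    rcases Nat.eq_zero_or_pos S with h | h
    · simp [h] at hdeg
    · exact h
  choose! f hf hfe using hint
  refine ⟨fun i k => PowerSeries.coeff (S - i) (f k), fun i k _ hk =>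
    mem_taylorInt.mp (hf k hk) _, ?_⟩
  set T : ℕ → Polynomial ℚ := fun k => (∑ i ∈ Icc 1 S, Polynomial.C (PowerSeries.coeff (S - i) (f k)) *
        (Polynomial.X + Polynomial.C (k : ℚ)) ^ (S - i)) *
        (∏ j ∈ (range (n + 1)).erase k, (Polynomial.X + Polynomial.C (j : ℚ))) ^ S with hT
  rw [← sub_eq_zero]
  set P := Q - ∑ k ∈ range (n + 1), T k with hP
  -- modulo `(X + k) ^ S` only the summand `T k` matters, and it is the truncation of `f k` there
  have hdvd : ∀ k ∈ range (n + 1), (Polynomial.X + Polynomial.C (k : ℚ)) ^ S ∣ P := by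
    intro k hk
    have hk' : k ≤ n := by simp at hk; omega
    have hcompT : ∀ l ∈ (range (n + 1)).erase k, (Polynomial.X + Polynomial.C (k : ℚ)) ^ S ∣ T l := by
      intro l hl
      simp only [mem_erase] at hl
      refine Dvd.dvd.mul_left (pow_dvd_pow_of_dvd (dvd_prod_of_mem _ ?_) _) _
      simp only [mem_erase]
      exact ⟨Ne.symm hl.1, hk⟩
    have hmain : (Polynomial.X + Polynomial.C (k : ℚ)) ^ S ∣ Q - T k := by
      have h1 : (Polynomial.X : Polynomial ℚ) ^ S ∣
          (Q - T k).comp (Polynomial.X - Polynomial.C (k : ℚ)) := by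
        rw [Polynomial.X_pow_dvd_iff]
        have h2 : (((Q - T k).comp (Polynomial.X - Polynomial.C (k : ℚ)) : Polynomial ℚ) :
            PowerSeries ℚ) = (f k - ∑ i ∈ Icc 1 S, PowerSeries.C (PowerSeries.coeff (S - i) (f k)) *
              PowerSeries.X ^ (S - i)) *
            (∏ j ∈ (range (n + 1)).erase k,
              (PowerSeries.X + PowerSeries.C ((j : ℚ) - k))) ^ S := by
          rw [Polynomial.sub_comp, Polynomial.coe_sub, ← hfe k hk', sub_mul]
          congr 1
          have e1 : (T k).comp (Polynomial.X - Polynomial.C (k : ℚ)) =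
            (∑ i ∈ Icc 1 S, Polynomial.C (PowerSeries.coeff (S - i) (f k)) *
              Polynomial.X ^ (S - i)) * (∏ j ∈ (range (n + 1)).erase k,
                (Polynomial.X + Polynomial.C ((j : ℚ) - k))) ^ S := by
            simp only [hT, Polynomial.mul_comp, Polynomial.sum_comp, Polynomial.pow_comp,
              Polynomial.prod_comp, Polynomial.add_comp, Polynomial.X_comp, Polynomial.C_comp]
            congr 1
            · refine sum_congr rfl fun i _ => ?_
              congr 2; ring
            · congr 1
              refine prod_congr rfl fun j _ => ?_
              rw [map_sub]; ring
          rw [e1]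
          have e2 : ∀ p : Polynomial ℚ, (p : PowerSeries ℚ) =
            Polynomial.coeToPowerSeries.ringHom p := fun p => by simp
          simp only [e2, map_mul, map_sum, map_pow, map_prod, map_add]
          simp only [Polynomial.coeToPowerSeries.ringHom_apply, Polynomial.coe_X, Polynomial.coe_C]
        have h3 : (PowerSeries.X : PowerSeries ℚ) ^ S ∣ (f k - ∑ i ∈ Icc 1 S,
            PowerSeries.C (PowerSeries.coeff (S - i) (f k)) * PowerSeries.X ^ (S - i)) := by
          rw [PowerSeries.X_pow_dvd_iff]
          intro m hm
          rw [map_sub, map_sum, sum_eq_single (S - m)]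
          · rw [show S - (S - m) = m by omega]
            simp
          · intro i hi hne
            simp only [mem_Icc] at hi
            rw [PowerSeries.coeff_C_mul, PowerSeries.coeff_X_pow, if_neg (by omega), mul_zero]
          · intro h
            exact absurd (by simp only [mem_Icc]; omega) h
        intro m hm
        have h4 := PowerSeries.X_pow_dvd_iff.mp (h2 ▸ Dvd.dvd.mul_right h3 _) m hm
        rwa [Polynomial.coeff_coe] at h4
      obtain ⟨W, hW⟩ := h1
      refine ⟨W.comp (Polynomial.X + Polynomial.C (k : ℚ)), ?_⟩
      have := congrArg (fun p => Polynomial.comp p (Polynomial.X + Polynomial.C (k : ℚ))) hW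
      simpa [Polynomial.comp_assoc] using this
    have h5 : P = (Q - T k) - ∑ l ∈ (range (n + 1)).erase k, T l := by
      rw [hP, ← add_sum_erase _ _ hk]; ring
    rw [h5]
    exact dvd_sub hmain (dvd_sum hcompT)
  have hprod : (∏ k ∈ range (n + 1), (Polynomial.X + Polynomial.C (k : ℚ)) ^ S) ∣ P := by
    refine Finset.prod_dvd_of_coprime (fun i _ j _ hij => ?_) hdvd
    refine IsCoprime.pow ?_
    have := Polynomial.isCoprime_X_sub_C_of_isUnit_sub (R := ℚ) (a := -(i : ℚ)) (b := -(j : ℚ))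
      (by rw [isUnit_iff_ne_zero]; intro h; apply hij; have : (i : ℚ) = j := by linarith
          exact_mod_cast this)
    simpa using this
  have hmon : ∀ j : ℕ, (Polynomial.X + Polynomial.C (j : ℚ)).Monic := fun j => Polynomial.monic_X_add_C _
  have hdegprod : (∏ k ∈ range (n + 1), (Polynomial.X + Polynomial.C (k : ℚ)) ^ S).natDegree =
      (n + 1) * S := by
    rw [Polynomial.natDegree_prod_of_monic _ _ fun j _ => (hmon j).pow _]
    simp only [(hmon _).natDegree_pow, Polynomial.natDegree_X_add_C, mul_one, sum_const,
      card_range, smul_eq_mul]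
  refine Polynomial.eq_zero_of_dvd_of_natDegree_lt hprod ?_
  rw [hdegprod]
  refine lt_of_le_of_lt (Polynomial.natDegree_sub_le _ _) (max_lt hdeg ?_)
  refine lt_of_le_of_lt (Polynomial.natDegree_sum_le_of_forall_le (n := (n + 1) * S - 1) _ _ ?_)
    (by have : 0 < (n + 1) * S := by positivity
        omega)
  intro k hk
  refine (Polynomial.natDegree_mul_le).trans ?_
  have d1 : (∑ i ∈ Icc 1 S, Polynomial.C (PowerSeries.coeff (S - i) (f k)) *
        (Polynomial.X + Polynomial.C (k : ℚ)) ^ (S - i)).natDegree ≤ S - 1 := by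
    refine Polynomial.natDegree_sum_le_of_forall_le _ _ fun i hi => ?_
    simp only [mem_Icc] at hi
    refine (Polynomial.natDegree_C_mul_le _ _).trans ?_
    rw [(hmon k).natDegree_pow, Polynomial.natDegree_X_add_C]; omega
  have d2 : ((∏ j ∈ (range (n + 1)).erase k,
      (Polynomial.X + Polynomial.C (j : ℚ))) ^ S).natDegree ≤ n * S := by
    rw [(Polynomial.monic_prod_of_monic _ _ fun j _ => hmon j).natDegree_pow,
      Polynomial.natDegree_prod_of_monic _ _ fun j _ => hmon j]
    simp only [Polynomial.natDegree_X_add_C, sum_const, card_erase_of_mem hk, card_range,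
      smul_eq_mul, mul_one, Nat.add_sub_cancel]
    rw [mul_comm]
  have : (n + 1) * S = n * S + S := by ring
  omega

/-! ### Integrality of the rational parts -/

/-- The ring of rational numbers whose denominator is prime to the prime `p`. -/
def pIntegral (p : ℕ) (hp : p.Prime) : Subring ℚ where
  carrier := {q | ¬ p ∣ q.den}
  mul_mem' {a b} ha hb h := by
    rcases hp.dvd_mul.mp (h.trans (Rat.mul_den_dvd a b)) with h | h
    exacts [ha h, hb h]
  one_mem' := by simpa using hp.one_lt.ne'
  add_mem' {a b} ha hb h := by
    rcases hp.dvd_mul.mp (h.trans (Rat.add_den_dvd a b)) with h | h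
    exacts [ha h, hb h]
  zero_mem' := by simpa using hp.one_lt.ne'
  neg_mem' {a} ha := by simpa using ha

lemma exists_int_of_pIntegral (q : ℚ) (h : ∀ p (hp : p.Prime), q ∈ pIntegral p hp) :
    ∃ z : ℤ, q = z := by
  refine ⟨q.num, ?_⟩
  have : q.den = 1 := by
    by_contra hne
    obtain ⟨p, hp, hd⟩ := Nat.exists_prime_and_dvd hne
    exact h p hp hd
  exact (Rat.coe_int_num_of_den_eq_one this).symm

lemma div_mem_pIntegral (p : ℕ) (hp : p.Prime) (e : ℕ) (x y : ℤ) (hy : ¬ (p : ℤ) ^ (e + 1) ∣ y)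
    (hx : (p : ℤ) ^ e ∣ x) : (x : ℚ) / y ∈ pIntegral p hp := by
  have hy0 : y ≠ 0 := by rintro rfl; exact hy (dvd_zero _)
  have hpp : Prime (p : ℤ) := Nat.prime_iff_prime_int.mp hp
  have hfin : FiniteMultiplicity (p : ℤ) y :=
    Int.finiteMultiplicity_iff.mpr ⟨by simpa using hp.one_lt.ne', hy0⟩
  obtain ⟨u, hu, hpu⟩ := hfin.exists_eq_pow_mul_and_not_dvd
  set f := multiplicity (p : ℤ) y
  obtain ⟨x', rfl⟩ := hx
  have hfe : f ≤ e := by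
    by_contra hlt
    push Not at hlt
    exact hy (hu ▸ Dvd.dvd.mul_right (pow_dvd_pow _ hlt) _)
  have hp0 : (p : ℚ) ≠ 0 := by exact_mod_cast hp.ne_zero
  have hu0 : (u : ℚ) ≠ 0 := by
    have : u ≠ 0 := by rintro rfl; simp at hpu
    exact_mod_cast this
  have : (((p : ℤ) ^ e * x' : ℤ) : ℚ) / y = ((p : ℤ) ^ (e - f) * x' : ℤ) / (u : ℤ) := by
    rw [hu]
    push_cast
    rw [show e = (e - f) + f by omega, pow_add, Nat.add_sub_cancel]
    field_simp
  rw [this]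
  intro h
  apply hpu
  rw [← Rat.divInt_eq_div] at h
  exact (Int.natCast_dvd_natCast.mpr h).trans (Rat.den_dvd _ _)

/-- If `d` is a common multiple of `1, …, n`, then among the values `b k - y`, `k ≤ n`, with `b` and `y`
coprime, at most one is divisible by a higher power of `p` than `d` is. -/
lemma at_most_one_bad (n d : ℕ) (hd0 : d ≠ 0) (hd : ∀ j, 1 ≤ j → j ≤ n → j ∣ d)
    (p : ℕ) (hp : p.Prime) (b y : ℤ) (hby : IsCoprime b y) (k₁ k₂ : ℕ) (h₁ : k₁ ≤ n) (h₂ : k₂ ≤ n)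
    (b₁ : (p : ℤ) ^ (d.factorization p + 1) ∣ b * k₁ - y)
    (b₂ : (p : ℤ) ^ (d.factorization p + 1) ∣ b * k₂ - y) : k₁ = k₂ := by
  by_contra hne
  have hpp : Prime (p : ℤ) := Nat.prime_iff_prime_int.mp hp
  have hpb : ¬ (p : ℤ) ∣ b := by
    intro h
    have h1 : (p : ℤ) ∣ b * k₁ - y := (dvd_pow_self _ (by omega)).trans b₁
    have h2 : (p : ℤ) ∣ y := by
      have := dvd_sub (Dvd.dvd.mul_right h (k₁ : ℤ)) h1
      simpa using this
    exact hpp.not_isUnit (hby.isUnit_of_dvd' h h2)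
  have h3 : (p : ℤ) ^ (d.factorization p + 1) ∣ b * ((k₁ : ℤ) - k₂) := by
    have := dvd_sub b₁ b₂
    rwa [show b * k₁ - y - (b * k₂ - y) = b * ((k₁ : ℤ) - k₂) by ring] at this
  have h4 : (p : ℤ) ^ (d.factorization p + 1) ∣ (k₁ : ℤ) - k₂ := by
    refine IsCoprime.dvd_of_dvd_mul_left (IsCoprime.pow_left ?_) h3
    exact (Prime.coprime_iff_not_dvd hpp).mpr hpb
  have h5 : p ^ (d.factorization p + 1) ≤ n := by
    have := Int.le_of_dvd (abs_pos.mpr (sub_ne_zero.mpr (by exact_mod_cast hne)))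
      ((dvd_abs _ _).mpr h4)
    have h6 : |(k₁ : ℤ) - k₂| ≤ n := by rw [abs_le]; constructor <;> omega
    exact_mod_cast this.trans h6
  have h7 := hd _ (Nat.one_le_pow _ _ hp.pos) h5
  rw [hp.pow_dvd_iff_le_factorization hd0] at h7
  omega

/-- A vanishing integral combination of the powers of `d * b / (b * k - y)`, `k ≤ n`, has integral
truncations. For each prime `p` at most one `k` gives a term that is not `p`-integral; if it occurs in
the truncation, the truncation equals minus the complementary sum, whose terms are `p`-integral. If
`b ∣ y`, then `k - y / b` divides `d` for all `k` in the truncation, and the terms are integers. -/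
lemma truncation_integral (n S d : ℕ) (hd0 : d ≠ 0) (hd : ∀ j, 1 ≤ j → j ≤ n → j ∣ d)
    (α : ℕ → ℕ → ℤ) (b y : ℕ) (hb : 0 < b)
    (h0 : ¬ b ∣ y → ∑ k ∈ range (n + 1), ∑ i ∈ Icc 1 S,
      (α i k : ℚ) * ((d : ℚ) * b / (b * k - y)) ^ i = 0) :
    ∃ z : ℤ, ∑ k ∈ (range (n + 1)).filter (fun k => y < b * k), ∑ i ∈ Icc 1 S,
      (α i k : ℚ) * ((d : ℚ) * b / (b * k - y)) ^ i = z := by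
  by_cases hby : b ∣ y
  · obtain ⟨y, rfl⟩ := hby
    refine ⟨∑ k ∈ (range (n + 1)).filter (fun k => b * y < b * k), ∑ i ∈ Icc 1 S,
      α i k * ((d / (k - y) : ℕ) : ℤ) ^ i, ?_⟩
    simp only [Int.cast_sum, Int.cast_mul, Int.cast_pow, Int.cast_natCast]
    refine sum_congr rfl fun k hk => sum_congr rfl fun i _ => ?_
    simp only [mem_filter, mem_range] at hk
    have hk2 : y < k := lt_of_mul_lt_mul_left hk.2 (Nat.zero_le _)
    rw [Nat.cast_div (hd _ (by omega) (by omega)) (by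
      have : 0 < k - y := by omega
      exact_mod_cast this.ne'), Nat.cast_sub hk2.le]
    have hb' : (b : ℚ) ≠ 0 := by exact_mod_cast hb.ne'
    have hky : (k : ℚ) - y ≠ 0 := sub_ne_zero.mpr (by exact_mod_cast hk2.ne')
    congr 2
    rw [show (b : ℚ) * k - (b * y : ℕ) = b * (k - y) by push_cast; ring]
    field_simp
  · specialize h0 hby
    refine exists_int_of_pIntegral _ fun p hp => ?_
    obtain ⟨c, b', y', hc, hcop, hb', hy'⟩ : ∃ c b' y' : ℕ, 0 < c ∧ Nat.Coprime b' y' ∧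
        b = b' * c ∧ y = y' * c := by
      obtain ⟨b', y', h, h1, h2⟩ := Nat.exists_coprime b y
      exact ⟨_, b', y', Nat.gcd_pos_of_pos_left _ hb, h, h1, h2⟩
    have hterm : ∀ k ≤ n, ¬ (p : ℤ) ^ (d.factorization p + 1) ∣ (b' : ℤ) * k - y' →
        ∑ i ∈ Icc 1 S, (α i k : ℚ) * ((d : ℚ) * b / (b * k - y)) ^ i ∈ pIntegral p hp := by
      intro k hk hnd
      refine sum_mem fun i _ => mul_mem (intCast_mem _ _) (pow_mem ?_ _)
      have := div_mem_pIntegral p hp (d.factorization p) (d * b') ((b' : ℤ) * k - y') hnd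
        (Dvd.dvd.mul_right (by exact_mod_cast Nat.ordProj_dvd d p) _)
      convert this using 1
      have hc' : (c : ℚ) ≠ 0 := by exact_mod_cast hc.ne'
      rw [hb', hy']
      push_cast
      rw [show (b' : ℚ) * c * k - y' * c = c * (b' * k - y') by ring,
        show (d : ℚ) * (b' * c) = c * (d * b') by ring, mul_div_mul_left _ _ hc']
    by_cases hbad : ∃ k₀ ≤ n, y < b * k₀ ∧
        (p : ℤ) ^ (d.factorization p + 1) ∣ (b' : ℤ) * k₀ - y'
    · obtain ⟨k₀, hk₀, hyk, hdv⟩ := hbad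
      have : ∑ k ∈ (range (n + 1)).filter (fun k => y < b * k), ∑ i ∈ Icc 1 S,
          (α i k : ℚ) * ((d : ℚ) * b / (b * k - y)) ^ i =
          - ∑ k ∈ (range (n + 1)).filter (fun k => ¬ y < b * k), ∑ i ∈ Icc 1 S,
          (α i k : ℚ) * ((d : ℚ) * b / (b * k - y)) ^ i := by
        rw [eq_neg_iff_add_eq_zero, sum_filter_add_sum_filter_not, h0]
      rw [this]
      refine neg_mem (sum_mem fun k hk => ?_)
      simp only [mem_filter, mem_range] at hk
      refine hterm k (by omega) fun h => hk.2 ?_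
      rw [at_most_one_bad n d hd0 hd p hp b' y' (Nat.isCoprime_iff_coprime.mpr hcop) k k₀
        (by omega) hk₀ h hdv]
      exact hyk
    · push Not at hbad
      refine sum_mem fun k hk => ?_
      simp only [mem_filter, mem_range] at hk
      exact hterm k (by omega) (hbad k (by omega) hk.2)

/-- The rational part of the linear form: summing the truncations over all residues. -/
lemma rational_part_integral (n S d : ℕ) (hd0 : d ≠ 0) (hd : ∀ j, 1 ≤ j → j ≤ n → j ∣ d)
    (α : ℕ → ℕ → ℤ) (b : ℕ) (hb : 0 < b)
    (h0 : ∀ y < b * n, ¬ b ∣ y → ∑ k ∈ range (n + 1), ∑ i ∈ Icc 1 S,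
      (α i k : ℚ) * ((d : ℚ) * b / (b * k - y)) ^ i = 0) :
    ∃ z : ℤ, ∑ k ∈ range (n + 1), ∑ i ∈ Icc 1 S,
      (α i k : ℚ) * ∑ M ∈ Icc 1 (b * k), ((d : ℚ) * b / M) ^ i = z := by
  have h1 : ∑ k ∈ range (n + 1), ∑ i ∈ Icc 1 S,
      (α i k : ℚ) * ∑ M ∈ Icc 1 (b * k), ((d : ℚ) * b / M) ^ i =
      ∑ y ∈ range (b * n), ∑ k ∈ (range (n + 1)).filter (fun k => y < b * k), ∑ i ∈ Icc 1 S,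
      (α i k : ℚ) * ((d : ℚ) * b / (b * k - y)) ^ i := by
    have h2 : ∀ k ∈ range (n + 1), ∑ i ∈ Icc 1 S,
        (α i k : ℚ) * ∑ M ∈ Icc 1 (b * k), ((d : ℚ) * b / M) ^ i =
        ∑ y ∈ range (b * n), if y < b * k then ∑ i ∈ Icc 1 S,
          (α i k : ℚ) * ((d : ℚ) * b / (b * k - y)) ^ i else 0 := by
      intro k hk
      have hkn : b * k ≤ b * n := Nat.mul_le_mul_left _ (by simp at hk; omega)
      rw [← sum_filter, show (range (b * n)).filter (fun y => y < b * k) = range (b * k) by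
        ext y; simp; omega]
      rw [sum_comm]
      refine sum_congr rfl fun i _ => ?_
      rw [← mul_sum]
      congr 1
      rw [show Icc 1 (b * k) = Ico 1 (b * k + 1) by rfl, sum_Ico_eq_sum_range,
        ← sum_range_reflect]
      refine sum_congr (by simp) fun y hy => ?_
      simp only [Nat.add_sub_cancel, mem_range] at hy ⊢
      congr 2
      rw [show 1 + (b * k - 1 - y) = b * k - y by omega, Nat.cast_sub hy.le]
      push_cast; ring
    rw [sum_congr rfl h2, sum_comm]
    simp only [sum_filter]
  rw [h1]
  have h3 := fun y : range (b * n) =>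
    truncation_integral n S d hd0 hd α b y hb (h0 y (mem_range.mp y.2))
  choose z hz using h3
  refine ⟨∑ y : range (b * n), z y, ?_⟩
  rw [← sum_coe_sort (range (b * n))]
  push_cast
  exact sum_congr rfl fun y _ => hz y

/-! ### Linear forms in odd zeta values -/

lemma hasSum_zetaR (i : ℕ) (hi : 1 < i) : HasSum (fun N : ℕ => 1 / ((N : ℝ) + 1) ^ i) (zetaR i) := by
  have hs : Summable (fun N : ℕ => 1 / (N : ℝ) ^ i) := Real.summable_one_div_nat_pow.mpr hi
  have h1 : zetaR i = ∑' N : ℕ, 1 / (N : ℝ) ^ i := by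
    rw [zetaR, zeta_nat_eq_tsum_of_gt_one hi]
    have : ∑' n : ℕ, 1 / (n : ℂ) ^ i = ((∑' N : ℕ, 1 / (N : ℝ) ^ i : ℝ) : ℂ) := by
      rw [Complex.ofReal_tsum]; push_cast; rfl
    rw [this, Complex.ofReal_re]
  have h2 := (hasSum_nat_add_iff' 1).mpr hs.hasSum
  rw [h1]
  simpa [zero_pow (by omega : i ≠ 0)] using h2

/-- Telescoping: valid also for `i = 1`, where the two series diverge separately. -/
lemma hasSum_sub_shift (i : ℕ) (hi : 1 ≤ i) (c : ℕ) :
    HasSum (fun N : ℕ => 1 / ((N : ℝ) + 1) ^ i - 1 / ((N : ℝ) + 1 + c) ^ i)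
      (∑ M ∈ Icc 1 c, 1 / (M : ℝ) ^ i) := by
  induction c with
  | zero => simp
  | succ c ih =>
    rw [sum_Icc_succ_top (by omega)]
    have : HasSum (fun N : ℕ => 1 / ((N : ℝ) + 1 + c) ^ i - 1 / ((N : ℝ) + 1 + (c + 1 : ℕ)) ^ i)
        (1 / ((c + 1 : ℕ) : ℝ) ^ i) := by
      rw [hasSum_iff_tendsto_nat_of_nonneg]
      · have h1 : ∀ X : ℕ, ∑ N ∈ range X, (1 / ((N : ℝ) + 1 + c) ^ i -
            1 / ((N : ℝ) + 1 + (c + 1 : ℕ)) ^ i) =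
            1 / ((c + 1 : ℕ) : ℝ) ^ i - 1 / (((X + (c + 1) : ℕ) : ℝ)) ^ i := by
          intro X
          induction X with
          | zero => simp
          | succ X ihX =>
            rw [sum_range_succ, ihX]; push_cast; ring
        simp only [h1]
        have h2 : Tendsto (fun X : ℕ => 1 / (X : ℝ) ^ i) atTop (nhds 0) := by
          simp only [one_div]
          exact ((tendsto_pow_atTop (by omega)).comp tendsto_natCast_atTop_atTop).inv_tendsto_atTop
        have h3 := (tendsto_add_atTop_iff_nat (c + 1)).mpr h2
        simpa using h3.const_sub (1 / ((c + 1 : ℕ) : ℝ) ^ i)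
      · intro N
        rw [sub_nonneg]
        gcongr
        linarith
    convert ih.add this using 2
    ring

/-- Evaluation of a partial fraction decomposition. -/
lemma pf_eval (n S : ℕ) (Q : Polynomial ℚ) (a : ℕ → ℕ → ℚ)
    (hQ : Q = ∑ k ∈ range (n + 1), (∑ i ∈ Icc 1 S, Polynomial.C (a i k) *
        (Polynomial.X + Polynomial.C (k : ℚ)) ^ (S - i)) *
        (∏ j ∈ (range (n + 1)).erase k, (Polynomial.X + Polynomial.C (j : ℚ))) ^ S)
    (x : ℝ) (hx : ∀ k ≤ n, x + k ≠ 0) :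
    Polynomial.aeval x Q / ∏ j ∈ range (n + 1), (x + j) ^ S =
      ∑ k ∈ range (n + 1), ∑ i ∈ Icc 1 S, (a i k : ℝ) / (x + k) ^ i := by
  rw [hQ]
  simp only [map_sum, map_mul, map_pow, map_add, map_prod, Polynomial.aeval_X, Polynomial.aeval_C,
    sum_div]
  refine sum_congr rfl fun k hk => ?_
  have hk' : k ≤ n := by simp at hk; omega
  rw [prod_pow, ← mul_prod_erase _ _ hk, mul_pow]
  simp only [eq_ratCast, Rat.cast_natCast]
  have hne : (∏ j ∈ (range (n + 1)).erase k, (x + (j : ℝ))) ^ S ≠ 0 := by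
    refine pow_ne_zero _ (prod_ne_zero_iff.mpr fun j hj => hx j ?_)
    simp at hj; omega
  rw [mul_div_mul_right _ _ hne, sum_div]
  refine sum_congr rfl fun i hi => ?_
  simp only [mem_Icc] at hi
  have := hx k hk'
  rw [div_eq_div_iff (pow_ne_zero _ this) (pow_ne_zero _ this), mul_assoc, ← pow_add,
    Nat.sub_add_cancel hi.2]

/-- The sum of the residues vanishes, by comparison of the leading coefficients. -/
lemma pf_residues (n S : ℕ) (Q : Polynomial ℚ) (a : ℕ → ℕ → ℚ) (hS : 0 < S)
    (hdeg : Q.natDegree + 2 ≤ (n + 1) * S)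
    (hQ : Q = ∑ k ∈ range (n + 1), (∑ i ∈ Icc 1 S, Polynomial.C (a i k) *
        (Polynomial.X + Polynomial.C (k : ℚ)) ^ (S - i)) *
        (∏ j ∈ (range (n + 1)).erase k, (Polynomial.X + Polynomial.C (j : ℚ))) ^ S) :
    ∑ k ∈ range (n + 1), a 1 k = 0 := by
  have hmul : (n + 1) * S = n * S + S := by ring
  have h1 : Q.coeff ((n + 1) * S - 1) = 0 := Polynomial.coeff_eq_zero_of_natDegree_lt (by omega)
  rw [hQ, Polynomial.finsetSum_coeff] at h1
  rw [← h1]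
  refine sum_congr rfl fun k hk => ?_
  have hmon : ∀ i, ((Polynomial.X + Polynomial.C (k : ℚ)) ^ (S - i) *
      (∏ j ∈ (range (n + 1)).erase k, (Polynomial.X + Polynomial.C (j : ℚ))) ^ S).Monic := fun i =>
    ((Polynomial.monic_X_add_C _).pow _).mul
      ((Polynomial.monic_prod_of_monic _ _ fun j _ => Polynomial.monic_X_add_C _).pow _)
  have hnd : ∀ i, ((Polynomial.X + Polynomial.C (k : ℚ)) ^ (S - i) *
      (∏ j ∈ (range (n + 1)).erase k, (Polynomial.X + Polynomial.C (j : ℚ))) ^ S).natDegree =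
      S - i + n * S := by
    intro i
    rw [Polynomial.Monic.natDegree_mul ((Polynomial.monic_X_add_C _).pow _)
      ((Polynomial.monic_prod_of_monic _ _ fun j _ => Polynomial.monic_X_add_C _).pow _),
      (Polynomial.monic_X_add_C _).natDegree_pow,
      (Polynomial.monic_prod_of_monic _ _ fun j _ => Polynomial.monic_X_add_C _).natDegree_pow,
      Polynomial.natDegree_prod_of_monic _ _ fun j _ => Polynomial.monic_X_add_C _]
    simp only [Polynomial.natDegree_X_add_C, sum_const, card_erase_of_mem hk, card_range,
      smul_eq_mul, mul_one, Nat.add_sub_cancel]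
    rw [mul_comm]
  rw [sum_mul, Polynomial.finsetSum_coeff, sum_eq_single 1]
  · rw [mul_assoc, Polynomial.coeff_C_mul]
    have := (hmon 1).coeff_natDegree
    rw [hnd 1] at this
    rw [show (n + 1) * S - 1 = S - 1 + n * S by omega, this, mul_one]
  · intro i hi hne
    simp only [mem_Icc] at hi
    rw [mul_assoc, Polynomial.coeff_C_mul, Polynomial.coeff_eq_zero_of_natDegree_lt, mul_zero]
    rw [hnd i]; omega
  · intro h
    exact absurd (by simp only [mem_Icc]; omega) h

/-- The linear forms in odd zeta values attached to a well-poised rational function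
`Q(t) / ∏ (t+j)^S`, summed over `ℕ_{>0} / b`. The integers `ρ i` are the same for all `b`; only the
factor `b ^ i` changes. The hypothesis for a given `b` is that `Q` vanishes at the non-integral points
of `ℤ / b` between the poles. -/
theorem linear_forms (n S d : ℕ) (hS0 : 0 < S) (hS : Even S) (hd0 : d ≠ 0)
    (hd : ∀ j, 1 ≤ j → j ≤ n → j ∣ d) (Q : Polynomial ℚ)
    (hdeg : Q.natDegree + 2 ≤ (n + 1) * S)
    (hint : ∀ k ≤ n, ∃ f ∈ taylorInt d,
      f * (∏ j ∈ (range (n + 1)).erase k, (PowerSeries.X + PowerSeries.C ((j : ℚ) - k))) ^ S =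
      ((Q.comp (Polynomial.X - Polynomial.C (k : ℚ)) : Polynomial ℚ) : PowerSeries ℚ))
    (hsym : ∀ x : ℝ, Polynomial.aeval (-n - x) Q = - Polynomial.aeval x Q) :
    ∃ ρ : ℕ → ℤ, ∀ b : ℕ, 0 < b →
      (∀ y : ℕ, y < b * n → ¬ b ∣ y → Polynomial.aeval (-(y : ℝ) / b) Q = 0) →
      ∃ z : ℤ, HasSum (fun N : ℕ => 2 * (d : ℝ) ^ S * (Polynomial.aeval (((N : ℝ) + 1) / b) Q /
        ∏ j ∈ range (n + 1), (((N : ℝ) + 1) / b + j) ^ S))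
        (∑ i ∈ (Icc 1 S).filter (fun i => Odd i ∧ 3 ≤ i), (ρ i : ℝ) * b ^ i * zetaR i + z) := by
  obtain ⟨a, ha, hQ⟩ := exists_partialFractions n S d Q (by omega) hint
  have ha' : ∀ i k : ℕ, ∃ z : ℤ, i ≤ S → k ≤ n →
      (d : ℚ) ^ (S - i) * (a i k - (-1) ^ i * a i (n - k)) = z := by
    intro i k
    by_cases h : i ≤ S ∧ k ≤ n
    · obtain ⟨z1, h1⟩ := ha i k h.1 h.2
      obtain ⟨z2, h2⟩ := ha i (n - k) h.1 (by omega)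
      refine ⟨z1 - (-1) ^ i * z2, fun _ _ => ?_⟩
      push_cast
      rw [← h1, ← h2]; ring
    · exact ⟨0, fun h1 h2 => absurd ⟨h1, h2⟩ h⟩
  choose α hα using ha'
  -- the series is expressed through `x ↦ ∑ α i k (d / (x + k)) ^ i`, which is antisymmetrized under
  -- `x ↦ -n - x`; this accounts for the factor `2`
  have hdR : (d : ℝ) ≠ 0 := by exact_mod_cast hd0
  have hdQ : (d : ℚ) ≠ 0 := by exact_mod_cast hd0
  have hαR : ∀ i k : ℕ, i ≤ S → k ≤ n →
      (d : ℝ) ^ S * ((a i k : ℝ) - (-1) ^ i * a i (n - k)) = α i k * (d : ℝ) ^ i := by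
    intro i k hi hk
    have : (d : ℝ) ^ (S - i) * ((a i k : ℝ) - (-1) ^ i * a i (n - k)) = α i k := by
      exact_mod_cast hα i k hi hk
    rw [← this]
    nth_rewrite 1 [show S = (S - i) + i by omega]
    rw [pow_add]; ring
  have hexp : ∀ x : ℝ, (∀ k ≤ n, x + k ≠ 0) →
      2 * (d : ℝ) ^ S * (Polynomial.aeval x Q / ∏ j ∈ range (n + 1), (x + j) ^ S) =
      ∑ k ∈ range (n + 1), ∑ i ∈ Icc 1 S, (α i k : ℝ) * ((d : ℝ) / (x + k)) ^ i := by
    intro x hx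
    have e1 := pf_eval n S Q a hQ x hx
    have e2 := pf_eval n S Q a hQ (-n - x) (fun k hk => by
      have := hx (n - k) (by omega)
      rw [Nat.cast_sub hk] at this
      intro h; apply this; linarith)
    have e3 : ∏ j ∈ range (n + 1), (-(n : ℝ) - x + j) ^ S = ∏ j ∈ range (n + 1), (x + j) ^ S := by
      rw [← prod_range_reflect]
      refine prod_congr rfl fun j hj => ?_
      simp only [mem_range] at hj
      rw [show n + 1 - 1 - j = n - j by omega, Nat.cast_sub (by omega),
        show -(n : ℝ) - x + (n - j) = -(x + j) by ring, hS.neg_pow]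
    rw [hsym, e3, ← sum_range_reflect] at e2
    have e4 : ∑ k ∈ range (n + 1), ∑ i ∈ Icc 1 S,
        (a i (n + 1 - 1 - k) : ℝ) / (-(n : ℝ) - x + (n + 1 - 1 - k : ℕ)) ^ i =
        ∑ k ∈ range (n + 1), ∑ i ∈ Icc 1 S, (-1) ^ i * (a i (n - k) : ℝ) / (x + k) ^ i := by
      refine sum_congr rfl fun k hk => sum_congr rfl fun i _ => ?_
      simp only [mem_range] at hk
      rw [show n + 1 - 1 - k = n - k by omega, Nat.cast_sub (by omega),
        show -(n : ℝ) - x + (n - k) = -(x + k) by ring, neg_pow (x + (k : ℝ)) i]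
      rcases neg_one_pow_eq_or ℝ i with h | h <;> rw [h] <;> simp [neg_div, div_neg]
    rw [e4] at e2
    have e5 : 2 * (Polynomial.aeval x Q / ∏ j ∈ range (n + 1), (x + (j : ℝ)) ^ S) =
        ∑ k ∈ range (n + 1), ∑ i ∈ Icc 1 S,
          ((a i k : ℝ) - (-1) ^ i * a i (n - k)) / (x + k) ^ i := by
      simp only [sub_div, sum_sub_distrib]
      rw [← e1, ← e2]; ring
    rw [mul_comm (2 : ℝ), mul_assoc, e5, mul_sum]
    refine sum_congr rfl fun k hk => ?_
    rw [mul_sum]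
    refine sum_congr rfl fun i hi => ?_
    simp only [mem_range, mem_Icc] at hk hi
    rw [div_pow, ← mul_div_assoc, hαR i k hi.2 (by omega), mul_div_assoc]
  -- vanishing of the coefficients of the even zeta values and of the harmonic series
  have hρ0 : ∀ i ∈ Icc 1 S, ¬ (Odd i ∧ 3 ≤ i) → ∑ k ∈ range (n + 1), (α i k : ℝ) = 0 := by
    intro i hi hni
    simp only [mem_Icc] at hi
    have h1 : (d : ℝ) ^ i * ∑ k ∈ range (n + 1), (α i k : ℝ) = 0 := by
      have : (d : ℝ) ^ i * ∑ k ∈ range (n + 1), (α i k : ℝ) =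
          (d : ℝ) ^ S * (∑ k ∈ range (n + 1), (a i k : ℝ) -
            (-1) ^ i * ∑ k ∈ range (n + 1), (a i (n - k) : ℝ)) := by
        rw [mul_sum, mul_sum, ← sum_sub_distrib, mul_sum]
        refine sum_congr rfl fun k hk => ?_
        simp only [mem_range] at hk
        rw [hαR i k hi.2 (by omega), mul_comm]
      rw [this]
      have hrefl : ∑ k ∈ range (n + 1), (a i (n - k) : ℝ) = ∑ k ∈ range (n + 1), (a i k : ℝ) := by
        rw [← sum_range_reflect]
        refine sum_congr rfl fun k hk => ?_
        simp only [mem_range] at hk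
        congr 2; omega
      rw [hrefl]
      rcases Nat.even_or_odd i with h | h
      · rw [h.neg_one_pow]; ring
      · have hi1 : i = 1 := by
          by_contra hne
          obtain ⟨t, rfl⟩ := h
          exact hni ⟨⟨t, rfl⟩, by omega⟩
        subst hi1
        have := pf_residues n S Q a hS0 hdeg hQ
        have : ∑ k ∈ range (n + 1), (a 1 k : ℝ) = 0 := by exact_mod_cast this
        rw [this]; ring
    exact (mul_eq_zero.mp h1).resolve_left (pow_ne_zero _ hdR)
  refine ⟨fun i => (∑ k ∈ range (n + 1), α i k) * (d : ℤ) ^ i, fun b hb hzero => ?_⟩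
  have hbR : (b : ℝ) ≠ 0 := by exact_mod_cast hb.ne'
  have hbpos : (0 : ℝ) < b := by exact_mod_cast hb
  -- the zeros of `Q` give the vanishing combinations needed for integrality
  obtain ⟨z, hz⟩ := rational_part_integral n S d hd0 hd α b hb (by
    intro y hy hby
    have hne : ∀ k ≤ n, -(y : ℝ) / b + k ≠ 0 := by
      intro k _ h
      apply hby
      have h2 : (y : ℝ) = b * k := by field_simp at h; linarith
      exact ⟨k, by exact_mod_cast h2⟩
    have h1 := hexp (-(y : ℝ) / b) hne
    rw [hzero y hy hby, zero_div, mul_zero] at h1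
    have h2 : ∑ k ∈ range (n + 1), ∑ i ∈ Icc 1 S,
        (α i k : ℝ) * ((d : ℝ) * b / (b * k - y)) ^ i = 0 := by
      rw [h1]
      refine sum_congr rfl fun k _ => sum_congr rfl fun i _ => ?_
      congr 2
      rw [show -(y : ℝ) / b + k = (b * k - y) / b by field_simp; ring, div_div_eq_mul_div]
    exact_mod_cast h2)
  refine ⟨-z, ?_⟩
  have hzR : ∑ k ∈ range (n + 1), ∑ i ∈ Icc 1 S,
      (α i k : ℝ) * ∑ M ∈ Icc 1 (b * k), ((d : ℝ) * b / M) ^ i = z := by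
    have := congrArg (Rat.cast : ℚ → ℝ) hz
    push_cast at this
    exact this
  -- the odd zeta values come from the terms `1 / (N + 1) ^ i`, and the integer `z` from the
  -- differences between these and the shifted terms `1 / (N + 1 + b k) ^ i`
  have hA : HasSum (fun N : ℕ => ∑ i ∈ (Icc 1 S).filter (fun i => Odd i ∧ 3 ≤ i),
      (((∑ k ∈ range (n + 1), α i k) * (d : ℤ) ^ i : ℤ) : ℝ) * b ^ i * (1 / ((N : ℝ) + 1) ^ i))
      (∑ i ∈ (Icc 1 S).filter (fun i => Odd i ∧ 3 ≤ i),
        (((∑ k ∈ range (n + 1), α i k) * (d : ℤ) ^ i : ℤ) : ℝ) * b ^ i * zetaR i) := by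
    refine hasSum_sum fun i hi => (hasSum_zetaR i ?_).mul_left _
    simp only [mem_filter] at hi; omega
  have hB : HasSum (fun N : ℕ => ∑ k ∈ range (n + 1), ∑ i ∈ Icc 1 S,
      ((α i k : ℝ) * ((d : ℝ) * b) ^ i) *
        (1 / ((N : ℝ) + 1) ^ i - 1 / ((N : ℝ) + 1 + (b * k : ℕ)) ^ i)) z := by
    rw [← hzR]
    refine hasSum_sum fun k _ => hasSum_sum fun i hi => ?_
    simp only [mem_Icc] at hi
    have h1 := (hasSum_sub_shift i hi.1 (b * k)).mul_left ((α i k : ℝ) * ((d : ℝ) * b) ^ i)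
    have h2 : (α i k : ℝ) * ∑ M ∈ Icc 1 (b * k), ((d : ℝ) * b / M) ^ i =
        (α i k : ℝ) * ((d : ℝ) * b) ^ i * ∑ M ∈ Icc 1 (b * k), 1 / (M : ℝ) ^ i := by
      rw [mul_assoc, mul_sum (Icc 1 (b * k)) _ (((d : ℝ) * b) ^ i)]
      congr 1
      refine sum_congr rfl fun M _ => ?_
      rw [div_pow, mul_one_div]
    rw [h2]
    exact h1
  rw [Int.cast_neg, ← sub_eq_add_neg]
  have hAB := hA.sub hB
  refine (congrArg (fun f : ℕ → ℝ => HasSum f _) (funext fun N => ?_)).mpr hAB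
  · rw [hexp _ (fun k _ => by positivity)]
    have hC : ∑ i ∈ (Icc 1 S).filter (fun i => Odd i ∧ 3 ≤ i),
        (((∑ k ∈ range (n + 1), α i k) * (d : ℤ) ^ i : ℤ) : ℝ) * b ^ i * (1 / ((N : ℝ) + 1) ^ i) =
        ∑ k ∈ range (n + 1), ∑ i ∈ Icc 1 S,
          ((α i k : ℝ) * ((d : ℝ) * b) ^ i) * (1 / ((N : ℝ) + 1) ^ i) := by
      rw [sum_filter_of_ne (p := fun i => Odd i ∧ 3 ≤ i), sum_comm]
      · refine sum_congr rfl fun i _ => ?_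
        push_cast
        rw [sum_mul, sum_mul, sum_mul]
        refine sum_congr rfl fun k _ => ?_
        rw [mul_pow]; ring
      · intro i hi hne
        by_contra h
        apply hne
        push_cast
        rw [hρ0 i hi h]; ring
    rw [hC, ← sum_sub_distrib]
    refine sum_congr rfl fun k _ => ?_
    rw [← sum_sub_distrib]
    refine sum_congr rfl fun i _ => ?_
    rw [show ((N : ℝ) + 1) / b + k = (N + 1 + (b * k : ℕ)) / b by push_cast; field_simp,
      div_div_eq_mul_div, div_pow]
    ring

/-! ### The numerator of the auxiliary rational function -/

/-- The numerator of the auxiliary rational function; here `r = num / den`, `n = den * N` and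
`r n = num * N`. The arithmetic factors `A₁ ^ n * A₂ ^ n` are replaced by the integers
`clearFactor`, whose exponents are rounded down; this makes sense for every `N`. -/
def numPoly (F : Finset ℚ) (S num den N : ℕ) : Polynomial ℚ :=
  Polynomial.C ((∏ θ ∈ F, (clearFactor θ.den N : ℚ) ^ (2 * num + den)) *
      ((den * N).factorial : ℚ) ^ S / (N.factorial : ℚ) ^ ((2 * num + den) * F.card)) *
    ((Polynomial.X - Polynomial.C ((num * N : ℕ) : ℚ)) *
      ∏ θ ∈ F, ∏ j ∈ range ((2 * num + den) * N),
        (Polynomial.X + Polynomial.C (-((num * N : ℕ) : ℚ) + j + θ)))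

lemma numPoly_natDegree_le (F : Finset ℚ) (S num den N : ℕ) :
    (numPoly F S num den N).natDegree ≤ 1 + F.card * ((2 * num + den) * N) := by
  refine (Polynomial.natDegree_C_mul_le _ _).trans (Polynomial.natDegree_mul_le.trans ?_)
  refine add_le_add (Polynomial.natDegree_X_sub_C_le _) ?_
  rw [Polynomial.natDegree_prod_of_monic _ _ fun θ _ =>
    Polynomial.monic_prod_of_monic _ _ fun j _ => Polynomial.monic_X_add_C _]
  refine sum_le_card_nsmul _ _ _ fun θ _ => ?_
  rw [Polynomial.natDegree_prod_of_monic _ _ fun j _ => Polynomial.monic_X_add_C _]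
  simp only [Polynomial.natDegree_X_add_C, sum_const, card_range, smul_eq_mul, mul_one, le_refl]

/-- A product of `M N` consecutive factors is made of `M` blocks of length `N`. -/
lemma prod_blocks (c : ℚ) (M N : ℕ) (x : PowerSeries ℚ) :
    ∏ l ∈ range M, (PowerSeries.C c * risingDiv N (x + PowerSeries.C ((l * N : ℕ) : ℚ))) =
      PowerSeries.C ((c / N.factorial) ^ M) * ∏ j ∈ range (M * N), (x + PowerSeries.C (j : ℚ)) := by
  induction M with
  | zero => simp
  | succ M ih =>
    rw [prod_range_succ, ih, Nat.succ_mul, prod_range_add, pow_succ, map_mul, risingDiv]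
    have : ∀ j ∈ range N, x + PowerSeries.C ((M * N : ℕ) : ℚ) + PowerSeries.C (j : ℚ) =
        x + PowerSeries.C ((M * N + j : ℕ) : ℚ) := by
      intro j _
      rw [Nat.cast_add, map_add]; ring
    rw [prod_congr rfl this, div_eq_mul_inv, map_mul]
    ring

/-- Split into blocks, the numerator over `∏ (t + j) ^ S` is a product of functions whose expansions at
the pole `-k` lie in `taylorInt d`. -/
lemma numPoly_taylorInt (F : Finset ℚ) (S num den N d : ℕ) (hden : 0 < den)
    (hd : ∀ j, 1 ≤ j → j ≤ den * N → j ∣ d) (k : ℕ) (hk : k ≤ den * N) :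
    ∃ f ∈ taylorInt d,
      f * (∏ j ∈ (range (den * N + 1)).erase k,
        (PowerSeries.X + PowerSeries.C ((j : ℚ) - k))) ^ S =
      (((numPoly F S num den N).comp (Polynomial.X - Polynomial.C (k : ℚ)) : Polynomial ℚ) :
        PowerSeries ℚ) := by
  obtain ⟨f₀, hf₀, hf₀e⟩ := exists_taylorInt_inv (den * N) k d hk hd
  have hNd : ∀ j, 1 ≤ j → j ≤ N → j ∣ d := fun j h1 h2 =>
    hd j h1 (h2.trans (Nat.le_mul_of_pos_left N hden))
  refine ⟨f₀ ^ S * ((PowerSeries.X + PowerSeries.C (((-(k : ℤ) - (num * N : ℕ) : ℤ)) : ℚ)) *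
    ∏ θ ∈ F, ∏ l ∈ range (2 * num + den), (PowerSeries.C (clearFactor θ.den N : ℚ) *
      risingDiv N ((PowerSeries.X + PowerSeries.C (-(k : ℚ) - (num * N : ℕ) + θ)) +
        PowerSeries.C ((l * N : ℕ) : ℚ)))), ?_, ?_⟩
  · refine mul_mem (pow_mem hf₀ _) (mul_mem (add_mem (taylorInt_X d) (taylorInt_C' d ⟨_, rfl⟩))
      (prod_mem fun θ _ => prod_mem fun l _ => ?_))
    have := taylorInt_block θ.den N d θ.den_nz hNd
      ((-(k : ℤ) - (num * N : ℕ) + (l * N : ℕ)) * θ.den + θ.num)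
    convert this using 2
    rw [add_assoc, ← map_add]
    congr 3
    have h0 : (θ.den : ℚ) ≠ 0 := by exact_mod_cast θ.den_nz
    rw [Int.cast_add, add_div, Int.cast_mul, Int.cast_natCast, mul_div_assoc, div_self h0,
      Rat.num_div_den]
    push_cast; ring
  · have e2 : ∀ p : Polynomial ℚ, (p : PowerSeries ℚ) =
      Polynomial.coeToPowerSeries.ringHom p := fun p => by simp
    rw [mul_right_comm, ← mul_pow, hf₀e]
    simp only [prod_blocks]
    simp only [numPoly, Polynomial.mul_comp, Polynomial.prod_comp, Polynomial.add_comp,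
      Polynomial.sub_comp, Polynomial.X_comp, Polynomial.C_comp]
    simp only [e2, map_mul, map_pow, map_prod, map_add, map_sub]
    simp only [Polynomial.coeToPowerSeries.ringHom_apply, Polynomial.coe_X, Polynomial.coe_C]
    have perm : ∀ a b c e : PowerSeries ℚ, a * (b * (c * e)) = (a * c) * (b * e) := by
      intros; ring
    rw [prod_mul_distrib, perm]
    congr 1
    · simp only [← map_prod, ← map_pow, ← map_mul]
      congr 1
      simp only [div_pow]
      rw [prod_div_distrib, prod_const, ← pow_mul]
      ring
    · congr 1
      · push_cast
        rw [map_sub, map_neg]; simp only [map_mul]; ring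
      · refine prod_congr rfl fun θ _ => prod_congr rfl fun j _ => ?_
        simp only [map_neg]
        ring

lemma aeval_numPoly (F : Finset ℚ) (S num den N : ℕ) (x : ℝ) :
    Polynomial.aeval x (numPoly F S num den N) =
      (∏ θ ∈ F, (clearFactor θ.den N : ℝ) ^ (2 * num + den)) *
      ((den * N).factorial : ℝ) ^ S / (N.factorial : ℝ) ^ ((2 * num + den) * F.card) *
      ((x - (num * N : ℕ)) * ∏ θ ∈ F, ∏ j ∈ range ((2 * num + den) * N),
        (x - (num * N : ℕ) + j + θ)) := by
  simp only [numPoly, map_mul, map_sub, map_add, map_prod, Polynomial.aeval_X, Polynomial.aeval_C]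
  congr 1
  · simp
  · simp only [eq_ratCast]
    push_cast
    congr 1
    refine prod_congr rfl fun θ _ => prod_congr rfl fun j _ => ?_
    ring

/-- The involution `θ ↦ 1 - θ` permutes the zeros attached to `F \ {1}`. The zeros attached to `1` are
integers, and with the extra factor `X - r n` they also form a symmetric set. -/
lemma numPoly_symm (F : Finset ℚ) (h1 : (1 : ℚ) ∈ F) (hF : ∀ θ ∈ F, θ ≠ 1 → 1 - θ ∈ F)
    (hF0 : (0 : ℚ) ∉ F) (S num den N : ℕ) (hN : Even N) (x : ℝ) :
    Polynomial.aeval (-((den * N : ℕ) : ℝ) - x) (numPoly F S num den N) =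
      - Polynomial.aeval x (numPoly F S num den N) := by
  rw [aeval_numPoly, aeval_numPoly, ← mul_neg]
  congr 1
  set L := (2 * num + den) * N with hL
  have hLe : Even L := hN.mul_left _
  set P : ℝ → ℚ → ℝ := fun x θ => ∏ j ∈ range L, (x - (num * N : ℕ) + j + θ) with hP
  have hLR : (L : ℝ) = 2 * (num * N : ℕ) + (den * N : ℕ) := by rw [hL]; push_cast; ring
  have hrefl : ∀ θ : ℚ, P (-((den * N : ℕ) : ℝ) - x) θ = P x (1 - θ) := by
    intro θ
    simp only [hP]
    rw [← prod_range_reflect]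
    have : ∀ j ∈ range L, (-((den * N : ℕ) : ℝ) - x - (num * N : ℕ) + (L - 1 - j : ℕ) + θ) =
        (-1) * (x - (num * N : ℕ) + j + (1 - θ : ℚ)) := by
      intro j hj
      simp only [mem_range] at hj
      rw [Nat.cast_sub (by omega), Nat.cast_sub (by omega), hLR]
      push_cast; ring
    rw [prod_congr rfl this, prod_mul_distrib, prod_const, card_range, hLe.neg_one_pow, one_mul]
  have hmain : ∏ θ ∈ F.erase 1, P x (1 - θ) = ∏ θ ∈ F.erase 1, P x θ := by
    refine prod_nbij' (fun θ => 1 - θ) (fun θ => 1 - θ) ?_ ?_ ?_ ?_ ?_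
    · intro θ hθ
      simp only [mem_erase] at hθ ⊢
      refine ⟨fun h => hF0 ?_, hF θ hθ.2 hθ.1⟩
      have : θ = 0 := by linarith
      exact this ▸ hθ.2
    · intro θ hθ
      simp only [mem_erase] at hθ ⊢
      refine ⟨fun h => hF0 ?_, hF θ hθ.2 hθ.1⟩
      have : θ = 0 := by linarith
      exact this ▸ hθ.2
    · intro θ _; ring
    · intro θ _; ring
    · intro θ _; rfl
  have hzero : (-((den * N : ℕ) : ℝ) - x - (num * N : ℕ)) * P x (1 - 1) =
      -((x - (num * N : ℕ)) * P x 1) := by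
    have s1 : P x (1 - 1) * (x - (num * N : ℕ) + L) = (x - (num * N : ℕ)) * P x 1 := by
      simp only [hP]
      have := prod_range_succ (fun j : ℕ => x - (num * N : ℕ) + (j : ℝ)) L
      rw [prod_range_succ'] at this
      simp only [Nat.cast_add, Nat.cast_one, Nat.cast_zero, add_zero] at this
      simp only [sub_self, Rat.cast_zero, add_zero, Rat.cast_one]
      rw [← this, mul_comm]
      congr 1
      refine prod_congr rfl fun j _ => by ring
    rw [← s1, hLR]; ring
  rw [← mul_prod_erase _ _ h1, ← mul_prod_erase _ _ h1]
  change (_ - _) * (P _ 1 * ∏ θ ∈ F.erase 1, P _ θ) = -((_ - _) * (P x 1 * ∏ θ ∈ F.erase 1, P x θ))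
  simp only [hrefl]
  rw [hmain, ← mul_assoc, hzero]; ring

/-- The numerator vanishes at every `q ∈ [-n, r n]` whose class modulo `1` is that of `-θ` for some
`θ ∈ F`. -/
lemma numPoly_zero (F : Finset ℚ) (S num den N : ℕ) (q : ℚ) (hfr : Int.floor q + 1 - q ∈ F)
    (h1 : q ≤ (num * N : ℕ)) (h2 : -((den * N : ℕ) : ℚ) ≤ q) :
    Polynomial.aeval (q : ℝ) (numPoly F S num den N) = 0 := by
  rw [aeval_numPoly]
  rcases h1.eq_or_lt with h | h
  · rw [h]; simp
  · have f1 : Int.floor q < (num * N : ℕ) := by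
      rw [Int.floor_lt]; exact_mod_cast h
    have f2 : -((den * N : ℕ) : ℤ) ≤ Int.floor q := by
      rw [Int.le_floor]; push_cast at h2 ⊢; exact h2
    have : ∏ θ ∈ F, ∏ j ∈ range ((2 * num + den) * N),
        ((q : ℝ) - (num * N : ℕ) + j + θ) = 0 := by
      refine prod_eq_zero hfr (prod_eq_zero (i := ((num * N : ℕ) - 1 - Int.floor q).toNat) ?_ ?_)
      · rw [mem_range]
        have : (((2 * num + den) * N : ℕ) : ℤ) = 2 * (num * N : ℕ) + (den * N : ℕ) := by
          push_cast; ring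
        zify
        rw [Int.toNat_of_nonneg (by omega)]
        push_cast at *
        nlinarith
      · have e : (((((num * N : ℕ) - 1 - Int.floor q).toNat : ℕ) : ℤ) : ℝ) =
            (num * N : ℕ) - 1 - (Int.floor q : ℤ) := by
          rw [Int.toNat_of_nonneg (by omega)]; push_cast; ring
        rw [Int.cast_natCast] at e
        rw [e]; push_cast; ring
    rw [this]; ring

/-- The auxiliary function, without its arithmetic constant, re-centred at its largest zero `R₀ = r n`;
the number of zeros in each class is `L = (2 r + 1) n`. -/
def uFun (F : Finset ℚ) (S n L R₀ : ℕ) (τ : ℝ) : ℝ :=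
  τ * (∏ θ ∈ F, ∏ j ∈ range L, (τ + j + θ)) / ∏ j ∈ range (n + 1), ((R₀ : ℝ) + τ + j) ^ S

/-- The arithmetic constant of the auxiliary function. -/
def uConst (F : Finset ℚ) (S num den N : ℕ) : ℝ :=
  (∏ θ ∈ F, (clearFactor θ.den N : ℝ) ^ (2 * num + den)) *
      ((den * N).factorial : ℝ) ^ S / (N.factorial : ℝ) ^ ((2 * num + den) * F.card)

/-- The linear forms attached to the auxiliary function. Since it vanishes at the points of `ℕ_{>0} / b`
up to `r n`, the series may start after its largest zero, where all terms are positive. -/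
theorem arithmetic_forms (Psi : Finset ℕ) (hpos : ∀ b ∈ Psi, 0 < b) (F : Finset ℚ)
    (h1 : (1 : ℚ) ∈ F)
    (hF : ∀ θ ∈ F, θ ≠ 1 → 1 - θ ∈ F) (hF0 : (0 : ℚ) ∉ F)
    (hfr : ∀ b ∈ Psi, ∀ y : ℤ, Int.floor ((y : ℚ) / b) + 1 - (y : ℚ) / b ∈ F)
    (S num den N d : ℕ) (hS0 : 0 < S) (hS : Even S) (hN : Even N) (hden : 0 < den) (hd0 : d ≠ 0)
    (hd : ∀ j, 1 ≤ j → j ≤ den * N → j ∣ d)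
    (hdeg : F.card * ((2 * num + den) * N) + 3 ≤ (den * N + 1) * S) :
    ∃ ρ : ℕ → ℤ, ∀ b ∈ Psi, ∃ z : ℤ,
      HasSum (fun K : ℕ => 2 * (d : ℝ) ^ S * (uConst F S num den N *
        uFun F S (den * N) ((2 * num + den) * N) (num * N) (((K : ℝ) + 1) / b)))
        (∑ i ∈ (Icc 1 S).filter (fun i => Odd i ∧ 3 ≤ i), (ρ i : ℝ) * b ^ i * zetaR i + z) := by
  obtain ⟨ρ, hρ⟩ := linear_forms (den * N) S d hS0 hS hd0 hd (numPoly F S num den N)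
    (by have := numPoly_natDegree_le F S num den N; omega)
    (fun k hk => numPoly_taylorInt F S num den N d hden hd k hk)
    (fun x => numPoly_symm F h1 hF hF0 S num den N hN x)
  refine ⟨ρ, fun b hb => ?_⟩
  have hb0 : 0 < b := hpos b hb
  have hbQ : (0 : ℚ) < b := by exact_mod_cast hb0
  have hbR : (0 : ℝ) < b := by exact_mod_cast hb0
  obtain ⟨z, hz⟩ := hρ b hb0 (by
    intro y hy _
    have := numPoly_zero F S num den N ((-(y : ℤ) : ℤ) / b : ℚ) (hfr b hb _)
      (by
        have : ((-(y : ℤ) : ℤ) / b : ℚ) ≤ 0 := by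
          push_cast
          exact div_nonpos_of_nonpos_of_nonneg (by simp) hbQ.le
        exact this.trans (Nat.cast_nonneg _))
      (by
        rw [le_div_iff₀ hbQ]
        have : (y : ℚ) ≤ (b * (den * N) : ℕ) := by exact_mod_cast hy.le
        push_cast at this ⊢
        linarith)
    push_cast at this
    exact this)
  refine ⟨z, ?_⟩
  have h2 := (hasSum_nat_add_iff' (b * (num * N))).mpr hz
  rw [sum_eq_zero (s := range (b * (num * N))), sub_zero] at h2
  · refine (congrArg (fun f : ℕ → ℝ => HasSum f _) (funext fun K => ?_)).mpr h2
    congr 1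
    have e : (((K + b * (num * N) : ℕ) : ℝ) + 1) / b = (num * N : ℕ) + ((K : ℝ) + 1) / b := by
      push_cast; field_simp; ring
    rw [e, aeval_numPoly, uConst, uFun, ← mul_div_assoc]
    simp only [add_sub_cancel_left]
  · intro K hK
    rw [mem_range] at hK
    have := numPoly_zero F S num den N (((K : ℤ) + 1 : ℤ) / b : ℚ) (hfr b hb _)
      (by
        rw [div_le_iff₀ hbQ]
        have : ((K : ℚ) + 1) ≤ (b * (num * N) : ℕ) := by exact_mod_cast hK
        push_cast at this ⊢
        linarith)
      (by
        have : (0 : ℚ) ≤ (((K : ℤ) + 1 : ℤ) / b : ℚ) := by push_cast; positivity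
        have h3 : -((den * N : ℕ) : ℚ) ≤ 0 := neg_nonpos.mpr (Nat.cast_nonneg _)
        exact h3.trans this)
    push_cast at this
    rw [this]; ring

/-! ### The set of zeros -/

lemma den_natCast_div {a b : ℕ} (hb : 0 < b) (h : Nat.Coprime a b) : ((a : ℚ) / b).den = b := by
  have := Rat.den_div_eq_of_coprime (a := a) (b := b) (by exact_mod_cast hb) (by simpa using h)
  simp only [Int.cast_natCast] at this
  exact Int.ofNat_inj.mp this

lemma mem_zeroSet {Psi : Finset ℕ} (hpos : ∀ b ∈ Psi, 0 < b) (θ : ℚ) :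
    θ ∈ zeroSet Psi ↔ θ.den ∈ Psi ∧ 0 < θ ∧ θ ≤ 1 := by
  simp only [zeroSet, mem_biUnion, mem_image, mem_filter, mem_Icc]
  constructor
  · rintro ⟨b, hb, a, ⟨⟨h1, h2⟩, h3⟩, rfl⟩
    have hb0 := hpos b hb
    have hbQ : (0 : ℚ) < b := by exact_mod_cast hb0
    refine ⟨by rwa [den_natCast_div hb0 h3], ?_, ?_⟩
    · have : (0 : ℚ) < a := by exact_mod_cast h1
      positivity
    · rw [div_le_one hbQ]; exact_mod_cast h2
  · rintro ⟨h1, h2, h3⟩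
    have hn : 0 < θ.num := Rat.num_pos.mpr h2
    have hna : (θ.num.natAbs : ℤ) = θ.num := Int.natAbs_of_nonneg hn.le
    refine ⟨θ.den, h1, θ.num.natAbs, ⟨⟨by omega, ?_⟩, θ.reduced⟩, ?_⟩
    · have : θ.num ≤ θ.den := by
        have h4 : (θ.num : ℚ) / θ.den ≤ 1 := by rwa [Rat.num_div_den]
        rw [div_le_one (by exact_mod_cast θ.den_pos)] at h4
        exact_mod_cast h4
      omega
    · have : ((θ.num.natAbs : ℕ) : ℚ) = (θ.num : ℚ) := by
        rw [← Int.cast_natCast, hna]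
      rw [this, Rat.num_div_den]

lemma one_mem_zeroSet {Psi : Finset ℕ} (hpos : ∀ b ∈ Psi, 0 < b) (h1 : 1 ∈ Psi) :
    (1 : ℚ) ∈ zeroSet Psi := by
  rw [mem_zeroSet hpos]; simpa using h1

lemma one_sub_mem_zeroSet {Psi : Finset ℕ} (hpos : ∀ b ∈ Psi, 0 < b) (θ : ℚ)
    (h : θ ∈ zeroSet Psi) (hne : θ ≠ 1) : 1 - θ ∈ zeroSet Psi := by
  rw [mem_zeroSet hpos] at h ⊢
  obtain ⟨h1, h2, h3⟩ := h
  refine ⟨?_, by linarith [lt_of_le_of_ne h3 hne], by linarith⟩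
  have : (1 - θ).den = θ.den := by simp
  rwa [this]

lemma frac_mem_zeroSet {Psi : Finset ℕ} (hpos : ∀ b ∈ Psi, 0 < b)
    (hdvd : ∀ b ∈ Psi, ∀ c, c ∣ b → c ∈ Psi) (b : ℕ) (hb : b ∈ Psi) (y : ℤ) :
    Int.floor ((y : ℚ) / b) + 1 - (y : ℚ) / b ∈ zeroSet Psi := by
  rw [mem_zeroSet hpos]
  refine ⟨hdvd b hb _ ?_, ?_, ?_⟩
  · have hb0 : (b : ℚ) ≠ 0 := by exact_mod_cast (hpos b hb).ne'
    have e : (Int.floor ((y : ℚ) / b) + 1 - (y : ℚ) / b : ℚ) =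
        (((Int.floor ((y : ℚ) / b) + 1) * b - y : ℤ) : ℚ) / ((b : ℤ) : ℚ) := by
      push_cast; field_simp
    rw [e, ← Rat.divInt_eq_div]
    exact_mod_cast Rat.den_dvd _ (b : ℤ)
  · linarith [Int.lt_floor_add_one ((y : ℚ) / b)]
  · linarith [Int.floor_le ((y : ℚ) / b)]

lemma prod_zeroSet {Psi : Finset ℕ} (hpos : ∀ b ∈ Psi, 0 < b) (h : ℕ → ℝ) :
    ∏ θ ∈ zeroSet Psi, h θ.den = ∏ b ∈ Psi, h b ^ Nat.totient b := by
  rw [zeroSet, prod_biUnion]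
  · refine prod_congr rfl fun b hb => ?_
    have hb0 := hpos b hb
    have hbQ : (b : ℚ) ≠ 0 := by exact_mod_cast hb0.ne'
    rw [prod_image]
    · rw [prod_congr rfl (g := fun _ => h b)]
      · rw [prod_const]
        congr 1
        rw [← Nat.filter_coprime_Ico_eq_totient b 1]
        congr 1
        ext a
        simp only [mem_filter, mem_Icc, mem_Ico, Nat.coprime_comm]
        constructor <;> rintro ⟨_, _⟩ <;> refine ⟨?_, by assumption⟩ <;> omega
      · intro a ha
        simp only [mem_filter] at ha
        rw [den_natCast_div hb0 ha.2]
    · intro a _ a' _ haa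
      have : (a : ℚ) = a' := by
        have h1 : (a : ℚ) / b = a' / b := haa
        field_simp at h1
        exact h1
      exact_mod_cast this
  · intro b hb b' hb' hne
    rw [Function.onFun, disjoint_left]
    intro x hx hx'
    simp only [mem_image, mem_filter] at hx hx'
    obtain ⟨a, ⟨_, ha⟩, rfl⟩ := hx
    obtain ⟨a', ⟨_, ha'⟩, he⟩ := hx'
    apply hne
    rw [← den_natCast_div (hpos b hb) ha, ← he, den_natCast_div (hpos b' hb') ha']

/-! ### The function `log f` and its positive root -/

/-- The logarithm of `ff`: the limit of the logarithmic derivative of the auxiliary function. -/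
def lfun (q S r x : ℝ) : ℝ :=
  q * (log (x + 2 * r + 1) - log x) + S * (log (x + r) - log (x + r + 1))

section
variable {q S r : ℝ}

lemma hasDerivAt_lfun (hr : 0 < r) {x : ℝ} (hx : 0 < x) :
    HasDerivAt (lfun q S r) (((S - q * (2 * r + 1)) * (x * (x + 2 * r + 1)) -
      q * (2 * r + 1) * (r * (r + 1))) / ((x * (x + 2 * r + 1)) * ((x + r) * (x + r + 1)))) x := by
  have h1 : HasDerivAt (fun x : ℝ => log (x + 2 * r + 1)) (1 / (x + 2 * r + 1)) x :=
    (((hasDerivAt_id x).add_const (2 * r)).add_const 1).log (by simp; positivity)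
  have h2 : HasDerivAt (fun x : ℝ => log x) (1 / x) x := (hasDerivAt_id x).log (by simpa using hx.ne')
  have h3 : HasDerivAt (fun x : ℝ => log (x + r)) (1 / (x + r)) x :=
    ((hasDerivAt_id x).add_const r).log (by simp; positivity)
  have h4 : HasDerivAt (fun x : ℝ => log (x + r + 1)) (1 / (x + r + 1)) x :=
    (((hasDerivAt_id x).add_const r).add_const 1).log (by simp; positivity)
  have := ((h1.sub h2).const_mul q).add ((h3.sub h4).const_mul S)
  refine this.congr_deriv ?_
  field_simp
  ring

lemma continuousAt_lfun (hr : 0 < r) {x : ℝ} (hx : 0 < x) : ContinuousAt (lfun q S r) x :=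
  (hasDerivAt_lfun hr hx).continuousAt

lemma tendsto_mul_lfun (hr : 0 < r) :
    Tendsto (fun x => x * lfun q S r x) atTop (nhds (q * (2 * r + 1) - S)) := by
  have h1 : Tendsto (fun x : ℝ => x * (log (x + (2 * r + 1)) - log x)) atTop (nhds (2 * r + 1)) := by
    refine (Real.tendsto_mul_log_one_add_div_atTop (2 * r + 1)).congr' ?_
    filter_upwards [eventually_gt_atTop 0] with x hx
    rw [← Real.log_div (by positivity) (by positivity)]
    congr 2; field_simp
  have h2 : Tendsto (fun x : ℝ => x * (log (x + 1) - log x)) atTop (nhds 1) := by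
    refine (Real.tendsto_mul_log_one_add_div_atTop 1).congr' ?_
    filter_upwards [eventually_gt_atTop 0] with x hx
    rw [← Real.log_div (by positivity) (by positivity)]
    congr 2; field_simp
  have h3 : Tendsto (fun x : ℝ => (x + r) * (log (x + r + 1) - log (x + r))) atTop (nhds 1) :=
    h2.comp (tendsto_atTop_add_const_right _ r tendsto_id)
  have h4 : Tendsto (fun x : ℝ => x / (x + r)) atTop (nhds 1) := by
    have : Tendsto (fun x : ℝ => 1 - r / (x + r)) atTop (nhds (1 - 0)) :=
      tendsto_const_nhds.sub
        (Tendsto.div_atTop tendsto_const_nhds (tendsto_atTop_add_const_right _ r tendsto_id))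
    rw [sub_zero] at this
    refine this.congr' ?_
    filter_upwards [eventually_gt_atTop 0] with x hx
    field_simp; ring
  have h5 := ((h1.const_mul q).sub ((h4.mul h3).const_mul S))
  rw [one_mul, mul_one] at h5
  refine h5.congr' ?_
  filter_upwards [eventually_gt_atTop 0] with x hx
  have : x + r ≠ 0 := by positivity
  simp only [lfun]
  rw [← mul_assoc (x / (x + r)), div_mul_cancel₀ _ this, show x + 2 * r + 1 = x + (2 * r + 1) by ring]
  ring

lemma tendsto_lfun (hr : 0 < r) : Tendsto (lfun q S r) atTop (nhds 0) := by
  have := (tendsto_mul_lfun (q := q) (S := S) hr).div_atTop tendsto_id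
  refine this.congr' ?_
  filter_upwards [eventually_gt_atTop 0] with x hx
  simp only [id]
  field_simp

lemma lfun_strictAntiOn (hr : 0 < r) {s : Set ℝ} (hs : Convex ℝ s)
    (hs0 : ∀ x ∈ s, 0 < x)
    (h : ∀ x ∈ interior s, (S - q * (2 * r + 1)) * (x * (x + 2 * r + 1)) -
      q * (2 * r + 1) * (r * (r + 1)) < 0) : StrictAntiOn (lfun q S r) s := by
  refine strictAntiOn_of_deriv_neg hs
    (fun x hx => (continuousAt_lfun hr (hs0 x hx)).continuousWithinAt) fun x hx => ?_
  have hx0 := hs0 x (interior_subset hx)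
  rw [(hasDerivAt_lfun hr hx0).deriv]
  exact div_neg_of_neg_of_pos (h x hx) (by positivity)

/-- Once the derivative of `lfun` is nonnegative it stays so, and `lfun` increases to its
limit `0`. -/
lemma lfun_neg_of_nonneg (hr : 0 < r) (hq : 0 < q) {ξ : ℝ} (hξ : 0 < ξ)
    (h : 0 ≤ (S - q * (2 * r + 1)) * (ξ * (ξ + 2 * r + 1)) - q * (2 * r + 1) * (r * (r + 1))) :
    lfun q S r ξ < 0 := by
  have hκ : 0 < S - q * (2 * r + 1) := by
    by_contra hn
    push Not at hn
    have h1 : (S - q * (2 * r + 1)) * (ξ * (ξ + 2 * r + 1)) ≤ 0 :=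
      mul_nonpos_of_nonpos_of_nonneg hn (by positivity)
    have : 0 < q * (2 * r + 1) * (r * (r + 1)) := by positivity
    linarith
  have hmono : StrictMonoOn (lfun q S r) (Set.Ici ξ) := by
    refine strictMonoOn_of_deriv_pos (convex_Ici ξ) (fun x hx =>
      (continuousAt_lfun hr (lt_of_lt_of_le hξ hx)).continuousWithinAt) fun x hx => ?_
    rw [interior_Ici] at hx
    have hx' : ξ < x := hx
    have hx0 : 0 < x := hξ.trans hx'
    rw [(hasDerivAt_lfun hr hx0).deriv]
    refine div_pos ?_ (by positivity)
    have : ξ * (ξ + 2 * r + 1) < x * (x + 2 * r + 1) := by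
      apply mul_lt_mul'' hx' (by linarith) hξ.le (by positivity)
    nlinarith
  have h1 : lfun q S r ξ < lfun q S r (ξ + 1) :=
    hmono (Set.mem_Ici.mpr le_rfl) (Set.mem_Ici.mpr (by linarith)) (by linarith)
  refine lt_of_lt_of_le h1 (ge_of_tendsto (tendsto_lfun (q := q) (S := S) hr) ?_)
  filter_upwards [eventually_ge_atTop (ξ + 1)] with x hx
  exact hmono.monotoneOn (Set.mem_Ici.mpr (by linarith)) (Set.mem_Ici.mpr (by linarith)) hx

/-- Otherwise `lfun` would decrease strictly to its limit `0` and have no zero. -/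
lemma kappa_pos (hr : 0 < r) (hq : 0 < q) {x₀ : ℝ} (hx₀ : 0 < x₀) (h0 : lfun q S r x₀ = 0) :
    q * (2 * r + 1) < S := by
  by_contra hn
  push Not at hn
  have hanti : StrictAntiOn (lfun q S r) (Set.Ioi 0) := by
    refine lfun_strictAntiOn hr (convex_Ioi 0) (fun x hx => hx) fun x hx => ?_
    rw [interior_Ioi] at hx
    have hx' : 0 < x := hx
    have h1 : (S - q * (2 * r + 1)) * (x * (x + 2 * r + 1)) ≤ 0 :=
      mul_nonpos_of_nonpos_of_nonneg (by linarith) (by positivity)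
    have : 0 < q * (2 * r + 1) * (r * (r + 1)) := by positivity
    linarith
  have h1 : lfun q S r (x₀ + 1) < lfun q S r x₀ :=
    hanti hx₀ (Set.mem_Ioi.mpr (by linarith)) (by linarith)
  have h2 : 0 ≤ lfun q S r (x₀ + 1) := by
    refine le_of_tendsto (tendsto_lfun (q := q) (S := S) hr) ?_
    filter_upwards [eventually_ge_atTop (x₀ + 1)] with x hx
    exact hanti.antitoneOn (Set.mem_Ioi.mpr (by linarith)) (Set.mem_Ioi.mpr (by linarith)) hx
  linarith

/-- The numerator of the derivative changes sign at most once, from negative to positive. -/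
lemma lfun_strictAntiOn_Ioc (hr : 0 < r) (hq : 0 < q) {y : ℝ} (hy : 0 < y)
    (h : (S - q * (2 * r + 1)) * (y * (y + 2 * r + 1)) - q * (2 * r + 1) * (r * (r + 1)) < 0) :
    StrictAntiOn (lfun q S r) (Set.Ioc 0 y) := by
  refine lfun_strictAntiOn hr (convex_Ioc 0 y) (fun x hx => hx.1) fun x hx => ?_
  have hx' := interior_subset hx
  have hx0 : 0 < x := hx'.1
  have : x * (x + 2 * r + 1) ≤ y * (y + 2 * r + 1) :=
    mul_le_mul hx'.2 (by linarith [hx'.2]) (by positivity) hy.le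
  rcases le_or_gt 0 (S - q * (2 * r + 1)) with hκ | hκ
  · nlinarith
  · have h1 : (S - q * (2 * r + 1)) * (x * (x + 2 * r + 1)) ≤ 0 :=
      mul_nonpos_of_nonpos_of_nonneg hκ.le (by positivity)
    have : 0 < q * (2 * r + 1) * (r * (r + 1)) := by positivity
    linarith

/-- The derivative of `lfun` is negative at the zero `x₀`, hence on all of `(0, x₀]`. -/
lemma lfun_strictAntiOn_x₀ (hr : 0 < r) (hq : 0 < q) {x₀ : ℝ} (hx₀ : 0 < x₀)
    (h0 : lfun q S r x₀ = 0) : StrictAntiOn (lfun q S r) (Set.Ioc 0 x₀) := by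
  refine lfun_strictAntiOn_Ioc hr hq hx₀ ?_
  by_contra hn
  push Not at hn
  exact (lfun_neg_of_nonneg hr hq hx₀ hn).ne h0

lemma lfun_neg_of_gt (hr : 0 < r) (hq : 0 < q) {x₀ : ℝ} (hx₀ : 0 < x₀)
    (h0 : lfun q S r x₀ = 0) {y : ℝ} (hy : x₀ < y) : lfun q S r y < 0 := by
  have hy0 := hx₀.trans hy
  rcases le_or_gt 0 ((S - q * (2 * r + 1)) * (y * (y + 2 * r + 1)) -
    q * (2 * r + 1) * (r * (r + 1))) with h | h
  · exact lfun_neg_of_nonneg hr hq hy0 h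
  · have := lfun_strictAntiOn_Ioc hr hq hy0 h ⟨hx₀, hy.le⟩ ⟨hy0, le_rfl⟩ hy
    linarith

/-- Since `x * lfun x` tends to the negative number `q (2 r + 1) - S`, the bound `-c / x` holds for large
`x`, and on the remaining interval it follows by compactness. -/
lemma lfun_le_neg_div (hr : 0 < r) (hq : 0 < q) {x₀ : ℝ} (hx₀ : 0 < x₀)
    (h0 : lfun q S r x₀ = 0) {x₁ : ℝ} (hx₁ : x₀ < x₁) :
    ∃ c > 0, ∀ x, x₁ ≤ x → lfun q S r x ≤ -c / x := by
  have hκ := kappa_pos hr hq hx₀ h0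
  have hx₁0 := hx₀.trans hx₁
  obtain ⟨X, hX⟩ := eventually_atTop.mp ((tendsto_order.mp
    (tendsto_mul_lfun (q := q) (S := S) hr)).2 ((q * (2 * r + 1) - S) / 2) (by linarith))
  have hcont : ContinuousOn (fun x => x * lfun q S r x) (Set.Icc x₁ (max x₁ X)) := fun x hx =>
    (continuousAt_id.mul (continuousAt_lfun hr (lt_of_lt_of_le hx₁0 hx.1))).continuousWithinAt
  obtain ⟨m, hm, hmax⟩ := isCompact_Icc.exists_isMaxOn ⟨x₁, le_rfl, le_max_left _ _⟩ hcont
  have hm0 : 0 < m := lt_of_lt_of_le hx₁0 hm.1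
  have hmneg : m * lfun q S r m < 0 :=
    mul_neg_of_pos_of_neg hm0 (lfun_neg_of_gt hr hq hx₀ h0 (lt_of_lt_of_le hx₁ hm.1))
  refine ⟨min (-(m * lfun q S r m)) ((S - q * (2 * r + 1)) / 2),
    lt_min (by linarith) (by linarith), fun x hx => ?_⟩
  have hx0 : 0 < x := lt_of_lt_of_le hx₁0 hx
  rw [le_div_iff₀ hx0, mul_comm]
  rcases le_total x (max x₁ X) with h | h
  · have : x * lfun q S r x ≤ m * lfun q S r m := hmax ⟨hx, h⟩
    linarith [min_le_left (-(m * lfun q S r m)) ((S - q * (2 * r + 1)) / 2)]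
  · have := hX x ((le_max_right _ _).trans h)
    linarith [min_le_right (-(m * lfun q S r m)) ((S - q * (2 * r + 1)) / 2)]
end

/-! ### The logarithmic derivative of the auxiliary function -/

lemma inv_le_log_sub {x : ℝ} (hx : 0 < x) : 1 / (x + 1) ≤ log (x + 1) - log x := by
  have h := Real.one_sub_inv_le_log_of_pos (show 0 < (x + 1) / x by positivity)
  rw [Real.log_div (by positivity) hx.ne'] at h
  refine le_trans (le_of_eq ?_) h
  field_simp; ring

lemma log_sub_le_inv {x y : ℝ} (hx : 0 < x) (hy : 0 < y) : log (x + y) - log x ≤ y / x := by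
  have h := Real.log_le_sub_one_of_pos (show 0 < (x + y) / x by positivity)
  rw [Real.log_div (by positivity) hx.ne'] at h
  refine le_trans h (le_of_eq ?_)
  field_simp; ring

lemma log_le_sum_inv {a : ℝ} (ha : 0 < a) (m : ℕ) :
    log (a + m) - log a ≤ ∑ j ∈ range m, 1 / (a + j) := by
  induction m with
  | zero => simp
  | succ m ih =>
    rw [sum_range_succ]
    have := log_sub_le_inv (show 0 < a + m by positivity) one_pos
    push_cast
    rw [← add_assoc]
    linarith

lemma sum_inv_succ_le_log {a : ℝ} (ha : 0 < a) (m : ℕ) :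
    ∑ j ∈ range (m + 1), 1 / (a + j) ≤ 1 / a + (log (a + m) - log a) := by
  induction m with
  | zero => simp
  | succ m ih =>
    rw [sum_range_succ]
    have := inv_le_log_sub (show 0 < a + m by positivity)
    push_cast
    rw [← add_assoc]
    linarith

lemma sum_inv_le_log {a : ℝ} (ha : 0 < a) (m : ℕ) :
    ∑ j ∈ range m, 1 / (a + j) ≤ 1 / a + (log (a + m) - log a) := by
  refine le_trans ?_ (sum_inv_succ_le_log ha m)
  rw [sum_range_succ]
  have : 0 < 1 / (a + m) := by positivity
  linarith

/-- The logarithmic derivative of `uFun`. -/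
def ellFun (F : Finset ℚ) (S n L R₀ : ℕ) (τ : ℝ) : ℝ :=
  1 / τ + ∑ θ ∈ F, ∑ j ∈ range L, 1 / (τ + j + θ) - S * ∑ j ∈ range (n + 1), 1 / ((R₀ : ℝ) + τ + j)

section
variable {F : Finset ℚ} {S n L R₀ : ℕ}

lemma uFun_nonneg (hF : ∀ θ ∈ F, 0 < θ) {τ : ℝ} (hτ : 0 ≤ τ) : 0 ≤ uFun F S n L R₀ τ := by
  unfold uFun
  refine div_nonneg (mul_nonneg hτ (prod_nonneg fun θ hθ => prod_nonneg fun j _ => ?_))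
    (prod_nonneg fun j _ => by positivity)
  have : (0 : ℝ) < θ := by exact_mod_cast hF θ hθ
  positivity

lemma uFun_pos (hF : ∀ θ ∈ F, 0 < θ) {τ : ℝ} (hτ : 0 < τ) : 0 < uFun F S n L R₀ τ := by
  unfold uFun
  refine div_pos (mul_pos hτ (prod_pos fun θ hθ => prod_pos fun j _ => ?_))
    (prod_pos fun j _ => by positivity)
  have : (0 : ℝ) < θ := by exact_mod_cast hF θ hθ
  positivity

lemma log_uFun (hF : ∀ θ ∈ F, 0 < θ) {τ : ℝ} (hτ : 0 < τ) :
    log (uFun F S n L R₀ τ) = log τ + ∑ θ ∈ F, ∑ j ∈ range L, log (τ + j + θ) -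
      S * ∑ j ∈ range (n + 1), log ((R₀ : ℝ) + τ + j) := by
  have hp : ∀ θ ∈ F, ∀ j ∈ range L, τ + (j : ℝ) + (θ : ℝ) ≠ 0 := fun θ hθ j _ => by
    have : (0 : ℝ) < θ := by exact_mod_cast hF θ hθ
    positivity
  unfold uFun
  rw [Real.log_div, Real.log_mul hτ.ne', Real.log_prod, Real.log_prod, mul_sum]
  · congr 1
    · congr 1
      exact sum_congr rfl fun θ hθ => Real.log_prod fun j hj => hp θ hθ j hj
    · exact sum_congr rfl fun j _ => by rw [Real.log_pow]
  · intro j _; positivity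
  · intro θ hθ; exact prod_ne_zero_iff.mpr (hp θ hθ)
  · exact prod_ne_zero_iff.mpr fun θ hθ => prod_ne_zero_iff.mpr (hp θ hθ)
  · exact mul_ne_zero hτ.ne' (prod_ne_zero_iff.mpr fun θ hθ => prod_ne_zero_iff.mpr (hp θ hθ))
  · exact prod_ne_zero_iff.mpr fun j _ => by positivity

lemma hasDerivAt_log_uFun (hF : ∀ θ ∈ F, 0 < θ) {τ : ℝ} (hτ : 0 < τ) :
    HasDerivAt (fun x => log (uFun F S n L R₀ x)) (ellFun F S n L R₀ τ) τ := by
  have h : HasDerivAt (fun τ : ℝ => log τ + ∑ θ ∈ F, ∑ j ∈ range L, log (τ + j + θ) -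
      S * ∑ j ∈ range (n + 1), log ((R₀ : ℝ) + τ + j)) (ellFun F S n L R₀ τ) τ := by
    unfold ellFun
    refine HasDerivAt.sub (HasDerivAt.add ((hasDerivAt_id τ).log hτ.ne') ?_) (HasDerivAt.const_mul _ ?_)
    · refine HasDerivAt.fun_sum fun θ hθ => HasDerivAt.fun_sum fun j _ => ?_
      have : (0 : ℝ) < θ := by exact_mod_cast hF θ hθ
      exact (((hasDerivAt_id τ).add_const (j : ℝ)).add_const (θ : ℝ)).log (by simp; positivity)
    · refine HasDerivAt.fun_sum fun j _ => ?_
      exact (((hasDerivAt_id τ).const_add (R₀ : ℝ)).add_const (j : ℝ)).log (by simp; positivity)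
  refine h.congr_of_eventuallyEq ?_
  filter_upwards [eventually_gt_nhds hτ] with x hx using log_uFun hF hx

lemma lfun_div {q s r : ℝ} (hr : 0 < r) {n : ℝ} (hn : 0 < n) {x : ℝ} (hx : 0 < x) :
    lfun q s r (x / n) = q * (log (x + (2 * r + 1) * n) - log x) +
      s * (log (x + r * n) - log (x + r * n + n)) := by
  unfold lfun
  rw [show x / n + 2 * r + 1 = (x + (2 * r + 1) * n) / n by field_simp; ring,
    show x / n + r = (x + r * n) / n by field_simp,
    show (x + r * n) / n + 1 = (x + r * n + n) / n by field_simp,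
    Real.log_div (by positivity) hn.ne', Real.log_div (by positivity) hn.ne',
    Real.log_div (by positivity) hn.ne', Real.log_div (by positivity) hn.ne']
  ring

/-- After rescaling by `n`, the logarithmic derivative is close to `lfun`: upper estimate. -/
lemma ellFun_le (hF : ∀ θ ∈ F, 0 < θ) {r : ℝ} (hr : 0 < r) (hn : 0 < n)
    (hL : (L : ℝ) = (2 * r + 1) * n) (hR : (R₀ : ℝ) = r * n) {τ : ℝ} (hτ : 0 < τ) :
    ellFun F S n L R₀ τ ≤ lfun F.card S r (τ / n) + (1 + F.card) / τ := by
  have hn' : (0 : ℝ) < n := by exact_mod_cast hn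
  rw [lfun_div hr hn' hτ]
  have h1 : ∑ θ ∈ F, ∑ j ∈ range L, 1 / (τ + j + θ) ≤
      F.card * (1 / τ + (log (τ + L) - log τ)) := by
    rw [← nsmul_eq_mul]
    refine sum_le_card_nsmul _ _ _ fun θ hθ => le_trans (sum_le_sum fun j _ => ?_)
      (sum_inv_le_log hτ L)
    have : (0 : ℝ) < θ := by exact_mod_cast hF θ hθ
    exact one_div_le_one_div_of_le (by positivity) (by linarith)
  have h2 := log_le_sum_inv (show 0 < R₀ + τ by positivity) (n + 1)
  have h3 : log (R₀ + τ + n) ≤ log (R₀ + τ + (n + 1 : ℕ)) :=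
    Real.log_le_log (by positivity) (by push_cast; linarith)
  have h4 : (S : ℝ) * (log (R₀ + τ + n) - log (R₀ + τ)) ≤
      S * ∑ j ∈ range (n + 1), 1 / ((R₀ : ℝ) + τ + j) :=
    mul_le_mul_of_nonneg_left (by linarith) (by positivity)
  unfold ellFun
  rw [hL] at h1
  rw [hR] at h4 ⊢
  rw [show τ + r * n + n = r * n + τ + n by ring, show τ + r * n = r * n + τ by ring]
  rw [add_div, show (F.card : ℝ) / τ = F.card * (1 / τ) by ring]
  linarith

/-- After rescaling by `n`, the logarithmic derivative is close to `lfun`: lower estimate. -/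
lemma le_ellFun (hF : ∀ θ ∈ F, 0 < θ) (hF1 : ∀ θ ∈ F, θ ≤ 1) {r : ℝ} (hr : 0 < r) (hn : 0 < n)
    (hL : (L : ℝ) = (2 * r + 1) * n) (hR : (R₀ : ℝ) = r * n) {τ : ℝ} (hτ : 0 < τ) :
    lfun F.card S r ((τ + 1) / n) - 2 * S / (r * n) ≤ ellFun F S n L R₀ τ := by
  have hn' : (0 : ℝ) < n := by exact_mod_cast hn
  rw [lfun_div hr hn' (by positivity)]
  have h1 : F.card * (log (τ + 1 + L) - log (τ + 1)) ≤
      ∑ θ ∈ F, ∑ j ∈ range L, 1 / (τ + j + θ) := by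
    rw [← nsmul_eq_mul]
    refine card_nsmul_le_sum _ _ _ fun θ hθ => le_trans
      (log_le_sum_inv (show 0 < τ + 1 by positivity) L) (sum_le_sum fun j _ => ?_)
    have h0 : (0 : ℝ) < θ := by exact_mod_cast hF θ hθ
    have : (θ : ℝ) ≤ 1 := by exact_mod_cast hF1 θ hθ
    exact one_div_le_one_div_of_le (by positivity) (by linarith)
  have hR0 : 0 < (R₀ : ℝ) := by rw [hR]; positivity
  have hy : 0 < (R₀ : ℝ) + τ := by positivity
  have h2 := sum_inv_succ_le_log hy n
  have h3 := log_sub_le_inv hy one_pos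
  have h4 : log (R₀ + τ + n) ≤ log (R₀ + τ + 1 + n) :=
    Real.log_le_log (by positivity) (by linarith)
  have h5 : 1 / (R₀ + τ) ≤ 1 / (r * n) := by
    rw [← hR]; exact one_div_le_one_div_of_le hR0 (by linarith)
  have h6 : (S : ℝ) * ∑ j ∈ range (n + 1), 1 / ((R₀ : ℝ) + τ + j) ≤
      S * (2 * (1 / (r * n)) + (log (R₀ + τ + 1 + n) - log (R₀ + τ + 1))) :=
    mul_le_mul_of_nonneg_left (by linarith) (by positivity)
  have h7 : 0 < 1 / τ := by positivity
  unfold ellFun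
  rw [hL] at h1
  rw [hR] at h6 ⊢
  rw [show τ + 1 + r * n + n = r * n + τ + 1 + n by ring,
    show τ + 1 + r * n = r * n + τ + 1 by ring,
    show 2 * S / (r * n) = S * (2 * (1 / (r * n))) by ring]
  linarith
end

/-! ### The window around the maximum -/

lemma eventually_le_mul {c : ℝ} (hc : 0 < c) (A : ℝ) : ∀ᶠ n : ℕ in atTop, A ≤ c * n :=
  (tendsto_natCast_atTop_atTop.const_mul_atTop hc).eventually_ge_atTop A

lemma window_monotoneOn {F : Finset ℚ} {S n L R₀ : ℕ} (hF : ∀ θ ∈ F, 0 < θ) {a : ℝ}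
    (h : ∀ τ, 0 < τ → τ ≤ a → 0 ≤ ellFun F S n L R₀ τ) :
    MonotoneOn (uFun F S n L R₀) (Set.Icc 0 a) := by
  have hm : MonotoneOn (fun x => log (uFun F S n L R₀ x)) (Set.Ioc 0 a) := by
    refine monotoneOn_of_deriv_nonneg (convex_Ioc 0 a) (fun x hx =>
      (hasDerivAt_log_uFun hF hx.1).continuousAt.continuousWithinAt) (fun x hx =>
      (hasDerivAt_log_uFun hF (interior_subset hx).1).differentiableAt.differentiableWithinAt)
      fun x hx => ?_
    have hx' := interior_subset hx
    rw [(hasDerivAt_log_uFun hF hx'.1).deriv]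
    exact h x hx'.1 hx'.2
  intro x hx y hy hxy
  rcases hx.1.eq_or_lt with h0 | h0
  · rw [← h0]
    have : uFun F S n L R₀ 0 = 0 := by simp [uFun]
    rw [this]
    exact uFun_nonneg hF hy.1
  · have hy0 := h0.trans_le hxy
    exact (Real.log_le_log_iff (uFun_pos hF h0) (uFun_pos hF hy0)).mp
      (hm ⟨h0, hx.2⟩ ⟨hy0, hy.2⟩ hxy)

lemma window_le_exp {F : Finset ℚ} {S n L R₀ : ℕ} (hF : ∀ θ ∈ F, 0 < θ) {a b ε : ℝ} (ha : 0 < a)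
    (h : ∀ τ, a ≤ τ → τ ≤ b → |ellFun F S n L R₀ τ| ≤ ε) {x y : ℝ}
    (hx : x ∈ Set.Icc a b) (hy : y ∈ Set.Icc a b) :
    uFun F S n L R₀ x ≤ exp (ε * |x - y|) * uFun F S n L R₀ y := by
  have h1 := Convex.norm_image_sub_le_of_norm_hasDerivWithin_le
    (f := fun x => log (uFun F S n L R₀ x)) (f' := ellFun F S n L R₀) (C := ε)
    (s := Set.Icc a b) (x := y) (y := x)
    (fun z hz => (hasDerivAt_log_uFun hF (ha.trans_le hz.1)).hasDerivWithinAt)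
    (fun z hz => h z hz.1 hz.2) (convex_Icc a b) hy hx
  simp only [Real.norm_eq_abs] at h1
  have h2 := (le_abs_self _).trans h1
  have hx0 := uFun_pos (S := S) (n := n) (L := L) (R₀ := R₀) hF (ha.trans_le hx.1)
  have hy0 := uFun_pos (S := S) (n := n) (L := L) (R₀ := R₀) hF (ha.trans_le hy.1)
  rw [← Real.log_le_log_iff hx0 (by positivity), Real.log_mul (by positivity) hy0.ne',
    Real.log_exp]
  linarith

lemma window_antitoneOn {F : Finset ℚ} {S n L R₀ : ℕ} (hF : ∀ θ ∈ F, 0 < θ) {b : ℝ} (hb : 0 < b)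
    (h : ∀ τ, b ≤ τ → ellFun F S n L R₀ τ ≤ -2 / τ) :
    AntitoneOn (fun τ => τ ^ 2 * uFun F S n L R₀ τ) (Set.Ici b) := by
  have hd : ∀ x, 0 < x → HasDerivAt (fun x => 2 * log x + log (uFun F S n L R₀ x))
      (2 * x⁻¹ + ellFun F S n L R₀ x) x := fun x hx =>
    ((Real.hasDerivAt_log hx.ne').const_mul 2).add (hasDerivAt_log_uFun hF hx)
  have hm : AntitoneOn (fun x => 2 * log x + log (uFun F S n L R₀ x)) (Set.Ici b) := by
    refine antitoneOn_of_deriv_nonpos (convex_Ici b) (fun x hx =>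
      (hd x (hb.trans_le hx)).continuousAt.continuousWithinAt) (fun x hx =>
      (hd x (hb.trans_le (interior_subset hx))).differentiableAt.differentiableWithinAt)
      fun x hx => ?_
    have hx' : b ≤ x := interior_subset hx
    rw [(hd x (hb.trans_le hx')).deriv]
    have := h x hx'
    rw [neg_div, div_eq_mul_inv] at this
    linarith
  intro x hx y hy hxy
  have hx0 : 0 < x := hb.trans_le hx
  have hy0 : 0 < y := hb.trans_le hy
  have hux := uFun_pos (S := S) (n := n) (L := L) (R₀ := R₀) hF hx0
  have huy := uFun_pos (S := S) (n := n) (L := L) (R₀ := R₀) hF hy0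
  have := hm hx hy hxy
  simp only at this ⊢
  rw [← Real.log_le_log_iff (by positivity) (by positivity), Real.log_mul (by positivity) hux.ne',
    Real.log_mul (by positivity) huy.ne', Real.log_pow, Real.log_pow]
  exact_mod_cast this

/-- Around `x₀ n` there is a window of length proportional to `n` on which `uFun` is almost
constant multiplicatively; it increases before the window, and decays at least
like `τ⁻²` after it. -/
theorem exists_window {F : Finset ℚ} (hF : ∀ θ ∈ F, 0 < θ) (hF1 : ∀ θ ∈ F, θ ≤ 1)
    (hq : 0 < F.card) {r : ℝ} (hr : 0 < r) {S : ℕ} {x₀ : ℝ} (hx₀ : 0 < x₀)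
    (h0 : lfun F.card S r x₀ = 0) {ε : ℝ} (hε : 0 < ε) (K : ℕ) :
    ∀ᶠ n : ℕ in atTop, ∀ L R₀ : ℕ, (L : ℝ) = (2 * r + 1) * n → (R₀ : ℝ) = r * n →
      ∃ a b : ℕ, a + K ≤ b ∧ 0 < a ∧ (a : ℝ) ≤ x₀ * n ∧ x₀ * n ≤ b ∧ (b : ℝ) ≤ 2 * x₀ * n ∧
        MonotoneOn (uFun F S n L R₀) (Set.Icc 0 a) ∧
        (∀ x ∈ Set.Icc (a : ℝ) b, ∀ y ∈ Set.Icc (a : ℝ) b,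
          uFun F S n L R₀ x ≤ exp (ε * |x - y|) * uFun F S n L R₀ y) ∧
        AntitoneOn (fun τ => τ ^ 2 * uFun F S n L R₀ τ) (Set.Ici b) := by
  have hq' : (0 : ℝ) < F.card := by exact_mod_cast hq
  -- on the window `[(x₀ - δ) n, (x₀ + δ) n]` the function `lfun (τ / n)` is within `ε / 2` of
  -- `lfun x₀ = 0`, and `n` is taken so large that the other errors in `ellFun` are at most `ε / 2`
  obtain ⟨δ', hδ', hcont⟩ := Metric.continuousAt_iff.mp
    (continuousAt_lfun (q := F.card) (S := S) hr hx₀) (ε / 2) (by positivity)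
  obtain ⟨δ, hδ, hδ1, hδ2⟩ : ∃ δ > 0, δ ≤ x₀ / 2 ∧ 2 * δ < δ' :=
    ⟨min (x₀ / 2) (δ' / 3), lt_min (by positivity) (by positivity), min_le_left _ _, by
      linarith [min_le_right (x₀ / 2) (δ' / 3)]⟩
  have hη : 0 < lfun F.card S r (x₀ - δ / 2) := by
    rw [← h0]
    exact lfun_strictAntiOn_x₀ hr hq' hx₀ h0 ⟨by linarith, by linarith⟩ ⟨hx₀, le_rfl⟩ (by linarith)
  set η := lfun F.card S r (x₀ - δ / 2) with hηdef
  obtain ⟨c, hc, hcle⟩ := lfun_le_neg_div hr hq' hx₀ h0 (show x₀ < x₀ + δ / 2 by linarith)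
  filter_upwards [eventually_le_mul hδ (K + 2), eventually_le_mul hδ 4, eventually_gt_atTop 0,
    eventually_le_mul (show 0 < ε * x₀ / 4 by positivity) (1 + F.card),
    eventually_le_mul (show 0 < ε * r / 2 by positivity) (2 * S),
    eventually_le_mul (show 0 < η * r by positivity) (2 * S),
    eventually_le_mul hc (3 + F.card)] with n hn1 hn2 hn3 hn4 hn5 hn6 hn7
  intro L R₀ hL hR
  have hn : (0 : ℝ) < n := by exact_mod_cast hn3
  have ha1 := Nat.le_ceil ((x₀ - δ) * n)
  have ha2 := Nat.ceil_lt_add_one (show 0 ≤ (x₀ - δ) * n from mul_nonneg (by linarith) hn.le)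
  have hb1 := Nat.floor_le (show 0 ≤ (x₀ + δ) * n by positivity)
  have hb2 := Nat.lt_floor_add_one ((x₀ + δ) * n)
  set a := ⌈(x₀ - δ) * n⌉₊
  set b := ⌊(x₀ + δ) * n⌋₊
  clear_value a b
  rw [sub_mul] at ha1 ha2
  rw [add_mul] at hb1 hb2
  have hxn : δ * n ≤ x₀ / 2 * n := mul_le_mul_of_nonneg_right hδ1 hn.le
  rw [div_mul_eq_mul_div] at hxn
  have hxn0 : 0 < x₀ * n := by positivity
  have hK : (0 : ℝ) ≤ K := by positivity
  have ha0 : (0 : ℝ) < a := by linarith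
  refine ⟨a, b, ?_, by exact_mod_cast ha0, by linarith, by linarith, by linarith, ?_, ?_, ?_⟩
  · have : (a : ℝ) + K < b + 1 := by linarith
    have : a + K < b + 1 := by exact_mod_cast this
    omega
  · refine window_monotoneOn hF fun τ hτ hτa => ?_
    refine le_trans ?_ (le_ellFun hF hF1 hr hn3 hL hR hτ)
    have h1 : (τ + 1) / n ≤ x₀ - δ / 2 := by
      rw [div_le_iff₀ hn, sub_mul, div_mul_eq_mul_div]; linarith
    have h2 : η ≤ lfun F.card S r ((τ + 1) / n) :=
      (lfun_strictAntiOn_x₀ hr hq' hx₀ h0).antitoneOn ⟨by positivity, by linarith⟩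
        ⟨by linarith, by linarith⟩ h1
    have h3 : 2 * S / (r * n) ≤ η := by
      rw [div_le_iff₀ (by positivity)]; linarith
    linarith
  · intro x hx y hy
    refine window_le_exp hF ha0 (fun τ hτa hτb => ?_) hx hy
    have hτ : 0 < τ := ha0.trans_le hτa
    have hcl : ∀ x, |x - x₀| < δ' → |lfun F.card S r x| < ε / 2 := fun x hx => by
      have := hcont (show dist x x₀ < δ' from hx)
      rwa [Real.dist_eq, h0, sub_zero] at this
    have h1 := hcl (τ / n) (by
      have h1 : x₀ - δ ≤ τ / n := by rw [le_div_iff₀ hn, sub_mul]; linarith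
      have h2 : τ / n ≤ x₀ + δ := by rw [div_le_iff₀ hn, add_mul]; linarith
      rw [abs_lt]; constructor <;> linarith)
    have h2 := hcl ((τ + 1) / n) (by
      have h1 : x₀ - δ ≤ (τ + 1) / n := by rw [le_div_iff₀ hn, sub_mul]; linarith
      have h2 : (τ + 1) / n ≤ x₀ + δ + δ := by rw [div_le_iff₀ hn, add_mul, add_mul]; linarith
      rw [abs_lt]; constructor <;> linarith)
    rw [abs_lt] at h1 h2
    have h3 := ellFun_le (S := S) hF hr hn3 hL hR hτ
    have h4 := le_ellFun (S := S) hF hF1 hr hn3 hL hR hτ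
    have h5 : (1 + (F.card : ℝ)) / τ ≤ ε / 2 := by
      rw [div_le_iff₀ hτ]
      have : ε / 2 * (x₀ * n / 2) ≤ ε / 2 * τ := mul_le_mul_of_nonneg_left (by linarith) (by positivity)
      linarith
    have h6 : 2 * S / (r * n) ≤ ε / 2 := by
      rw [div_le_iff₀ (by positivity)]; linarith
    rw [abs_le]; constructor <;> linarith
  · refine window_antitoneOn hF (by linarith) fun τ hτ => ?_
    have hτ0 : 0 < τ := lt_of_lt_of_le (by linarith) hτ
    refine (ellFun_le (S := S) hF hr hn3 hL hR hτ0).trans ?_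
    have h1 := hcle (τ / n) (by rw [le_div_iff₀ hn, add_mul, div_mul_eq_mul_div]; linarith)
    have h2 : -c / (τ / n) = -(c * n) / τ := by field_simp
    rw [h2] at h1
    calc _ ≤ -(c * n) / τ + (1 + F.card) / τ := by linarith
      _ = (-(c * n) + (1 + F.card)) / τ := by ring
      _ ≤ -2 / τ := by
        apply div_le_div_of_nonneg_right _ hτ0.le
        linarith

/-! ### Equidistribution over residue classes -/

lemma summable_one_div_succ_sq : Summable fun k : ℕ => 1 / ((k : ℝ) + 1) ^ 2 := by
  have := (summable_nat_add_iff 1).mpr (Real.summable_one_div_nat_pow.mpr (show 1 < 2 by norm_num))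
  simpa using this

section
variable {u : ℝ → ℝ} {a b K : ℕ}

/-- A multiple of `τ ^ (-2)` dominates `u` on all of `(0, ∞)`; the constant involves a single value
`u c` in the window and the variation of `u` across the window. -/
lemma le_div_sq (hu : ∀ x, 0 ≤ x → 0 ≤ u x) (hab : a + K ≤ b) (ha : 0 < a)
    (h1 : MonotoneOn u (Set.Icc 0 a))
    (h2 : ∀ x ∈ Set.Icc (a : ℝ) b, ∀ y ∈ Set.Icc (a : ℝ) b, u x ≤ exp (1 / K * |x - y|) * u y)
    (h3 : AntitoneOn (fun τ => τ ^ 2 * u τ) (Set.Ici b)) {c : ℝ} (hc : c ∈ Set.Icc (a : ℝ) b)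
    {τ : ℝ} (hτ : 0 < τ) :
    u τ ≤ exp (1 / K * (b - a)) * u c * b ^ 2 * (1 / τ ^ 2) := by
  have ha' : (0 : ℝ) < a := by exact_mod_cast ha
  have hab' : (a : ℝ) ≤ b := by exact_mod_cast (by omega : a ≤ b)
  have hb' : (0 : ℝ) < b := by linarith
  have huc := hu c (ha'.le.trans hc.1)
  have key : ∀ x ∈ Set.Icc (a : ℝ) b, u x ≤ exp (1 / K * (b - a)) * u c := fun x hx => by
    refine (h2 x hx c hc).trans (mul_le_mul_of_nonneg_right (Real.exp_le_exp.mpr ?_) huc)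
    refine mul_le_mul_of_nonneg_left ?_ (by positivity)
    rw [abs_le]; constructor <;> linarith [hx.1, hx.2, hc.1, hc.2]
  have hE : 0 ≤ exp (1 / K * (b - a)) * u c := by positivity
  have h0 : ∀ x, x ≤ (b : ℝ) → 0 < x → exp (1 / K * (b - a)) * u c ≤
      exp (1 / K * (b - a)) * u c * b ^ 2 * (1 / x ^ 2) := fun x hx hx0 => by
    rw [mul_assoc]
    refine le_mul_of_one_le_right hE ?_
    rw [mul_one_div, one_le_div (by positivity)]
    exact pow_le_pow_left₀ hx0.le hx 2
  rcases le_total τ a with h | h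
  · refine le_trans ?_ (h0 τ (by linarith) hτ)
    exact (h1 ⟨hτ.le, h⟩ ⟨ha'.le, le_rfl⟩ h).trans (key a ⟨le_rfl, hab'⟩)
  rcases le_total τ b with h' | h'
  · exact (key τ ⟨h, h'⟩).trans (h0 τ h' hτ)
  · have := h3 (Set.mem_Ici.mpr le_rfl) (Set.mem_Ici.mpr h') h'
    simp only at this
    rw [mul_one_div, le_div_iff₀ (by positivity)]
    have hkb := mul_le_mul_of_nonneg_left (key b ⟨hab', le_rfl⟩) (show (0 : ℝ) ≤ b ^ 2 by positivity)
    nlinarith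

lemma summable_shift (hu : ∀ x, 0 ≤ x → 0 ≤ u x) (hab : a + K ≤ b) (ha : 0 < a)
    (h1 : MonotoneOn u (Set.Icc 0 a))
    (h2 : ∀ x ∈ Set.Icc (a : ℝ) b, ∀ y ∈ Set.Icc (a : ℝ) b, u x ≤ exp (1 / K * |x - y|) * u y)
    (h3 : AntitoneOn (fun τ => τ ^ 2 * u τ) (Set.Ici b)) {θ : ℝ} (hθ : 0 < θ) (hθ1 : θ ≤ 1) :
    Summable fun k : ℕ => u (k + θ) := by
  have hc : (a : ℝ) ∈ Set.Icc (a : ℝ) b := ⟨le_rfl, by exact_mod_cast (by omega : a ≤ b)⟩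
  have huc := hu a (by positivity)
  refine Summable.of_nonneg_of_le (fun k => hu _ (by positivity)) (fun k => ?_)
    (summable_one_div_succ_sq.mul_left (exp (1 / K * (b - a)) * u a * b ^ 2 * (1 / θ ^ 2)))
  refine (le_div_sq hu hab ha h1 h2 h3 hc (show 0 < (k : ℝ) + θ by positivity)).trans ?_
  rw [mul_assoc _ (1 / θ ^ 2)]
  refine mul_le_mul_of_nonneg_left ?_ (by positivity)
  rw [one_div_mul_one_div]
  apply one_div_le_one_div_of_le (by positivity)
  rw [← mul_pow]
  refine pow_le_pow_left₀ (by positivity) ?_ 2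
  have : (0 : ℝ) ≤ k := by positivity
  nlinarith

/-- An upper bound for the sum in terms of a single value inside the window. -/
lemma tsum_succ_le (hu : ∀ x, 0 ≤ x → 0 ≤ u x) (hab : a + K ≤ b) (ha : 0 < a)
    (h1 : MonotoneOn u (Set.Icc 0 a))
    (h2 : ∀ x ∈ Set.Icc (a : ℝ) b, ∀ y ∈ Set.Icc (a : ℝ) b, u x ≤ exp (1 / K * |x - y|) * u y)
    (h3 : AntitoneOn (fun τ => τ ^ 2 * u τ) (Set.Ici b)) {c : ℝ} (hc : c ∈ Set.Icc (a : ℝ) b) :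
    ∑' k : ℕ, u (k + 1) ≤ exp (1 / K * (b - a)) * u c * b ^ 2 *
      ∑' k : ℕ, 1 / ((k : ℝ) + 1) ^ 2 := by
  rw [← tsum_mul_left]
  exact (summable_shift hu hab ha h1 h2 h3 one_pos le_rfl).tsum_le_tsum
    (fun k => le_div_sq hu hab ha h1 h2 h3 hc (by positivity)) (summable_one_div_succ_sq.mul_left _)

/-- A value that is at most `e` times each of `K` consecutive terms is at most `e / K` times the
sum. -/
lemma mul_le_tsum (hu : ∀ x, 0 ≤ x → 0 ≤ u x) (hs : Summable fun k : ℕ => u (k + 1)) (j : ℕ)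
    {v : ℝ} (h : ∀ i < K, v ≤ exp 1 * u (j + i + 1)) :
    K * v ≤ exp 1 * ∑' k : ℕ, u (k + 1) := by
  have h1 : K * v ≤ ∑ i ∈ range K, exp 1 * u (j + i + 1) := by
    have := card_nsmul_le_sum (range K) (fun i : ℕ => exp 1 * u (j + i + 1)) v
      (fun i hi => h i (mem_range.mp hi))
    simpa using this
  rw [← mul_sum] at h1
  refine h1.trans (mul_le_mul_of_nonneg_left ?_ (by positivity))
  have h2 : ∑ i ∈ range K, u (j + i + 1) = ∑ k ∈ (range K).image (fun i => j + i), u (k + 1) := by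
    rw [sum_image (fun x _ y _ h => by simpa using h)]
    push_cast; rfl
  rw [h2]
  exact hs.sum_le_tsum _ fun k _ => hu _ (by positivity)

set_option maxHeartbeats 800000 in
/-- The sums of `u` over the translates `ℕ + θ` are nearly independent of `θ`: outside the window
the differences telescope to the boundary values, which are dominated by their `K` neighbours. -/
theorem window_compare (hu : ∀ x, 0 ≤ x → 0 ≤ u x) (hK : 0 < K) (hab : a + K ≤ b) (ha : 0 < a)
    (h1 : MonotoneOn u (Set.Icc 0 a))
    (h2 : ∀ x ∈ Set.Icc (a : ℝ) b, ∀ y ∈ Set.Icc (a : ℝ) b, u x ≤ exp (1 / K * |x - y|) * u y)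
    (h3 : AntitoneOn (fun τ => τ ^ 2 * u τ) (Set.Ici b)) {θ : ℝ} (hθ : 0 < θ) (hθ1 : θ ≤ 1) :
    |∑' k : ℕ, u (k + θ) - ∑' k : ℕ, u (k + 1)| ≤ 8 / K * ∑' k : ℕ, u (k + 1) := by
  have ha' : (0 : ℝ) < a := by exact_mod_cast ha
  have hK' : (0 : ℝ) < K := by exact_mod_cast hK
  have hab' : (a : ℝ) + K ≤ b := by exact_mod_cast hab
  have hb' : (0 : ℝ) < b := by linarith
  have hsθ := summable_shift hu hab ha h1 h2 h3 hθ hθ1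
  have hs1 := summable_shift hu hab ha h1 h2 h3 one_pos le_rfl
  set S₁ := ∑' k : ℕ, u (k + 1) with hS₁
  have hS₁0 : 0 ≤ S₁ := tsum_nonneg fun k => hu _ (by positivity)
  have hA : K * u a ≤ exp 1 * S₁ := by
    refine mul_le_tsum hu hs1 a fun i hi => ?_
    have hi' : (i : ℝ) + 1 ≤ K := by exact_mod_cast hi
    have hi0 : (0 : ℝ) ≤ i := by positivity
    refine (h2 a ⟨le_rfl, by linarith⟩ (a + i + 1) ⟨by linarith, by linarith⟩).trans
      (mul_le_mul_of_nonneg_right (Real.exp_le_exp.mpr ?_) (hu _ (by positivity)))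
    rw [one_div_mul_eq_div, div_le_one hK', abs_le]
    constructor <;> linarith
  have hB : K * u b ≤ exp 1 * S₁ := by
    refine mul_le_tsum hu hs1 (b - K) fun i hi => ?_
    have hi' : (i : ℝ) + 1 ≤ K := by exact_mod_cast hi
    have hi0 : (0 : ℝ) ≤ i := by positivity
    rw [Nat.cast_sub (by omega)]
    refine (h2 b ⟨by linarith, le_rfl⟩ (b - K + i + 1) ⟨by linarith, by linarith⟩).trans
      (mul_le_mul_of_nonneg_right (Real.exp_le_exp.mpr ?_) (hu _ (by linarith)))
    rw [one_div_mul_eq_div, div_le_one hK', abs_le]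
    constructor <;> linarith
  have hexp : exp (1 / K) - 1 ≤ 2 * (1 / K) := by
    have hle : |(1 / K : ℝ)| ≤ 1 := by
      rw [abs_of_pos (by positivity), div_le_one hK']
      exact_mod_cast hK
    have := Real.abs_exp_sub_one_le hle
    rw [abs_of_pos (show (0 : ℝ) < 1 / K by positivity)] at this
    exact (le_abs_self _).trans this
  have hanti : ∀ x y : ℝ, (b : ℝ) ≤ x → x ≤ y → u y ≤ u x := fun x y hx hxy => by
    have := h3 (Set.mem_Ici.mpr hx) (Set.mem_Ici.mpr (hx.trans hxy)) hxy
    simp only at this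
    have hx0 : 0 < x := hb'.trans_le hx
    have h4 : x ^ 2 * u y ≤ y ^ 2 * u y :=
      mul_le_mul_of_nonneg_right (pow_le_pow_left₀ hx0.le hxy 2) (hu _ (hx0.le.trans hxy))
    exact le_of_mul_le_mul_left (h4.trans this) (by positivity)
  obtain ⟨w, rfl⟩ : ∃ w, b = a + w := ⟨b - a, by omega⟩
  have hpart : ∀ M, ∑ k ∈ range M, |u (k + θ) - u (k + 1)| ≤
      u a + u (a + w : ℕ) + (exp (1 / K) - 1) * S₁ := by
    intro M
    have hle : ∑ k ∈ range M, |u (k + θ) - u (k + 1)| ≤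
        ∑ k ∈ range (a + w + M), |u (k + θ) - u (k + 1)| :=
      sum_le_sum_of_subset_of_nonneg (range_mono (by omega)) fun _ _ _ => abs_nonneg _
    refine hle.trans ?_
    rw [sum_range_add, sum_range_add]
    -- below the window `u` increases, so that the differences telescope
    have e1 : ∑ k ∈ range a, |u (k + θ) - u (k + 1)| ≤ u a := by
      calc _ ≤ ∑ k ∈ range a, (u ((k + 1 : ℕ) : ℝ) - u (k : ℝ)) := by
            refine sum_le_sum fun k hk => ?_
            have hk' : (k : ℝ) + 1 ≤ a := by exact_mod_cast mem_range.mp hk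
            have hk0 : (0 : ℝ) ≤ k := by positivity
            have m1 := h1 ⟨hk0, by linarith⟩ ⟨by positivity, by linarith⟩
              (show (k : ℝ) ≤ k + θ by linarith)
            have m2 := h1 (show (k : ℝ) + θ ∈ Set.Icc (0 : ℝ) a from ⟨by positivity, by linarith⟩)
              ⟨by positivity, hk'⟩ (show (k : ℝ) + θ ≤ k + 1 by linarith)
            push_cast
            rw [abs_le]; constructor <;> linarith
        _ = u a - u 0 := by rw [sum_range_sub (fun k : ℕ => u k)]; simp
        _ ≤ u a := by linarith [hu 0 le_rfl]
    -- inside the window neighbouring terms differ by a factor at most `exp (1 / K)`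
    have e2 : ∑ k ∈ range w, |u ((a + k : ℕ) + θ) - u ((a + k : ℕ) + 1)| ≤
        (exp (1 / K) - 1) * S₁ := by
      have e3 : ∀ k ∈ range w, |u ((a + k : ℕ) + θ) - u ((a + k : ℕ) + 1)| ≤
          (exp (1 / K) - 1) * u ((a + k : ℕ) + 1) := fun k hk => by
        have hk' : (k : ℝ) + 1 ≤ w := by exact_mod_cast mem_range.mp hk
        have hk0 : (0 : ℝ) ≤ k := by positivity
        have hx : ((a + k : ℕ) : ℝ) + θ ∈ Set.Icc (a : ℝ) (a + w : ℕ) := by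
          push_cast; constructor <;> linarith
        have hy : ((a + k : ℕ) : ℝ) + 1 ∈ Set.Icc (a : ℝ) (a + w : ℕ) := by
          push_cast; constructor <;> linarith
        have hE : exp (1 / K * |((a + k : ℕ) : ℝ) + θ - (((a + k : ℕ) : ℝ) + 1)|) ≤
            exp (1 / K) := by
          rw [Real.exp_le_exp]
          refine mul_le_of_le_one_right (by positivity) ?_
          rw [abs_le]; constructor <;> linarith
        have g1 := (h2 _ hx _ hy).trans
          (mul_le_mul_of_nonneg_right hE (hu _ (ha'.le.trans hy.1)))
        rw [abs_sub_comm] at hE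
        have g2 := (h2 _ hy _ hx).trans
          (mul_le_mul_of_nonneg_right hE (hu _ (ha'.le.trans hx.1)))
        have hex : 1 ≤ exp (1 / (K : ℝ)) := Real.one_le_exp (by positivity)
        have hux := hu _ (ha'.le.trans hx.1)
        have huy := hu _ (ha'.le.trans hy.1)
        rw [abs_le]
        constructor
        · rcases le_total (u ((a + k : ℕ) + θ)) (u ((a + k : ℕ) + 1)) with h | h
          · linarith [mul_le_mul_of_nonneg_left h (sub_nonneg.mpr hex)]
          · linarith [mul_nonneg (sub_nonneg.mpr hex) huy]
        · linarith
      refine (sum_le_sum e3).trans ?_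
      rw [← mul_sum]
      refine mul_le_mul_of_nonneg_left ?_ (by linarith [Real.one_le_exp (show (0 : ℝ) ≤ 1 / K by positivity)])
      have h2 : ∑ i ∈ range w, u ((a + i : ℕ) + 1) =
          ∑ k ∈ (range w).image (fun i => a + i), u (k + 1) := by
        rw [sum_image (fun x _ y _ h => by simpa using h)]
      rw [h2]
      exact hs1.sum_le_tsum _ fun k _ => hu _ (by positivity)
    -- above the window `u` decreases, and the differences telescope again
    have e4 : ∑ k ∈ range M, |u ((a + w + k : ℕ) + θ) - u ((a + w + k : ℕ) + 1)| ≤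
        u (a + w : ℕ) := by
      calc _ ≤ ∑ k ∈ range M, (u ((a + w + k : ℕ) : ℝ) - u ((a + w + (k + 1) : ℕ) : ℝ)) := by
            refine sum_le_sum fun k hk => ?_
            have hk0 : (0 : ℝ) ≤ k := by positivity
            have m1 := hanti ((a + w + k : ℕ) : ℝ) ((a + w + k : ℕ) + θ)
              (by push_cast; linarith) (by linarith)
            have m2 := hanti (((a + w + k : ℕ) : ℝ) + θ) ((a + w + k : ℕ) + 1)
              (by push_cast; linarith) (by linarith)
            have e5 : ((a + w + (k + 1) : ℕ) : ℝ) = ((a + w + k : ℕ) : ℝ) + 1 := by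
              push_cast; ring
            rw [e5, abs_le]; constructor <;> linarith
        _ = u (a + w : ℕ) - u (a + w + M : ℕ) := by
            rw [sum_range_sub' (fun k : ℕ => u (a + w + k : ℕ))]; simp
        _ ≤ u (a + w : ℕ) := by linarith [hu (a + w + M : ℕ) (by positivity)]
    linarith
  have habs := Summable.abs (hsθ.sub hs1)
  rw [hS₁, ← hsθ.tsum_sub hs1]
  refine (norm_tsum_le_tsum_norm (f := fun k : ℕ => u (k + θ) - u (k + 1)) habs).trans ?_
  simp only [Real.norm_eq_abs]
  refine (habs.tsum_le_of_sum_range_le hpart).trans ?_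
  have hd : 8 / K * S₁ = (8 * S₁) / K := by ring
  rw [hd, le_div_iff₀ hK']
  have he : exp 1 < 2.72 := by have := Real.exp_one_lt_d9; linarith
  have h5 : (exp (1 / K) - 1) * S₁ * K ≤ 2 * S₁ := by
    have := mul_le_mul_of_nonneg_right hexp (mul_nonneg hS₁0 hK'.le)
    calc _ = (exp (1 / K) - 1) * (S₁ * K) := by ring
      _ ≤ 2 * (1 / K) * (S₁ * K) := this
      _ = 2 * S₁ := by field_simp
  nlinarith
end

/-- A sum over `ℕ/b` splits into `b` sums over translates of `ℕ`. -/
lemma abs_tsum_div_sub_le {u : ℝ → ℝ} {b : ℕ} (hb : 0 < b) {A c : ℝ}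
    (hs : Summable fun k : ℕ => u ((k + 1) / b))
    (h : ∀ θ : ℝ, 0 < θ → θ ≤ 1 → |∑' k : ℕ, u (k + θ) - A| ≤ c) :
    |∑' k : ℕ, u ((k + 1) / b) - b * A| ≤ b * c := by
  have : NeZero b := ⟨hb.ne'⟩
  have hb' : (0 : ℝ) < b := by exact_mod_cast hb
  rw [Nat.sumByResidueClasses hs b]
  have e : (b : ℝ) * A = ∑ _j : ZMod b, A := by simp [ZMod.card]
  have e' : (b : ℝ) * c = ∑ _j : ZMod b, c := by simp [ZMod.card]
  rw [e, e', ← sum_sub_distrib]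
  refine (abs_sum_le_sum_abs _ _).trans (sum_le_sum fun j _ => ?_)
  have hj : ((j.val : ℝ) + 1) ≤ b := by exact_mod_cast ZMod.val_lt j
  have := h (((j.val : ℝ) + 1) / b) (by positivity) (by rwa [div_le_one hb'])
  have e3 : ∀ m : ℕ, (((j.val + b * m : ℕ) : ℝ) + 1) / b = m + ((j.val : ℝ) + 1) / b := fun m => by
    push_cast
    field_simp
    ring
  simp only [e3]
  exact this

/-! ### Logarithmic size of the auxiliary function and its constant -/

lemma log_le_mul_log_sub {y : ℝ} (hy : 0 < y) :
    log y ≤ ((y + 1) * log (y + 1) - (y + 1)) - (y * log y - y) := by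
  have h := inv_le_log_sub hy
  rw [div_le_iff₀ (by positivity)] at h
  linarith

lemma mul_log_sub_le_log {y : ℝ} (hy : 0 < y) :
    ((y + 1) * log (y + 1) - (y + 1)) - (y * log y - y) ≤ log (y + 1) := by
  have h := log_sub_le_inv hy one_pos
  rw [le_div_iff₀ hy] at h
  linarith

lemma sum_log_le {y : ℝ} (hy : 0 < y) (m : ℕ) :
    ∑ j ∈ range m, log (y + j) ≤ ((y + m) * log (y + m) - (y + m)) - (y * log y - y) := by
  induction m with
  | zero => simp
  | succ m ih =>
    rw [sum_range_succ]
    have := log_le_mul_log_sub (show 0 < y + m by positivity)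
    push_cast
    rw [← add_assoc]
    linarith

lemma le_sum_log {y : ℝ} (hy : 1 ≤ y) (m : ℕ) :
    ((y + m) * log (y + m) - (y + m)) - (y * log y - y) ≤ ∑ j ∈ range (m + 1), log (y + j) := by
  induction m with
  | zero => simpa using Real.log_nonneg hy
  | succ m ih =>
    rw [sum_range_succ]
    have := mul_log_sub_le_log (show 0 < y + m by positivity)
    push_cast
    rw [← add_assoc]
    linarith

lemma log_factorial_le (n : ℕ) :
    log (n.factorial : ℝ) ≤ n * log n - n + log n + 1 := by
  induction n with
  | zero => simp
  | succ n ih =>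
    rw [Nat.factorial_succ]
    push_cast
    rw [Real.log_mul (by positivity) (by positivity)]
    rcases Nat.eq_zero_or_pos n with rfl | hn
    · simp
    · have := log_le_mul_log_sub (show 0 < (n : ℝ) by exact_mod_cast hn)
      linarith

lemma le_log_factorial (n : ℕ) :
    n * log n - n ≤ log (n.factorial : ℝ) := by
  induction n with
  | zero => simp
  | succ n ih =>
    rw [Nat.factorial_succ]
    push_cast
    rw [Real.log_mul (by positivity) (by positivity)]
    rcases Nat.eq_zero_or_pos n with rfl | hn
    · simp
    · have := mul_log_sub_le_log (show 0 < (n : ℝ) by exact_mod_cast hn)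
      linarith

/-- An upper bound of Stirling type, comparing the sums of logarithms with integrals of `log`; the
error is only `O(log τ + log (τ + L + 1))`. -/
lemma log_uFun_le {F : Finset ℚ} (hF : ∀ θ ∈ F, 0 < θ) (hF1 : ∀ θ ∈ F, θ ≤ 1) {S n L R₀ : ℕ}
    {τ : ℝ} (hτ : 1 ≤ τ) :
    log (uFun F S n L R₀ τ) ≤ log τ +
      F.card * (((τ + L) * log (τ + L) - (τ + L)) - (τ * log τ - τ) + log (τ + L + 1)) -
      S * (((R₀ + τ + n) * log (R₀ + τ + n) - (R₀ + τ + n)) -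
        ((R₀ + τ) * log (R₀ + τ) - (R₀ + τ))) := by
  have hτ0 : 0 < τ := by linarith
  rw [log_uFun hF hτ0]
  have h1 : ∑ θ ∈ F, ∑ j ∈ range L, log (τ + j + θ) ≤
      F.card * (((τ + L) * log (τ + L) - (τ + L)) - (τ * log τ - τ) + log (τ + L + 1)) := by
    rw [← nsmul_eq_mul]
    refine sum_le_card_nsmul _ _ _ fun θ hθ => ?_
    have h0 : (0 : ℝ) < θ := by exact_mod_cast hF θ hθ
    have h1 : (θ : ℝ) ≤ 1 := by exact_mod_cast hF1 θ hθ
    have h2 : ∑ j ∈ range L, log (τ + j + θ) ≤ ∑ j ∈ range L, log (τ + 1 + j) :=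
      sum_le_sum fun j _ => Real.log_le_log (by positivity) (by linarith)
    have h3 := sum_log_le (show 0 < τ + 1 by positivity) L
    have h4 := mul_log_sub_le_log (show 0 < τ + L by positivity)
    have h5 := log_le_mul_log_sub hτ0
    have h6 := Real.log_nonneg hτ
    rw [show τ + 1 + (L : ℝ) = τ + L + 1 by ring] at h3
    linarith
  have h2 : ((R₀ + τ + n) * log (R₀ + τ + n) - (R₀ + τ + n)) -
        ((R₀ + τ) * log (R₀ + τ) - (R₀ + τ)) ≤ ∑ j ∈ range (n + 1), log ((R₀ : ℝ) + τ + j) :=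
    le_sum_log (by have : (0 : ℝ) ≤ R₀ := by positivity
                   linarith) n
  have h3 := mul_le_mul_of_nonneg_left h2 (show (0 : ℝ) ≤ S by positivity)
  linarith

/-- The class of zeros attached to `θ` only depends on the denominator `b` of `θ`, and there are `φ(b)`
such `θ`. Rounding down the exponents in `clearFactor` only makes the product smaller. -/
lemma clearFactor_pow_le {Psi : Finset ℕ} (hpos : ∀ b ∈ Psi, 0 < b) {r : ℚ} {M N n : ℕ}
    (h : ((M * N : ℕ) : ℝ) = (2 * r + 1) * n) :
    ∏ θ ∈ zeroSet Psi, (clearFactor θ.den N : ℝ) ^ M ≤ A1 Psi r ^ n * A2 Psi r ^ n := by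
  have := prod_zeroSet hpos (fun b => (clearFactor b N : ℝ) ^ M)
  rw [this, A1, A2, ← prod_pow, ← prod_pow, ← prod_mul_distrib]
  refine prod_le_prod (fun b _ => by positivity) fun b hb => ?_
  have hb0 : (0 : ℝ) ≤ b := by positivity
  rw [← Real.rpow_mul_natCast hb0, ← prod_pow]
  have e1 : (2 * (r : ℝ) + 1) * (Nat.totient b : ℝ) * n = ((M * N * Nat.totient b : ℕ) : ℝ) := by
    rw [mul_right_comm, ← h]; push_cast; ring
  rw [e1, Real.rpow_natCast]
  unfold clearFactor
  push_cast
  rw [mul_pow, mul_pow, ← pow_mul, ← pow_mul, mul_left_comm N M, ← mul_assoc M N,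
    ← prod_pow, ← prod_pow]
  refine mul_le_mul_of_nonneg_left (prod_le_prod (fun p _ => by positivity) fun p hp => ?_)
    (by positivity)
  have hp' := Nat.prime_of_mem_primeFactors hp
  have hp1 : (1 : ℝ) ≤ p := by exact_mod_cast hp'.one_lt.le
  have hp2 : (0 : ℝ) < (p : ℝ) - 1 := by
    have : (1 : ℝ) < p := by exact_mod_cast hp'.one_lt
    linarith
  rw [← Real.rpow_mul_natCast (by linarith), ← pow_mul, ← pow_mul, ← Real.rpow_natCast]
  refine Real.rpow_le_rpow_of_exponent_le hp1 ?_
  rw [div_mul_eq_mul_div, e1, le_div_iff₀ hp2]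
  have h3 : (N / (p - 1)) * (p - 1) ≤ N := Nat.div_mul_le_self _ _
  have h4 : (((p - 1 : ℕ)) : ℝ) = (p : ℝ) - 1 := by
    rw [Nat.cast_sub hp'.one_lt.le, Nat.cast_one]
  rw [← h4]
  have h5 : N / (p - 1) * (M * Nat.totient b) * (p - 1) ≤ M * N * Nat.totient b := by
    calc _ = (N / (p - 1) * (p - 1)) * (M * Nat.totient b) := by ring
      _ ≤ N * (M * Nat.totient b) := Nat.mul_le_mul_right _ h3
      _ = _ := by ring
  exact_mod_cast h5

lemma A1_pos {Psi : Finset ℕ} (hpos : ∀ b ∈ Psi, 0 < b) (r : ℚ) : 0 < A1 Psi r :=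
  prod_pos fun b hb => Real.rpow_pos_of_pos (by exact_mod_cast hpos b hb) _

lemma A2_pos (Psi : Finset ℕ) (r : ℚ) : 0 < A2 Psi r :=
  prod_pos fun _ _ => prod_pos fun _ hp => Real.rpow_pos_of_pos
    (by exact_mod_cast (Nat.prime_of_mem_primeFactors hp).pos) _

lemma clearFactor_pos {b : ℕ} (hb : 0 < b) (N : ℕ) : 0 < clearFactor b N :=
  Nat.mul_pos (pow_pos hb N) (prod_pos fun _ hp =>
    pow_pos (Nat.prime_of_mem_primeFactors hp).pos _)

lemma uConst_pos (F : Finset ℚ) (S num den N : ℕ) : 0 < uConst F S num den N := by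
  unfold uConst
  refine div_pos (mul_pos (prod_pos fun θ _ => pow_pos ?_ _) (by positivity)) (by positivity)
  exact_mod_cast clearFactor_pos θ.den_pos N

lemma log_ff {Psi : Finset ℕ} {r : ℚ} (hr : 0 < r) {s : ℕ} {x : ℝ} (hx : 0 < x) :
    log (ff Psi r s x) = lfun (zeroSet Psi).card (s + 1 : ℕ) r x := by
  have hr' : (0 : ℝ) < r := by exact_mod_cast hr
  unfold ff lfun
  rw [Real.log_mul (by positivity) (by positivity), Real.log_pow, Real.log_pow,
    Real.log_div (by positivity) (by positivity), Real.log_div (by positivity) (by positivity)]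

lemma gg_pos {Psi : Finset ℕ} (hpos : ∀ b ∈ Psi, 0 < b) {r : ℚ} (hr : 0 < r) (s : ℕ)
    {x : ℝ} (hx : 0 < x) : 0 < gg Psi r s x := by
  have hr' : (0 : ℝ) < r := by exact_mod_cast hr
  have h1 := A1_pos hpos r
  have h2 := A2_pos Psi r
  have h3 : (0 : ℝ) < r.den := by exact_mod_cast r.den_pos
  unfold gg
  positivity

lemma log_gg {Psi : Finset ℕ} (hpos : ∀ b ∈ Psi, 0 < b) {r : ℚ} (hr : 0 < r) {s : ℕ}
    {x : ℝ} (hx : 0 < x) :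
    log (gg Psi r s x) = log (A1 Psi r * A2 Psi r) +
      (2 * r + 1) * (zeroSet Psi).card * (log r.den + log (x + 2 * r + 1)) +
      (s + 1 : ℕ) * (r * log (x + r) - (r + 1) * log (x + r + 1)) := by
  have hr' : (0 : ℝ) < r := by exact_mod_cast hr
  have h1 := A1_pos hpos r
  have h2 := A2_pos Psi r
  have h3 : (0 : ℝ) < r.den := by exact_mod_cast r.den_pos
  unfold gg
  rw [Real.log_mul (by positivity) (by positivity), Real.log_mul (by positivity) (by positivity),
    Real.log_mul (by positivity) (by positivity), Real.log_pow,
    Real.log_div (by positivity) (by positivity), Real.log_rpow (by positivity),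
    Real.log_rpow (by positivity), Real.log_rpow (by positivity), Real.log_rpow (by positivity)]
  ring

lemma log_uConst_le {Psi : Finset ℕ} (hpos : ∀ b ∈ Psi, 0 < b) {r : ℚ} {S num den N : ℕ}
    (h : (((2 * num + den) * N : ℕ) : ℝ) = (2 * r + 1) * (den * N : ℕ)) :
    log (uConst (zeroSet Psi) S num den N) ≤ (den * N : ℕ) * log (A1 Psi r * A2 Psi r) +
      S * ((den * N : ℕ) * log (den * N : ℕ) - (den * N : ℕ) + log (den * N : ℕ) + 1) -
      (zeroSet Psi).card * ((2 * r + 1) * (den * N : ℕ) * log N - (2 * r + 1) * (den * N : ℕ)) := by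
  have h1 := A1_pos hpos r
  have h2 := A2_pos Psi r
  have hP : (0 : ℝ) < ∏ θ ∈ zeroSet Psi, (clearFactor θ.den N : ℝ) ^ (2 * num + den) :=
    prod_pos fun θ _ => pow_pos (by exact_mod_cast clearFactor_pos θ.den_pos N) _
  unfold uConst
  rw [Real.log_div (by positivity) (by positivity), Real.log_mul hP.ne' (by positivity),
    Real.log_pow, Real.log_pow]
  have e1 : log (∏ θ ∈ zeroSet Psi, (clearFactor θ.den N : ℝ) ^ (2 * num + den)) ≤
      (den * N : ℕ) * log (A1 Psi r * A2 Psi r) := by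
    rw [← Real.log_pow, mul_pow]
    exact Real.log_le_log hP (clearFactor_pow_le hpos h)
  have e2 := mul_le_mul_of_nonneg_left (log_factorial_le (den * N)) (show (0 : ℝ) ≤ S by positivity)
  have e3 := mul_le_mul_of_nonneg_left (le_log_factorial N)
    (show (0 : ℝ) ≤ ((2 * num + den) * (zeroSet Psi).card : ℕ) by positivity)
  have e4 : (((2 * num + den) * (zeroSet Psi).card : ℕ) : ℝ) * (N * log N - N) =
      (zeroSet Psi).card *
        ((2 * r + 1) * (den * N : ℕ) * log N - (2 * r + 1) * (den * N : ℕ)) := by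
    rw [← h]; push_cast; ring
  linarith

/-- The estimate behind the definition of `gg`. The terms of order `n log n` cancel because
`den N = n`, and the part of the exponent proportional to `x₀ n` is `x₀ n log f(x₀) = 0`. -/
lemma log_bound {Psi : Finset ℕ} (hpos : ∀ b ∈ Psi, 0 < b) {r : ℚ} (hr : 0 < r) {s : ℕ}
    {x₀ : ℝ} (hx₀ : 0 < x₀) (h0 : ff Psi r s x₀ = 1) {N : ℕ} (hN : 0 < N)
    (hx : 1 ≤ x₀ * (r.den * N : ℕ)) :
    log (uConst (zeroSet Psi) (s + 1) r.num.toNat r.den N * uFun (zeroSet Psi) (s + 1) (r.den * N)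
      ((2 * r.num.toNat + r.den) * N) (r.num.toNat * N) (x₀ * (r.den * N : ℕ))) ≤
    (r.den * N : ℕ) * log (gg Psi r s x₀) + ((s + 1 : ℕ) * (log (r.den * N : ℕ) + 1) +
      log (x₀ * (r.den * N : ℕ)) +
      (zeroSet Psi).card * log ((x₀ + 2 * r + 1) * (r.den * N : ℕ) + 1)) := by
  have hr' : (0 : ℝ) < r := by exact_mod_cast hr
  have hnum : (r.num.toNat : ℝ) = r * r.den := by
    have h1 : ((r.num.toNat : ℤ) : ℚ) = r * r.den := by
      rw [Int.toNat_of_nonneg (Rat.num_pos.mpr hr).le, Rat.mul_den_eq_num]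
    exact_mod_cast h1
  have hL : (((2 * r.num.toNat + r.den) * N : ℕ) : ℝ) = (2 * r + 1) * (r.den * N : ℕ) := by
    push_cast; rw [hnum]; ring
  have hR : ((r.num.toNat * N : ℕ) : ℝ) = r * (r.den * N : ℕ) := by
    push_cast; rw [hnum]; ring
  have hF : ∀ θ ∈ zeroSet Psi, 0 < θ := fun θ hθ => ((mem_zeroSet hpos θ).mp hθ).2.1
  have hF1 : ∀ θ ∈ zeroSet Psi, θ ≤ 1 := fun θ hθ => ((mem_zeroSet hpos θ).mp hθ).2.2
  have hn : (0 : ℝ) < (r.den * N : ℕ) := by exact_mod_cast Nat.mul_pos r.den_pos hN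
  have hlogn : log (r.den * N : ℕ) = log r.den + log N := by
    push_cast
    exact Real.log_mul (by exact_mod_cast r.den_pos.ne') (by exact_mod_cast hN.ne')
  have hl0 : lfun (zeroSet Psi).card (s + 1 : ℕ) r x₀ = 0 := by
    rw [← log_ff hr hx₀, h0, Real.log_one]
  have e1 := log_uConst_le (S := s + 1) hpos hL
  have e2 := log_uFun_le (S := s + 1) (n := r.den * N) (L := (2 * r.num.toNat + r.den) * N)
    (R₀ := r.num.toNat * N) hF hF1 hx
  rw [hL, hR] at e2
  rw [Real.log_mul (uConst_pos _ _ _ _ _).ne' (uFun_pos hF (by linarith)).ne']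
  refine (add_le_add e1 e2).trans (le_of_eq ?_)
  rw [log_gg hpos hr hx₀]
  unfold lfun at hl0
  generalize ((r.den * N : ℕ) : ℝ) = n at *
  rw [show x₀ * n + (2 * r + 1) * n = (x₀ + 2 * r + 1) * n by ring,
    show r * n + x₀ * n + n = (x₀ + r + 1) * n by ring, show r * n + x₀ * n = (x₀ + r) * n by ring,
    Real.log_mul (show x₀ + 2 * r + 1 ≠ 0 by positivity) hn.ne',
    Real.log_mul (show x₀ + r + 1 ≠ 0 by positivity) hn.ne',
    Real.log_mul (show x₀ + (r : ℝ) ≠ 0 by positivity) hn.ne', Real.log_mul hx₀.ne' hn.ne', hlogn]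
  linear_combination n * x₀ * hl0

/-- Near its maximum, the auxiliary function including its arithmetic constant is at most
`g(x₀) ^ (n (1 + o(1)))`. -/
theorem eventually_const_mul_le {Psi : Finset ℕ} (hpos : ∀ b ∈ Psi, 0 < b) {r : ℚ} (hr : 0 < r)
    {s : ℕ} {x₀ : ℝ} (hx₀ : 0 < x₀) (h0 : ff Psi r s x₀ = 1) {η : ℝ} (hη : 0 < η) :
    ∀ᶠ N : ℕ in atTop, uConst (zeroSet Psi) (s + 1) r.num.toNat r.den N *
      uFun (zeroSet Psi) (s + 1) (r.den * N) ((2 * r.num.toNat + r.den) * N) (r.num.toNat * N)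
        (x₀ * (r.den * N : ℕ)) ≤
      gg Psi r s x₀ ^ (r.den * N) * exp (η * (r.den * N : ℕ)) := by
  have hr' : (0 : ℝ) < r := by exact_mod_cast hr
  have hF : ∀ θ ∈ zeroSet Psi, 0 < θ := fun θ hθ => ((mem_zeroSet hpos θ).mp hθ).2.1
  have hlog : ∀ c d : ℝ, 0 < c →
      (fun n : ℝ => log (c * n + d)) =o[atTop] (fun n : ℝ => n) := fun c d hc => by
    have h1 : Tendsto (fun n : ℝ => c * n + d) atTop atTop :=
      tendsto_atTop_add_const_right _ _ (tendsto_id.const_mul_atTop hc)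
    have h2 := Real.isLittleO_log_id_atTop.comp_tendsto h1
    refine h2.trans_isBigO ?_
    refine ((Asymptotics.isBigO_refl _ _).const_mul_left c).add ?_
    exact (Asymptotics.isLittleO_const_id_atTop d).isBigO
  have hE : (fun n : ℝ => (s + 1 : ℕ) * (log n + 1) + log (x₀ * n) +
      (zeroSet Psi).card * log ((x₀ + 2 * r + 1) * n + 1)) =o[atTop] (fun n : ℝ => n) := by
    have h1 := ((hlog 1 0 one_pos).add
      (Asymptotics.isLittleO_const_id_atTop (1 : ℝ))).const_mul_left ((s + 1 : ℕ) : ℝ)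
    have h2 := hlog x₀ 0 hx₀
    have h3 := (hlog (x₀ + 2 * r + 1) 1 (by positivity)).const_mul_left ((zeroSet Psi).card : ℝ)
    refine ((h1.add h2).add h3).congr_left fun n => ?_
    simp
  have hev := hE.def hη
  have hlim : Tendsto (fun N : ℕ => ((r.den * N : ℕ) : ℝ)) atTop atTop :=
    tendsto_natCast_atTop_atTop.comp (tendsto_id.const_mul_atTop' r.den_pos)
  filter_upwards [hlim.eventually hev, eventually_gt_atTop 0,
    hlim.eventually (eventually_ge_atTop (1 / x₀))] with N h1 hN h2
  rw [div_le_iff₀' hx₀] at h2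
  have h3 := log_bound hpos hr hx₀ h0 hN h2
  have hg := gg_pos hpos hr s hx₀
  rw [← Real.log_le_log_iff (mul_pos (uConst_pos _ _ _ _ _) (uFun_pos hF (by linarith)))
    (by positivity), Real.log_mul (pow_pos hg _).ne' (Real.exp_ne_zero _), Real.log_exp,
    Real.log_pow]
  refine h3.trans ?_
  have h4 := (le_abs_self _).trans h1
  rw [Real.norm_of_nonneg (by positivity)] at h4
  linarith

/-! ### Size of the weighted sums -/

lemma exists_common_den (T : Finset ℕ) (f : ℕ → ℝ) (h : ∀ i ∈ T, ¬ Irrational (f i)) :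
    ∃ D : ℕ, 0 < D ∧ ∀ i ∈ T, ∃ z : ℤ, (D : ℝ) * f i = z := by
  classical
  induction T using Finset.induction_on with
  | empty => exact ⟨1, one_pos, by simp⟩
  | insert j T hj ih =>
    obtain ⟨D, hD, hT⟩ := ih fun i hi => h i (mem_insert_of_mem hi)
    have hj' := h j (mem_insert_self _ _)
    rw [irrational_iff_ne_rational] at hj'
    push Not at hj'
    obtain ⟨p, q, hq0, hq⟩ := hj'
    have hq0' : (q : ℝ) ≠ 0 := by exact_mod_cast hq0
    have habs : ((q.natAbs : ℕ) : ℝ) = ((|q| : ℤ) : ℝ) := by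
      rw [← Int.cast_natCast, Int.natCast_natAbs]
    refine ⟨D * q.natAbs, Nat.mul_pos hD (Int.natAbs_pos.mpr hq0), fun i hi => ?_⟩
    rcases mem_insert.mp hi with rfl | hi
    · refine ⟨D * (q.sign * p), ?_⟩
      rw [hq]
      push_cast [habs]
      have : (|(q : ℝ)|) = q.sign * q := by
        rw [← Int.cast_abs, ← Int.sign_mul_self_eq_abs]; push_cast; rfl
      rw [this]
      field_simp
    · obtain ⟨z, hz⟩ := hT i hi
      refine ⟨|q| * z, ?_⟩
      push_cast [habs, ← hz]
      ring

/-- If each `T b` is close to `b S₁`, then `∑ w_b T b` is close to `(∑ w_b b) S₁`, where the coefficient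
is a nonzero integer. -/
lemma weighted_sum_bounds {Psi : Finset ℕ} {w : ℕ → ℤ} {T : ℕ → ℝ} {S₁ κ : ℝ} (hS : 0 < S₁)
    (hW : ∑ b ∈ Psi, w b * (b : ℤ) ≠ 0) (hT : ∀ b ∈ Psi, |T b - b * S₁| ≤ b * (κ * S₁))
    (hκ : κ * ∑ b ∈ Psi, |(w b : ℝ)| * b ≤ 1 / 2) :
    ∑ b ∈ Psi, w b * T b ≠ 0 ∧
      |∑ b ∈ Psi, w b * T b| ≤ (|((∑ b ∈ Psi, w b * (b : ℤ) : ℤ) : ℝ)| + 1) * S₁ := by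
  set W := ∑ b ∈ Psi, w b * (b : ℤ) with hWdef
  have hW1 : 1 ≤ |(W : ℝ)| := by exact_mod_cast Int.one_le_abs hW
  have h1 : |∑ b ∈ Psi, w b * T b - W * S₁| ≤ 1 / 2 * S₁ := by
    have e : ∑ b ∈ Psi, w b * T b - W * S₁ = ∑ b ∈ Psi, w b * (T b - b * S₁) := by
      rw [hWdef]; push_cast
      rw [sum_mul, ← sum_sub_distrib]
      exact sum_congr rfl fun b _ => by ring
    rw [e]
    calc _ ≤ ∑ b ∈ Psi, |(w b : ℝ) * (T b - b * S₁)| := abs_sum_le_sum_abs _ _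
      _ ≤ ∑ b ∈ Psi, |(w b : ℝ)| * (b * (κ * S₁)) := sum_le_sum fun b hb => by
          rw [abs_mul]; exact mul_le_mul_of_nonneg_left (hT b hb) (abs_nonneg _)
      _ = (κ * ∑ b ∈ Psi, |(w b : ℝ)| * b) * S₁ := by
          rw [mul_sum, sum_mul]; exact sum_congr rfl fun b _ => by ring
      _ ≤ 1 / 2 * S₁ := mul_le_mul_of_nonneg_right hκ hS.le
  have h2 : |(W : ℝ) * S₁| = |(W : ℝ)| * S₁ := by rw [abs_mul, abs_of_pos hS]
  constructor
  · intro h0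
    rw [h0, zero_sub, abs_neg, h2] at h1
    nlinarith
  · have h3 := abs_sub_abs_le_abs_sub (∑ b ∈ Psi, w b * T b) (W * S₁)
    rw [h2] at h3
    linarith

lemma tendsto_sq_mul_exp_neg {c : ℝ} (hc : 0 < c) :
    Tendsto (fun x : ℝ => x ^ 2 * exp (-(c * x))) atTop (nhds 0) := by
  have h := (Real.tendsto_pow_mul_exp_neg_atTop_nhds_zero 2).comp
    (tendsto_id.const_mul_atTop hc)
  have h2 := h.const_mul (1 / c ^ 2)
  rw [mul_zero] at h2
  refine h2.congr fun x => ?_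
  simp only [Function.comp, id]
  field_simp

/-- The weighted sums are nonzero, and small enough to beat every fixed factor `D` and the
power of the least common multiple `d`. -/
theorem eventually_small {Psi : Finset ℕ} (hpos : ∀ b ∈ Psi, 0 < b) (h1 : 1 ∈ Psi) {r : ℚ}
    (hr : 0 < r) {s : ℕ} {x₀ : ℝ} (hx₀ : 0 < x₀) (h0 : ff Psi r s x₀ = 1)
    (hg : gg Psi r s x₀ < exp (-((s : ℝ) + 1))) {w : ℕ → ℤ}
    (hW : ∑ b ∈ Psi, w b * (b : ℤ) ≠ 0) (D : ℝ) (hD : 0 < D) :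
    ∃ η > 0, ∀ᶠ N : ℕ in atTop, ∀ d : ℝ, 0 < d → d ≤ exp ((1 + η) * (r.den * N : ℕ)) →
      (∀ b ∈ Psi, Summable fun k : ℕ => uFun (zeroSet Psi) (s + 1) (r.den * N)
        ((2 * r.num.toNat + r.den) * N) (r.num.toNat * N) (((k : ℝ) + 1) / b)) →
      ∑ b ∈ Psi, w b * ∑' k : ℕ, uFun (zeroSet Psi) (s + 1) (r.den * N)
        ((2 * r.num.toNat + r.den) * N) (r.num.toNat * N) (((k : ℝ) + 1) / b) ≠ 0 ∧
      D * (2 * d ^ (s + 1) * uConst (zeroSet Psi) (s + 1) r.num.toNat r.den N) *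
        |∑ b ∈ Psi, w b * ∑' k : ℕ, uFun (zeroSet Psi) (s + 1) (r.den * N)
        ((2 * r.num.toNat + r.den) * N) (r.num.toNat * N) (((k : ℝ) + 1) / b)| < 1 := by
  have hr' : (0 : ℝ) < r := by exact_mod_cast hr
  have hF : ∀ θ ∈ zeroSet Psi, 0 < θ := fun θ hθ => ((mem_zeroSet hpos θ).mp hθ).2.1
  have hF1 : ∀ θ ∈ zeroSet Psi, θ ≤ 1 := fun θ hθ => ((mem_zeroSet hpos θ).mp hθ).2.2
  have hq : 0 < (zeroSet Psi).card := card_pos.mpr ⟨1, one_mem_zeroSet hpos h1⟩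
  have hnum : (r.num.toNat : ℝ) = r * r.den := by
    have h1 : ((r.num.toNat : ℤ) : ℚ) = r * r.den := by
      rw [Int.toNat_of_nonneg (Rat.num_pos.mpr hr).le, Rat.mul_den_eq_num]
    exact_mod_cast h1
  have hl0 : lfun (zeroSet Psi).card (s + 1 : ℕ) r x₀ = 0 := by
    rw [← log_ff hr hx₀, h0, Real.log_one]
  have hg0 := gg_pos hpos hr s hx₀
  obtain ⟨γ, hγ, hγg⟩ : ∃ γ > 0, gg Psi r s x₀ = exp (-((s : ℝ) + 1) - γ) := by
    refine ⟨-((s : ℝ) + 1) - log (gg Psi r s x₀), ?_, ?_⟩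
    · have := Real.log_lt_log hg0 hg
      rw [Real.log_exp] at this
      linarith
    · rw [sub_sub_cancel, Real.exp_log hg0]
  set V := ∑ b ∈ Psi, |(w b : ℝ)| * b with hV
  have hV0 : 0 ≤ V := sum_nonneg fun b _ => by positivity
  set CW := |((∑ b ∈ Psi, w b * (b : ℤ) : ℤ) : ℝ)| + 1 with hCW
  have hCW0 : 0 < CW := by positivity
  -- `K > 16 V` makes the relative error `8 / K` of `window_compare` harmless after weighting, and
  -- `K > 8 x₀ / γ` makes the variation of `uFun` across the window at most `exp (γ n / 4)`
  obtain ⟨K, hK⟩ := exists_nat_gt (16 * V + 8 * x₀ / γ)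
  have hxγ : 0 < 8 * x₀ / γ := by positivity
  have hK0' : (0 : ℝ) < K := by linarith
  have hK0 : 0 < K := by exact_mod_cast hK0'
  have hKV : 8 / K * V ≤ 1 / 2 := by
    rw [div_mul_eq_mul_div, div_le_iff₀ hK0']; linarith
  have hKx : 2 * x₀ / K ≤ γ / 4 := by
    rw [div_le_iff₀ hK0']
    have : 8 * x₀ / γ < K := by linarith
    rw [div_lt_iff₀ hγ] at this
    linarith
  set Z := ∑' k : ℕ, 1 / ((k : ℝ) + 1) ^ 2 with hZ
  have hZ0 : 0 ≤ Z := tsum_nonneg fun k => by positivity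
  have hden : Tendsto (fun N : ℕ => r.den * N) atTop atTop :=
    tendsto_id.const_mul_atTop' r.den_pos
  have hsmall : ∀ᶠ N : ℕ in atTop, D * 2 * CW * Z * (4 * x₀ ^ 2) *
      (((r.den * N : ℕ) : ℝ) ^ 2 * exp (-(γ / 4 * (r.den * N : ℕ)))) < 1 := by
    have := ((tendsto_sq_mul_exp_neg (show 0 < γ / 4 by positivity)).comp
      (tendsto_natCast_atTop_atTop.comp hden)).const_mul (D * 2 * CW * Z * (4 * x₀ ^ 2))
    rw [mul_zero] at this
    exact (tendsto_order.mp this).2 1 one_pos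
  have hs1 : (0 : ℝ) < (s : ℝ) + 1 := by positivity
  -- of the saving `exp (-γ n)`, a quarter each is lost to the power of `d`, to the variation across
  -- the window and to the bound at `x₀ n`; the last quarter beats the polynomial factor
  refine ⟨γ / (4 * (s + 1)), by positivity, ?_⟩
  filter_upwards [hden.eventually (exists_window hF hF1 hq hr' hx₀ hl0
    (show (0 : ℝ) < 1 / K by positivity) K), hsmall,
    eventually_const_mul_le hpos hr hx₀ h0 (show 0 < γ / 4 by positivity)] with N hN1 hN2 hN3
  intro d hd hdle hsum
  have hL : (((2 * r.num.toNat + r.den) * N : ℕ) : ℝ) = (2 * r + 1) * (r.den * N : ℕ) := by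
    push_cast; rw [hnum]; ring
  have hR : ((r.num.toNat * N : ℕ) : ℝ) = r * (r.den * N : ℕ) := by
    push_cast; rw [hnum]; ring
  obtain ⟨a, b, hab, ha, hax, hxb, hbx, m1, m2, m3⟩ := hN1 _ _ hL hR
  have hu : ∀ x, 0 ≤ x → 0 ≤ uFun (zeroSet Psi) (s + 1) (r.den * N)
      ((2 * r.num.toNat + r.den) * N) (r.num.toNat * N) x := fun x hx => uFun_nonneg hF hx
  have hu1 : 0 < uFun (zeroSet Psi) (s + 1) (r.den * N)
      ((2 * r.num.toNat + r.den) * N) (r.num.toNat * N) 1 := uFun_pos hF one_pos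
  have hC := uConst_pos (zeroSet Psi) (s + 1) r.num.toNat r.den N
  generalize uFun (zeroSet Psi) (s + 1) (r.den * N)
      ((2 * r.num.toNat + r.den) * N) (r.num.toNat * N) = u at *
  generalize uConst (zeroSet Psi) (s + 1) r.num.toNat r.den N = C at *
  generalize hn : r.den * N = n at *
  have hsm := summable_shift hu hab ha m1 m2 m3 one_pos le_rfl
  have hS₁ : 0 < ∑' k : ℕ, u (k + 1) :=
    hsm.tsum_pos (fun k => hu _ (by positivity)) 0 (by simpa using hu1)
  have hS₁le := tsum_succ_le hu hab ha m1 m2 m3 ⟨hax, hxb⟩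
  have hcomp : ∀ θ : ℝ, 0 < θ → θ ≤ 1 → _ := fun θ h h' =>
    window_compare hu hK0 hab ha m1 m2 m3 h h'
  set S₁ := ∑' k : ℕ, u (k + 1) with hS₁def
  obtain ⟨g1, g2⟩ := weighted_sum_bounds (T := fun b => ∑' k : ℕ, u (((k : ℝ) + 1) / b)) hS₁ hW
    (fun b hb => abs_tsum_div_sub_le (hpos b hb) (hsum b hb) hcomp) hKV
  refine ⟨g1, ?_⟩
  have ha' : (0 : ℝ) < a := by exact_mod_cast ha
  have hab' : (a : ℝ) ≤ b := by exact_mod_cast (by omega : a ≤ b)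
  have hux := hu (x₀ * n) (by positivity)
  have hCS : C * S₁ ≤ Z * (4 * x₀ ^ 2) * ((n : ℝ) ^ 2 * exp (γ / 4 * n)) *
      (gg Psi r s x₀ ^ n * exp (γ / 4 * n)) := by
    have e1 : exp (1 / K * (b - a)) ≤ exp (γ / 4 * n) := by
      rw [Real.exp_le_exp]
      calc 1 / K * ((b : ℝ) - a) ≤ 1 / K * (2 * x₀ * n) :=
            mul_le_mul_of_nonneg_left (by linarith) (by positivity)
        _ = 2 * x₀ / K * n := by ring
        _ ≤ γ / 4 * n := mul_le_mul_of_nonneg_right hKx (by positivity)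
    have e2 : (b : ℝ) ^ 2 ≤ (2 * x₀ * n) ^ 2 := pow_le_pow_left₀ (by positivity) hbx 2
    calc C * S₁ ≤ C * (exp (1 / K * (b - a)) * u (x₀ * n) * b ^ 2 * Z) :=
          mul_le_mul_of_nonneg_left hS₁le hC.le
      _ ≤ C * (exp (γ / 4 * n) * u (x₀ * n) * (2 * x₀ * n) ^ 2 * Z) := by gcongr
      _ = Z * (4 * x₀ ^ 2) * ((n : ℝ) ^ 2 * exp (γ / 4 * n)) * (C * u (x₀ * n)) := by ring
      _ ≤ _ := mul_le_mul_of_nonneg_left hN3 (by positivity)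
  have hdS : d ^ (s + 1) ≤ exp (((s : ℝ) + 1) * n + γ / 4 * n) := by
    calc d ^ (s + 1) ≤ exp ((1 + γ / (4 * (s + 1))) * n) ^ (s + 1) :=
          pow_le_pow_left₀ hd.le hdle _
      _ = _ := by
        rw [← Real.exp_nat_mul]
        congr 1
        push_cast
        field_simp
  have hgn : gg Psi r s x₀ ^ n = exp ((-((s : ℝ) + 1) - γ) * n) := by
    rw [hγg, ← Real.exp_nat_mul, mul_comm]
  calc _ ≤ D * (2 * d ^ (s + 1) * C) * (CW * S₁) :=
        mul_le_mul_of_nonneg_left g2 (by positivity)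
    _ = D * 2 * CW * (d ^ (s + 1) * (C * S₁)) := by ring
    _ ≤ D * 2 * CW * (exp (((s : ℝ) + 1) * n + γ / 4 * n) *
        (Z * (4 * x₀ ^ 2) * ((n : ℝ) ^ 2 * exp (γ / 4 * n)) *
          (gg Psi r s x₀ ^ n * exp (γ / 4 * n)))) := by
        refine mul_le_mul_of_nonneg_left ?_ (by positivity)
        exact mul_le_mul hdS hCS (by positivity) (by positivity)
    _ = D * 2 * CW * Z * (4 * x₀ ^ 2) * ((n : ℝ) ^ 2 *
        (exp (((s : ℝ) + 1) * n + γ / 4 * n) * exp (γ / 4 * n) *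
          exp ((-((s : ℝ) + 1) - γ) * n) * exp (γ / 4 * n))) := by
        rw [hgn]; ring
    _ = D * 2 * CW * Z * (4 * x₀ ^ 2) * ((n : ℝ) ^ 2 * exp (-(γ / 4 * n))) := by
        rw [← Real.exp_add, ← Real.exp_add, ← Real.exp_add]
        congr 3
        ring
    _ < 1 := hN2

/-! ### The criterion -/

/-- Clearing all denominators: if the weights kill the `i`-th powers for every irrational `zetaR i`,
then the weighted sum of the linear forms is an integer up to the factor `D`. -/
lemma exists_int_eq {Psi J I : Finset ℕ} {w ρ : ℕ → ℤ} {D : ℕ} {T : ℕ → ℝ} {c : ℝ}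
    (hI : I ⊆ J) (hw : ∀ i ∈ I, ∑ b ∈ Psi, w b * (b : ℤ) ^ i = 0)
    (hD : ∀ i ∈ J \ I, ∃ z : ℤ, (D : ℝ) * zetaR i = z)
    (hT : ∀ b ∈ Psi, ∃ z : ℤ, c * T b = ∑ i ∈ J, (ρ i : ℝ) * b ^ i * zetaR i + z) :
    ∃ X : ℤ, D * c * ∑ b ∈ Psi, w b * T b = X := by
  choose! z hz using hD
  choose! y hy using hT
  refine ⟨∑ i ∈ J \ I, ρ i * z i * (∑ b ∈ Psi, w b * (b : ℤ) ^ i) + D * ∑ b ∈ Psi, w b * y b, ?_⟩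
  have e1 : ∑ b ∈ Psi, (w b : ℝ) * (c * T b) =
      ∑ i ∈ J, ρ i * zetaR i * ((∑ b ∈ Psi, w b * (b : ℤ) ^ i : ℤ) : ℝ) +
        ∑ b ∈ Psi, (w b : ℝ) * y b := by
    rw [sum_congr rfl fun b hb => by rw [hy b hb]]
    simp only [mul_add, sum_add_distrib]
    congr 1
    push_cast
    simp only [mul_sum]
    rw [sum_comm]
    exact sum_congr rfl fun i _ => sum_congr rfl fun b _ => by ring
  have e2 : ∑ i ∈ J, ρ i * zetaR i * ((∑ b ∈ Psi, w b * (b : ℤ) ^ i : ℤ) : ℝ) =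
      ∑ i ∈ J \ I, ρ i * zetaR i * ((∑ b ∈ Psi, w b * (b : ℤ) ^ i : ℤ) : ℝ) := by
    rw [← sum_sdiff hI, add_eq_left]
    exact sum_eq_zero fun i hi => by rw [hw i hi]; simp
  have e3 : (D : ℝ) * c * ∑ b ∈ Psi, w b * T b = D * ∑ b ∈ Psi, (w b : ℝ) * (c * T b) := by
    rw [mul_assoc, mul_sum _ _ c]
    exact congrArg _ (sum_congr rfl fun b _ => by ring)
  rw [e3, e1, e2, mul_add, mul_sum]
  rw [Int.cast_add, Int.cast_sum, Int.cast_mul, Int.cast_sum]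
  congr 1
  · refine sum_congr rfl fun i hi => ?_
    rw [Int.cast_mul, Int.cast_mul, ← hz i hi]
    ring
  · push_cast; rfl

/-- There is an absolute constant `B₀` such that whenever `B ≥ B₀`, `r` is a positive
rational and `s` is an odd positive integer with `s ≥ 10(2r+1)B²`: if `g(x₀) < e^{−(s+1)}`
(where `x₀` is the positive root of `f`), then at least `|Ψ_B|` of the odd zeta values
`ζ(3), ζ(5), …, ζ(s)` are irrational. -/
theorem elimination_criterion :
    ∃ B₀ : ℝ, ∀ B : ℝ, B₀ ≤ B → ∀ r : ℚ, 0 < r →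
      ∀ Psi : Finset ℕ, (∀ b : ℕ, b ∈ Psi ↔ 0 < b ∧ (Nat.totient b : ℝ) ≤ B) →
      ∀ s : ℕ, Odd s → 10 * (2 * (r : ℝ) + 1) * B ^ 2 ≤ (s : ℝ) →
      ∀ x₀ : ℝ, 0 < x₀ → ff Psi r s x₀ = 1 →
      gg Psi r s x₀ < Real.exp (-((s : ℝ) + 1)) →
      Psi.card ≤ {i : ℕ | 3 ≤ i ∧ i ≤ s ∧ Odd i ∧ Irrational (zetaR i)}.ncard := by
  classical
  -- `B ≥ 1` guarantees `1 ∈ Psi`, which is all that is needed of `B₀`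
  refine ⟨1, fun B hB r hr Psi hPsi s hs _ x₀ hx₀ h0 hg => ?_⟩
  have hpos : ∀ b ∈ Psi, 0 < b := fun b hb => ((hPsi b).mp hb).1
  have hone : 1 ∈ Psi := (hPsi 1).mpr ⟨one_pos, by simpa using hB⟩
  have hdvd : ∀ b ∈ Psi, ∀ c, c ∣ b → c ∈ Psi := fun b hb c hcb => by
    obtain ⟨hb0, hbB⟩ := (hPsi b).mp hb
    refine (hPsi c).mpr ⟨Nat.pos_of_dvd_of_pos hcb hb0, le_trans ?_ hbB⟩
    exact_mod_cast Nat.le_of_dvd (Nat.totient_pos.mpr hb0) (Nat.totient_dvd_of_dvd hcb)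
  set J := (Icc 1 (s + 1)).filter (fun i => Odd i ∧ 3 ≤ i) with hJ
  set I := J.filter (fun i => Irrational (zetaR i)) with hI
  have hset : {i : ℕ | 3 ≤ i ∧ i ≤ s ∧ Odd i ∧ Irrational (zetaR i)} = (I : Set ℕ) := by
    ext i
    simp only [hI, hJ, coe_filter, mem_filter, Finset.mem_Icc, Set.mem_ofPred_eq]
    constructor
    · rintro ⟨h3, h4, h5, h6⟩
      exact ⟨⟨⟨by omega, by omega⟩, h5, h3⟩, h6⟩
    · rintro ⟨⟨⟨h1, h2⟩, h5, h3⟩, h6⟩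
      refine ⟨h3, ?_, h5, h6⟩
      -- `s + 1` is even, so the odd number `i` cannot be equal to it
      obtain ⟨k, hk⟩ := h5
      obtain ⟨l, hl⟩ := hs
      omega
  rw [hset, Set.ncard_coe_finset]
  by_contra hcard
  push Not at hcard
  have h1I : 1 ∉ I := by simp [hI, hJ]
  obtain ⟨w, hw, hW⟩ := exists_weights Psi hpos I h1I hcard
  obtain ⟨D, hD0, hD⟩ := exists_common_den (J \ I) zetaR fun i hi hirr => by
    rw [Finset.mem_sdiff] at hi
    exact hi.2 (mem_filter.mpr ⟨hi.1, hirr⟩)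
  obtain ⟨η, hη, hev⟩ := eventually_small hpos hone hr hx₀ h0 hg hW D (by exact_mod_cast hD0)
  obtain ⟨N₀, hN₀⟩ := eventually_atTop.mp hev
  -- `n = den(r) N` with `N = 2 m` even, so that the symmetry of the auxiliary function has the right
  -- sign to kill the even zeta values
  obtain ⟨m, hm, hlcm⟩ := exists_lcmUpto_le η hη (2 * r.den) (Nat.mul_pos two_pos r.den_pos) (N₀ + 1)
  have hN := hN₀ (2 * m) (by omega)
  have hn : 2 * r.den * m = r.den * (2 * m) := by ring
  rw [hn] at hlcm
  have hd0 := Nat.lcmUpto_pos (r.den * (2 * m))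
  have hq : 0 < (zeroSet Psi).card := card_pos.mpr ⟨1, one_mem_zeroSet hpos hone⟩
  have hr' : (0 : ℝ) < r := by exact_mod_cast hr
  have hnum : (r.num.toNat : ℝ) = r * r.den := by
    have h1 : ((r.num.toNat : ℤ) : ℚ) = r * r.den := by
      rw [Int.toNat_of_nonneg (Rat.num_pos.mpr hr).le, Rat.mul_den_eq_num]
    exact_mod_cast h1
  have hdeg : (zeroSet Psi).card * ((2 * r.num.toNat + r.den) * (2 * m)) + 3 ≤
      (r.den * (2 * m) + 1) * (s + 1) := by
    have hl0 : lfun (zeroSet Psi).card (s + 1 : ℕ) r x₀ = 0 := by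
      rw [← log_ff hr hx₀, h0, Real.log_one]
    have hκ := kappa_pos hr' (by exact_mod_cast hq) hx₀ hl0
    have hnpos : (0 : ℝ) < (r.den * (2 * m) : ℕ) := by
      exact_mod_cast Nat.mul_pos r.den_pos (by omega)
    have h1 := mul_lt_mul_of_pos_right hκ hnpos
    have h2 : (((zeroSet Psi).card * ((2 * r.num.toNat + r.den) * (2 * m)) : ℕ) : ℝ) <
        ((s + 1) * (r.den * (2 * m)) : ℕ) := by
      refine lt_of_eq_of_lt ?_ (lt_of_lt_of_eq h1 ?_)
      · push_cast; rw [hnum]; ring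
      · push_cast; ring
    have h3 : (zeroSet Psi).card * ((2 * r.num.toNat + r.den) * (2 * m)) <
        (s + 1) * (r.den * (2 * m)) := by exact_mod_cast h2
    have h4 : 1 ≤ s := hs.pos
    have h5 : (r.den * (2 * m) + 1) * (s + 1) = (s + 1) * (r.den * (2 * m)) + (s + 1) := by ring
    omega
  obtain ⟨ρ, hρ⟩ := arithmetic_forms Psi hpos (zeroSet Psi) (one_mem_zeroSet hpos hone)
    (one_sub_mem_zeroSet hpos) (fun h => by
      have := ((mem_zeroSet hpos 0).mp h).2.1
      exact lt_irrefl _ this)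
    (frac_mem_zeroSet hpos hdvd) (s + 1) r.num.toNat r.den (2 * m)
    (Nat.lcmUpto (r.den * (2 * m))) (by omega) hs.add_one (even_two_mul m) r.den_pos hd0.ne'
    (fun j h1 h2 => Finset.dvd_lcm (f := id) (Finset.mem_Icc.mpr ⟨h1, h2⟩)) hdeg
  have hc : 2 * (Nat.lcmUpto (r.den * (2 * m)) : ℝ) ^ (s + 1) *
      uConst (zeroSet Psi) (s + 1) r.num.toNat r.den (2 * m) ≠ 0 := by
    have h1 := uConst_pos (zeroSet Psi) (s + 1) r.num.toNat r.den (2 * m)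
    have h2 : (0 : ℝ) < Nat.lcmUpto (r.den * (2 * m)) := by exact_mod_cast hd0
    positivity
  simp only [← mul_assoc (2 * (Nat.lcmUpto (r.den * (2 * m)) : ℝ) ^ (s + 1))] at hρ
  obtain ⟨hne, hlt⟩ := hN (Nat.lcmUpto (r.den * (2 * m))) (by exact_mod_cast hd0) hlcm
    (fun b hb => by
      obtain ⟨z, hz⟩ := hρ b hb
      exact (summable_mul_left_iff hc).mp hz.summable)
  obtain ⟨X, hX⟩ := exists_int_eq (ρ := ρ) (filter_subset _ J) hw hD fun b hb => by
    obtain ⟨z, hz⟩ := hρ b hb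
    exact ⟨z, by rw [← tsum_mul_left]; exact hz.tsum_eq⟩
  have hX0 : X ≠ 0 := by
    rintro rfl
    rw [Int.cast_zero] at hX
    exact mul_ne_zero (mul_ne_zero (by exact_mod_cast hD0.ne') hc) hne hX
  have hX1 : |(X : ℝ)| < 1 := by
    rw [← hX, abs_mul, abs_of_nonneg]
    · exact hlt
    · have := (uConst_pos (zeroSet Psi) (s + 1) r.num.toNat r.den (2 * m)).le
      positivity
  have : (1 : ℝ) ≤ |(X : ℝ)| := by exact_mod_cast Int.one_le_abs hX0
  linarith

end
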